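/- Let (A, 𝔪) be a two-dimensional excellent normal local domain over an algebraically closed field and let I, J ⊆ A be 𝔪-primary ideals. Then the multi-Rees algebra 𝓡(I,J) = A[It₁, Jt₂] is a Cohen–Macaulay normal domain if and only if both Rees algebras 𝓡(I) = A[It] and 𝓡(J) = A[Jt] are Cohen–Macaulay normal domains. -/

import Mathlib

/-! Auxiliary definitions.

Mathlib does not yet know about excellent rings; the excellence hypothesis of the paper
is used only to guarantee the existence of resolutions and of the normal Hilbert
polynomial, which we hypothesize directly where needed. -/

/-- The length `ℓ_R(M)` of a module, defined as the Krull dimension of its lattice of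
submodules (for modules of finite length this is the usual Jordan–Hölder length). -/
noncomputable def moduleLength (R M : Type*) [CommRing R] [AddCommGroup M] [Module R M] :
    WithBot ℕ∞ :=
  Order.krullDim (Submodule R M)

/-- `x` is integral over the ideal `I`: it satisfies an equation of integral dependence
`x ^ n + c 1 * x ^ (n-1) + ⋯ + c n = 0` with `c i ∈ I ^ i`. -/
def IsIntegralOverIdeal {A : Type*} [CommRing A] (I : Ideal A) (x : A) : Prop :=
  ∃ n : ℕ, 0 < n ∧ ∃ c : ℕ → A, (∀ i, 1 ≤ i → i ≤ n → c i ∈ I ^ i) ∧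
    x ^ n + ∑ i ∈ Finset.Icc 1 n, c i * x ^ (n - i) = 0

/-- The integral closure `J̄` of an ideal `J`: the set of elements integral over `J`
(this set is an ideal; we take the ideal it generates). -/
noncomputable def idealIntegralClosure {A : Type*} [CommRing A] (I : Ideal A) : Ideal A :=
  Ideal.span {x | IsIntegralOverIdeal I x}

/-- An ideal is integrally closed if it contains every element integral over it. -/
def IdealIsIntegrallyClosed {A : Type*} [CommRing A] (I : Ideal A) : Prop :=
  ∀ x, IsIntegralOverIdeal I x → x ∈ I

/-- A Noetherian local ring is Cohen–Macaulay if some regular sequence contained in the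
maximal ideal has length equal to the Krull dimension of the ring. -/
def IsCohenMacaulayLocalRing (R : Type*) [CommRing R] : Prop :=
  IsNoetherianRing R ∧ ∃ h : IsLocalRing R,
    letI := h
    ∃ rs : List R, (∀ x ∈ rs, x ∈ IsLocalRing.maximalIdeal R) ∧
      RingTheory.Sequence.IsRegular R rs ∧ (rs.length : WithBot ℕ∞) = ringKrullDim R

/-- A Noetherian ring is Cohen–Macaulay if all its localizations at primes are
Cohen–Macaulay local rings. -/
def IsCohenMacaulayRing (R : Type*) [CommRing R] : Prop :=
  IsNoetherianRing R ∧ ∀ (P : Ideal R) (hP : P.IsPrime),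
    letI := hP
    IsCohenMacaulayLocalRing (Localization.AtPrime P)

/-- A Cohen–Macaulay normal domain. -/
def IsCMNormalDomain (R : Type*) [CommRing R] : Prop :=
  IsCohenMacaulayRing R ∧ IsDomain R ∧ IsIntegrallyClosed R

/-- The multi-Rees algebra `A[I₁t₁, …, I_r t_r]`: the `A`-subalgebra of the polynomial
ring `A[t₁, …, t_r]` generated by the elements `a·tᵢ` with `a ∈ Iᵢ`. -/
noncomputable def multiReesAlgebra {A : Type*} [CommRing A] {r : ℕ} (I : Fin r → Ideal A) :
    Subalgebra A (MvPolynomial (Fin r) A) :=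
  Algebra.adjoin A (⋃ i, (fun a => MvPolynomial.C a * MvPolynomial.X i) '' ((I i : Set A)))


section CMTheory
universe u
set_option linter.all false
open RingTheory.Sequence IsLocalRing CategoryTheory Abelian Limits Pointwise IsSMulRegular

/-- `M` admits a regular sequence of length `n` in the maximal ideal. -/
def DepthGe (R : Type u) [CommRing R] [IsLocalRing R] (M : Type u) [AddCommGroup M] [Module R M]
    (n : ℕ) : Prop :=
  ∃ rs : List R, rs.length = n ∧ (∀ r ∈ rs, r ∈ maximalIdeal R) ∧ IsRegular M rs

variable {R : Type u} [CommRing R] [IsLocalRing R] [IsNoetherianRing R]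

lemma smul_top_lt_aux (M : Type u) [AddCommGroup M] [Module R M] [Module.Finite R M]
    [Nontrivial M] : maximalIdeal R • (⊤ : Submodule R M) < ⊤ := by
  rw [lt_top_iff_ne_top]
  exact (Submodule.top_ne_ideal_smul_of_le_jacobson_annihilator
    (IsLocalRing.maximalIdeal_le_jacobson _)).symm

lemma DepthGe.quot {M : Type u} [AddCommGroup M] [Module R M] [Module.Finite R M] {n : ℕ}
    (h : DepthGe R M (n+1)) {x : R} (hx : x ∈ maximalIdeal R) (hreg : IsSMulRegular M x) :
    DepthGe R (QuotSMulTop x M) n := by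
  obtain ⟨rs, hl, hm, hr⟩ := h
  haveI := hr.nontrivial
  haveI : Nontrivial (QuotSMulTop x M) := nontrivial_quotSMulTop_of_mem_maximalIdeal M hx
  have suppQ : Module.support R (R ⧸ maximalIdeal R) =
      PrimeSpectrum.zeroLocus (maximalIdeal R) := by
    rw [Module.support_eq_zeroLocus, Ideal.annihilator_quotient]
  have hext := ModuleCat.subsingleton_ext_of_exists_isRegular (maximalIdeal R)
    (ModuleCat.of R (R ⧸ maximalIdeal R)) suppQ.subset (ModuleCat.of R M)
    (smul_top_lt_aux M) rs hm hr
  have hreg' : IsSMulRegular (ModuleCat.of R M) x := hreg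
  have := ModuleCat.exists_isRegular_of_exists_subsingleton_ext (maximalIdeal R) n
    (ModuleCat.of R (QuotSMulTop x M)) (smul_top_lt_aux _)
    (ModuleCat.of R (R ⧸ maximalIdeal R)) suppQ (by
      intro i hi
      have zero1 := AddCommGrpCat.isZero_of_iff_subsingleton.mpr (hext i (by omega))
      have zero2 := AddCommGrpCat.isZero_of_iff_subsingleton.mpr (hext (i + 1) (by omega))
      exact AddCommGrpCat.subsingleton_of_isZero <| ShortComplex.Exact.isZero_of_both_zeros
        ((Ext.covariant_sequence_exact₃' _ (hreg'.smulShortComplex_shortExact)) i (i + 1) rfl)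
        (zero1.eq_zero_of_src _) (zero2.eq_zero_of_tgt _))
  exact this

lemma ringKrullDim_quotient_lt_aux {R : Type*} [CommRing R] {p q : Ideal R} [p.IsPrime] (hpq : p ≤ q) {x : R}
    (hxq : x ∈ q) (hxp : x ∉ p) : ringKrullDim (R ⧸ q) + 1 ≤ ringKrullDim (R ⧸ p) := by
  have h0 : Ideal.Quotient.mk p x ∈ nonZeroDivisors (R ⧸ p) := by
    rw [mem_nonZeroDivisors_iff_ne_zero]
    rwa [Ne, Ideal.Quotient.eq_zero_iff_mem]
  refine le_trans ?_ (ringKrullDim_quotient_succ_le_of_nonZeroDivisor h0)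
  gcongr
  let f : (R ⧸ p) ⧸ Ideal.span {Ideal.Quotient.mk p x} →+* R ⧸ q :=
    Ideal.Quotient.lift _ (Ideal.Quotient.factor hpq) (by
      intro a ha
      obtain ⟨c, rfl⟩ := Ideal.mem_span_singleton'.mp ha
      rw [map_mul, Ideal.Quotient.factor_mk, Ideal.Quotient.eq_zero_iff_mem.mpr hxq, mul_zero])
  refine ringKrullDim_le_of_surjective f ?_
  apply Ideal.Quotient.lift_surjective_of_surjective
  exact Ideal.Quotient.factor_surjective hpq

lemma DepthGe.le_dim_of_ass {M : Type u} [AddCommGroup M] [Module R M] [Module.Finite R M] {n : ℕ}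
    (h : DepthGe R M n) {p : Ideal R} (hp : p ∈ associatedPrimes R M) :
    (n : WithBot ℕ∞) ≤ ringKrullDim (R ⧸ p) := by
  induction n generalizing M p with
  | zero =>
    haveI := hp.isPrime
    simpa using ringKrullDim_nonneg_of_nontrivial
  | succ n ih =>
    obtain ⟨rs, hl, hm, hr⟩ := id h
    match rs, hl with
    | x :: rs, hl =>
      have hx := hm x (by simp)
      have hreg := ((isRegular_cons_iff _ _ _).mp hr).1
      have hq := h.quot hx hreg
      haveI := hp.isPrime
      obtain ⟨m, hm0⟩ := (isAssociatedPrime_iff.mp hp).2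
      have hmem : ∀ r : R, r ∈ p ↔ r • m = 0 := by
        intro r; rw [hm0, Submodule.mem_colon_singleton]; simp
      let M' : Submodule R M :=
        { carrier := {m | ∀ r ∈ p, r • m = 0}
          add_mem' := fun {a b} ha hb r hr => by rw [smul_add, ha r hr, hb r hr, add_zero]
          zero_mem' := fun r _ => smul_zero _
          smul_mem' := fun c a ha r hr => by rw [smul_comm, ha r hr, smul_zero] }
      have hmM' : m ∈ M' := fun r hr => (hmem r).mp hr
      have hm00 : m ≠ 0 := by
        rintro rfl
        exact hp.isPrime.ne_top ((Ideal.eq_top_iff_one _).mpr ((hmem 1).mpr (by simp)))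
      have hxp : x ∉ p := fun hxp => hm00 (hreg (by
        show x • m = x • 0
        rw [(hmem x).mp hxp, smul_zero]))
      have hnot : ¬ M' ≤ x • (⊤ : Submodule R M) := by
        intro hle
        have : M' ≤ (Ideal.span {x}) • M' := by
          intro y hy
          obtain ⟨z, -, rfl⟩ := hle hy
          rw [Submodule.ideal_span_singleton_smul]
          refine Submodule.smul_mem_pointwise_smul z x _ ?_
          intro r hr
          apply hreg
          have := hy r hr
          show x • r • z = x • 0
          rw [smul_comm, smul_zero]; exact this
        have := Submodule.eq_bot_of_le_smul_of_le_jacobson_bot _ M' (IsNoetherian.noetherian _) this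
          (by rw [IsLocalRing.jacobson_eq_maximalIdeal _ bot_ne_top,
                Ideal.span_singleton_le_iff_mem]; exact hx)
        rw [this] at hmM'
        exact hm00 hmM'
      obtain ⟨y, hyM', hy⟩ := Set.not_subset.mp hnot
      obtain ⟨q, hqass, hq'⟩ := exists_le_isAssociatedPrime_of_isNoetherianRing R
        (Submodule.Quotient.mk y : QuotSMulTop x M)
        (by rwa [Ne, Submodule.Quotient.mk_eq_zero])
      have h1 := ih hq hqass
      have hpq : p ≤ q := by
        intro r hr
        apply hq'
        rw [Submodule.mem_colon_singleton, Submodule.mem_bot, ← Submodule.Quotient.mk_smul, hyM' r hr,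
          Submodule.Quotient.mk_zero]
      have hxq : x ∈ q := by
        apply hq'
        rw [Submodule.mem_colon_singleton, Submodule.mem_bot, ← Submodule.Quotient.mk_smul,
          Submodule.Quotient.mk_eq_zero]
        exact Submodule.smul_mem_pointwise_smul y x _ trivial
      refine le_trans ?_ (ringKrullDim_quotient_lt_aux hpq hxq hxp)
      push_cast
      gcongr

lemma ringKrullDim_le_length_aux {S : Type*} [CommRing S] [IsLocalRing S] [IsNoetherianRing S]
    (xs : List S) (hxs : ∀ x ∈ xs, x ∈ maximalIdeal S)
    (h : ∀ q : Ideal S, q.IsPrime → (∀ x ∈ xs, x ∈ q) → q = maximalIdeal S) :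
    ringKrullDim S ≤ xs.length := by
  classical
  have h1 : (maximalIdeal S).height ≤ xs.length := by
    have : maximalIdeal S ∈ (Ideal.span (xs.toFinset : Set S)).minimalPrimes := by
      refine ⟨⟨inferInstance, Ideal.span_le.mpr fun x hx => hxs x (by simpa using hx)⟩, ?_⟩
      rintro q ⟨hq, hq2⟩ -
      rw [h q hq (fun x hx => hq2 (Ideal.subset_span (by simpa using hx)))]
    refine (Ideal.height_le_card_of_mem_minimalPrimes_span_finset (s := xs.toFinset) this).trans ?_
    exact_mod_cast xs.toFinset_card_le
  rw [← IsLocalRing.maximalIdeal_height_eq_ringKrullDim]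
  exact_mod_cast h1

lemma isRegular_of_sop_aux {M : Type u} [AddCommGroup M] [Module R M] [Module.Finite R M]
    {n : ℕ} (h : DepthGe R M n) (xs : List R) (hl : xs.length = n)
    (hxs : ∀ x ∈ xs, x ∈ maximalIdeal R)
    (hp : ∀ q : Ideal R, q.IsPrime → Module.annihilator R M ≤ q → (∀ x ∈ xs, x ∈ q) →
      q = maximalIdeal R) : IsRegular M xs := by
  induction n generalizing M xs with
  | zero =>
    obtain ⟨_, _, _, hr⟩ := h
    haveI := hr.nontrivial
    rw [List.length_eq_zero_iff.mp hl]
    exact IsRegular.nil R M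
  | succ n ih =>
    match xs, hl with
    | x :: xs, hl =>
      have hl' : xs.length = n := by simpa using hl
      have hx := hxs x (by simp)
      have hreg : IsSMulRegular M x := by
        by_contra hnr
        have : x ∈ ⋃ p ∈ associatedPrimes R M, (p : Set R) := by
          rw [biUnion_associatedPrimes_eq_compl_regular]; exact hnr
        simp only [Set.mem_iUnion] at this
        obtain ⟨p, hpa, hxp⟩ := this
        have h1 := h.le_dim_of_ass hpa
        haveI := hpa.isPrime
        haveI : IsLocalRing (R ⧸ p) := IsLocalRing.of_surjective' _ Ideal.Quotient.mk_surjective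
        have : ringKrullDim (R ⧸ p) ≤ (xs.map (Ideal.Quotient.mk p)).length := by
          refine ringKrullDim_le_length_aux _ ?_ ?_
          · intro y hy
            obtain ⟨z, hz, rfl⟩ := List.mem_map.mp hy
            rw [IsLocalRing.mem_maximalIdeal, mem_nonunits_iff]
            intro hu
            have : IsLocalHom (Ideal.Quotient.mk p) :=
              IsLocalHom.of_surjective _ Ideal.Quotient.mk_surjective
            have := isUnit_of_map_unit _ _ hu
            exact hxs z (by simp [hz]) this
          · intro q hq hqx
            have h2 := hp (q.comap (Ideal.Quotient.mk p)) inferInstance ?_ ?_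
            · have : (maximalIdeal R).map (Ideal.Quotient.mk p) ≤ q := by
                rw [← h2]; exact Ideal.map_comap_le
              refine (IsLocalRing.le_maximalIdeal hq.ne_top).antisymm ?_
              intro y hy
              obtain ⟨z, rfl⟩ := Ideal.Quotient.mk_surjective y
              apply this
              apply Ideal.mem_map_of_mem
              intro hz
              exact hy (hz.map _)
            · intro r hr
              rw [Ideal.mem_comap, Ideal.Quotient.eq_zero_iff_mem.mpr]
              · exact q.zero_mem
              · exact hpa.annihilator_le (by rwa [Submodule.annihilator_top])
            · intro y hy
              rcases List.mem_cons.mp hy with rfl | hy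
              · rw [Ideal.mem_comap, Ideal.Quotient.eq_zero_iff_mem.mpr hxp]
                exact q.zero_mem
              · exact hqx _ (List.mem_map_of_mem hy)
        have h3 := h1.trans this
        simp [hl'] at h3
        norm_cast at h3
        omega
      refine IsRegular.cons hreg (ih (h.quot hx hreg) xs hl' (fun y hy => hxs y (by simp [hy])) ?_)
      intro q hq hann hqx
      refine hp q hq ?_ ?_
      · refine le_trans ?_ hann
        exact LinearMap.annihilator_le_of_surjective (Submodule.mkQ _) (Submodule.mkQ_surjective _)
      · intro y hy
        rcases List.mem_cons.mp hy with rfl | hy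
        · apply hann
          rw [Module.mem_annihilator]
          intro m
          obtain ⟨m, rfl⟩ := Submodule.Quotient.mk_surjective _ m
          rw [← Submodule.Quotient.mk_smul, Submodule.Quotient.mk_eq_zero]
          exact Submodule.smul_mem_pointwise_smul m y _ trivial
        · exact hqx _ hy

lemma isRegular_of_sop {n : ℕ} (h : DepthGe R R n) (xs : List R) (hl : xs.length = n)
    (hxs : ∀ x ∈ xs, x ∈ maximalIdeal R)
    (hp : ∀ q : Ideal R, q.IsPrime → (∀ x ∈ xs, x ∈ q) →
      q = maximalIdeal R) : IsRegular R xs :=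
  isRegular_of_sop_aux h xs hl hxs fun q hq _ => hp q hq
end CMTheory


section CMTheory2
universe u
set_option linter.all false
open RingTheory.Sequence IsLocalRing Pointwise IsSMulRegular

lemma height_add_le_ringKrullDim {R : Type*} [CommRing R] (Q : Ideal R) [Q.IsPrime] (n : ℕ)
    (hn : (n : WithBot ℕ∞) ≤ ringKrullDim (R ⧸ Q)) :
    (Q.height : WithBot ℕ∞) + n ≤ ringKrullDim R := by
  rw [ringKrullDim_quotient, Order.le_krullDim_iff] at hn
  obtain ⟨l, hl⟩ := hn
  have key : ∀ i : ℕ, ∀ hi : i < l.length + 1,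
      Q.height + i ≤ (l ⟨i, hi⟩).1.asIdeal.height := by
    intro i
    induction i with
    | zero =>
      intro hi
      simp only [Nat.cast_zero, add_zero]
      exact Ideal.height_mono (l ⟨0, hi⟩).2
    | succ i ih =>
      intro hi
      have h1 := ih (by omega)
      have h2 : l ⟨i, by omega⟩ < l ⟨i+1, hi⟩ := l.strictMono (by simp)
      have h3 : (l ⟨i, by omega⟩).1.asIdeal < (l ⟨i+1, hi⟩).1.asIdeal := h2
      have h4 := Ideal.height_add_one_le_of_lt_of_isPrime h3
      refine le_trans ?_ h4
      push_cast
      rw [← add_assoc]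
      gcongr
  have h5 := key n (by omega)
  refine le_trans ?_ (Ideal.height_le_ringKrullDim_of_isPrime (I := (l ⟨n, by omega⟩).1.asIdeal))
  exact_mod_cast h5

lemma exists_weaklyRegular_in_prime {R : Type u} [CommRing R] [IsLocalRing R] [IsNoetherianRing R]
    {M : Type u} [AddCommGroup M] [Module R M] [Module.Finite R M] {n : ℕ}
    (h : DepthGe R M n) (Q : Ideal R) [Q.IsPrime] :
    ∃ rs : List R, (∀ r ∈ rs, r ∈ Q) ∧ IsWeaklyRegular M rs ∧
      ∃ m : ℕ, n ≤ rs.length + m ∧ (m : WithBot ℕ∞) ≤ ringKrullDim (R ⧸ Q) := by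
  induction n generalizing M with
  | zero =>
    exact ⟨[], by simp, by simp, 0, by simp, by simpa using ringKrullDim_nonneg_of_nontrivial⟩
  | succ n ih =>
    by_cases hx : ∃ x ∈ Q, IsSMulRegular M x
    · obtain ⟨x, hxQ, hx⟩ := hx
      obtain ⟨rs, h1, h2, m, h3, h4⟩ := ih (h.quot (IsLocalRing.le_maximalIdeal
        (Ideal.IsPrime.ne_top inferInstance) hxQ) hx)
      refine ⟨x :: rs, ?_, IsWeaklyRegular.cons hx h2, m, ?_, h4⟩
      · intro r hr
        rcases List.mem_cons.mp hr with rfl | hr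
        exacts [hxQ, h1 r hr]
      · simp; omega
    · push Not at hx
      have : (Q : Set R) ⊆ ⋃ p ∈ associatedPrimes R M, (p : Set R) := by
        rw [biUnion_associatedPrimes_eq_compl_regular]
        intro x hxQ; exact hx x hxQ
      have := (Ideal.subset_union_prime_finite (associatedPrimes.finite R M) (f := id) ⊤ ⊤
        (fun p hp _ _ => hp.isPrime)).mp this
      obtain ⟨p, hp, hQp⟩ := this
      have h1 := h.le_dim_of_ass hp
      refine ⟨[], by simp, by simp, n+1, by simp, h1.trans ?_⟩
      exact ringKrullDim_le_of_surjective _ (Ideal.Quotient.factor_surjective hQp)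

/-- CM at a prime. -/
abbrev CMAt (R : Type*) [CommRing R] (P : Ideal R) [P.IsPrime] : Prop :=
  IsCohenMacaulayLocalRing (Localization.AtPrime P)

lemma IsCohenMacaulayLocalRing.of_equiv {R S : Type*} [CommRing R] [CommRing S] (e : R ≃+* S)
    (h : IsCohenMacaulayLocalRing R) : IsCohenMacaulayLocalRing S := by
  obtain ⟨hN, hL, rs, h1, h2, h3⟩ := h
  have hL' : IsLocalRing S := e.isLocalRing
  have hN' : IsNoetherianRing S := isNoetherianRing_of_ringEquiv R e
  refine ⟨hN', hL', rs.map e, ?_, ?_, ?_⟩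
  · intro x hx
    obtain ⟨y, hy, rfl⟩ := List.mem_map.mp hx
    have := h1 y hy
    rw [IsLocalRing.mem_maximalIdeal, mem_nonunits_iff] at this ⊢
    intro hu; exact this ((MulEquiv.isUnit_map e).mp hu)
  · refine (AddEquiv.isRegular_congr (e := e.toAddEquiv) ?_).mp h2
    rw [List.forall₂_map_right_iff, List.forall₂_same]
    intro x hx y
    simp
  · rw [List.length_map, h3, ringKrullDim_eq_of_ringEquiv e]

lemma cm_of_regular {R : Type u} [CommRing R] [IsLocalRing R] [IsNoetherianRing R]
    (rs : List R) (h1 : ∀ x ∈ rs, x ∈ maximalIdeal R) (h2 : IsWeaklyRegular R rs)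
    (h3 : ringKrullDim R ≤ rs.length) : IsCohenMacaulayLocalRing R := by
  have h2' : IsRegular R rs := IsRegular.of_isWeaklyRegular_of_mem_maximalIdeal R h1 h2
  refine ⟨inferInstance, inferInstance, rs, h1, h2', le_antisymm ?_ h3⟩
  have := ringKrullDim_add_length_eq_ringKrullDim_of_isRegular rs h2'
  rw [← this]
  have hnt : Nontrivial (R ⧸ Ideal.ofList rs) := by
    rw [Ideal.Quotient.nontrivial_iff]
    intro h
    exact h2'.2 (by rw [h]; simp)
  have h0 : 0 ≤ ringKrullDim (R ⧸ Ideal.ofList rs) := ringKrullDim_nonneg_of_nontrivial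
  calc ((rs.length : ℕ) : WithBot ℕ∞) = 0 + rs.length := by rw [zero_add]
    _ ≤ _ := by gcongr

lemma cm_localization {R : Type u} [CommRing R] (h : IsCohenMacaulayLocalRing R)
    (Q : Ideal R) [Q.IsPrime] : CMAt R Q := by
  obtain ⟨hN, hL, rs, h1, h2, h3⟩ := h
  obtain ⟨ss, hs1, hs2, m, hm1, hm2⟩ := exists_weaklyRegular_in_prime
    (M := R) ⟨rs, rfl, h1, h2⟩ Q
  have h4 := height_add_le_ringKrullDim Q m hm2
  rw [← h3] at h4
  have h5 : Q.height + m ≤ rs.length := by exact_mod_cast h4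
  have h6 : Q.height ≤ ss.length := by
    have : Q.height + m ≤ ss.length + m := h5.trans (by exact_mod_cast hm1)
    exact (ENat.add_le_add_iff_right (by simp)).mp this
  refine cm_of_regular (ss.map (algebraMap R _)) ?_
    (IsWeaklyRegular.of_isLocalization _ Q.primeCompl hs2) ?_
  · intro x hx
    obtain ⟨y, hy, rfl⟩ := List.mem_map.mp hx
    exact (IsLocalization.AtPrime.to_map_mem_maximal_iff _ Q y).mpr (hs1 y hy)
  · rw [IsLocalization.AtPrime.ringKrullDim_eq_height Q, List.length_map]
    exact_mod_cast h6

/-- F3 -/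
lemma CMAt.mono {R : Type u} [CommRing R] {N Q : Ideal R} [N.IsPrime] [Q.IsPrime] (hQ : Q ≤ N)
    (h : CMAt R N) : CMAt R Q := by
  have hd : Disjoint (N.primeCompl : Set R) (Q : Set R) :=
    Set.disjoint_left.mpr fun x hx hxQ => hx (hQ hxQ)
  haveI : (Q.map (algebraMap R (Localization.AtPrime N))).IsPrime :=
    IsLocalization.isPrime_of_isPrime_disjoint N.primeCompl _ Q inferInstance hd
  have h1 := cm_localization h (Q.map (algebraMap R (Localization.AtPrime N)))
  have hc : (Q.map (algebraMap R (Localization.AtPrime N))).comap (algebraMap R _) = Q :=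
    IsLocalization.under_map_of_isPrime_disjoint N.primeCompl _ inferInstance hd
  have h2 : IsLocalization.AtPrime (Localization.AtPrime (Q.map (algebraMap R
      (Localization.AtPrime N)))) ((Q.map (algebraMap R (Localization.AtPrime N))).comap
        (algebraMap R _)) :=
    IsLocalization.isLocalization_isLocalization_atPrime_isLocalization N.primeCompl _ _
  simp only [hc] at h2
  exact h1.of_equiv (IsLocalization.algEquiv Q.primeCompl _ (Localization.AtPrime Q)).toRingEquiv
end CMTheory2


section CMTheory3
universe u
set_option linter.all false
open RingTheory.Sequence IsLocalRing Pointwise IsSMulRegular Polynomial TensorProduct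

lemma cmAt_polynomial_of_comap {D : Type u} [CommRing D] (h : IsCohenMacaulayLocalRing D)
    (P : Ideal D[X]) [P.IsPrime] (hP : ∀ hL : IsLocalRing D, P.comap C = @maximalIdeal D _ hL) :
    CMAt D[X] P := by
  obtain ⟨hN, hL, rs, h1, h2, h3⟩ := h
  have hP := hP hL
  have hw : IsWeaklyRegular D[X] (rs.map (algebraMap D D[X])) := h2.1.of_flat
  have hmem : ∀ r ∈ rs.map (algebraMap D D[X]), r ∈ P := by
    intro x hx
    obtain ⟨y, hy, rfl⟩ := List.mem_map.mp hx
    have := h1 y hy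
    rw [← hP] at this
    exact this
  have main : ∀ ss : List D[X], IsWeaklyRegular D[X] ss → (∀ r ∈ ss, r ∈ P) →
      (P.height : WithBot ℕ∞) ≤ ss.length → CMAt D[X] P := by
    intro ss hs1 hs2 hs3
    refine cm_of_regular (ss.map (algebraMap _ _)) ?_
      (IsWeaklyRegular.of_isLocalization _ P.primeCompl hs1) ?_
    · intro x hx
      obtain ⟨y, hy, rfl⟩ := List.mem_map.mp hx
      exact (IsLocalization.AtPrime.to_map_mem_maximal_iff _ P y).mpr (hs2 y hy)
    · rw [IsLocalization.AtPrime.ringKrullDim_eq_height P, List.length_map]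
      exact hs3
  have qle : (maximalIdeal D).map C ≤ P := by rw [← hP]; exact Ideal.map_comap_le
  by_cases hPq : P ≤ (maximalIdeal D).map C
  · refine main _ hw hmem ?_
    have : P = (maximalIdeal D).map C := le_antisymm hPq qle
    rw [this, Polynomial.height_map_C, List.length_map, h3,
      IsLocalRing.maximalIdeal_height_eq_ringKrullDim]
  · obtain ⟨g, hgP, hg⟩ := Set.not_subset.mp hPq
    refine main (rs.map (algebraMap D D[X]) ++ [g]) ?_ ?_ ?_
    · rw [isWeaklyRegular_append_iff]
      refine ⟨hw, ?_⟩
      rw [isWeaklyRegular_singleton_iff, isSMulRegular_iff_right_eq_zero_of_smul]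
      intro x hx
      obtain ⟨f, rfl⟩ := Submodule.Quotient.mk_surjective _ x
      rw [← Submodule.Quotient.mk_smul, Submodule.Quotient.mk_eq_zero] at hx
      rw [Submodule.Quotient.mk_eq_zero]
      have e : ∀ f : D[X], f ∈ (Ideal.ofList (rs.map (algebraMap D D[X])) • ⊤ : Submodule D[X] D[X])
          ↔ f.map (Ideal.Quotient.mk (Ideal.ofList rs)) = 0 := by
        intro f
        rw [Ideal.smul_eq_mul, Ideal.mul_top, ← Ideal.map_ofList]
        rw [Polynomial.algebraMap_eq, Ideal.mem_map_C_iff, Polynomial.ext_iff]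
        simp only [coeff_map, coeff_zero, Ideal.Quotient.eq_zero_iff_mem]
      rw [e] at hx ⊢
      rw [smul_eq_mul, Polynomial.map_mul] at hx
      have hnz : g.map (Ideal.Quotient.mk (Ideal.ofList rs)) ∈ nonZeroDivisors _ := by
        by_contra hcon
        rw [Polynomial.notMem_nonZeroDivisors_iff] at hcon
        obtain ⟨a, ha0, ha⟩ := hcon
        apply ha0
        obtain ⟨i, hi⟩ : ∃ i, g.coeff i ∉ maximalIdeal D := by
          by_contra hc; push Not at hc
          exact hg (Ideal.mem_map_C_iff.mpr hc)
        have hu : IsUnit (g.coeff i) := by simpa using hi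
        have := congrArg (fun f => f.coeff i) ha
        simp only [coeff_smul, coeff_map, coeff_zero, smul_eq_mul] at this
        exact (hu.map (Ideal.Quotient.mk (Ideal.ofList rs))).mul_left_eq_zero.mp this
      exact (mem_nonZeroDivisors_iff.mp hnz).1 _ hx
    · intro r hr
      rcases List.mem_append.mp hr with hr | hr
      · exact hmem r hr
      · rw [List.mem_singleton.mp hr]; exact hgP
    · rw [List.length_append, List.length_map, List.length_singleton]
      refine Ideal.height_le_ringKrullDim_of_isPrime.trans ?_
      rw [Polynomial.ringKrullDim_of_isNoetherianRing, ← h3]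
      push_cast; exact le_rfl

lemma DepthGe.of_equiv {R : Type u} [CommRing R] [IsLocalRing R] {M N : Type u} [AddCommGroup M]
    [AddCommGroup N] [Module R M] [Module R N] {n : ℕ} (e : M ≃ₗ[R] N) (h : DepthGe R M n) :
    DepthGe R N n := by
  obtain ⟨rs, h1, h2, h3⟩ := h
  exact ⟨rs, h1, h2, (e.isRegular_congr rs).mp h3⟩

lemma DepthGe.of_tensor {D S : Type u} [CommRing D] [CommRing S] [IsLocalRing D] [IsLocalRing S]
    [IsNoetherianRing D] [IsNoetherianRing S] [Algebra D S] [Module.FaithfullyFlat D S]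
    (hmax : (maximalIdeal D).map (algebraMap D S) = maximalIdeal S)
    {M : Type u} [AddCommGroup M] [Module D M] [Module.Finite D M] {n : ℕ}
    (h : DepthGe S (S ⊗[D] M) n) : DepthGe D M n := by
  induction n generalizing M with
  | zero =>
    obtain ⟨_, _, _, hr⟩ := h
    haveI := hr.nontrivial
    haveI : Nontrivial M := by
      by_contra hM
      rw [not_nontrivial_iff_subsingleton] at hM
      exact not_subsingleton (S ⊗[D] M) inferInstance
    exact ⟨[], rfl, by simp, IsRegular.nil D M⟩
  | succ n ih =>
    by_cases hx : ∃ x ∈ maximalIdeal D, IsSMulRegular M x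
    · obtain ⟨x, hxm, hx⟩ := hx
      have hx' : IsSMulRegular (S ⊗[D] M) (algebraMap D S x) :=
        hx.of_flat_of_isBaseChange (TensorProduct.isBaseChange D M S)
      have hxm' : algebraMap D S x ∈ maximalIdeal S := by
        rw [← hmax]; exact Ideal.mem_map_of_mem _ hxm
      have h1 := (h.quot hxm' hx').of_equiv
        (QuotSMulTop.algebraMapTensorEquivTensorQuotSMulTop x M S)
      obtain ⟨rs, h2, h3, h4⟩ := ih h1
      refine ⟨x :: rs, by simp [h2], ?_, IsRegular.cons hx h4⟩
      intro r hr
      rcases List.mem_cons.mp hr with rfl | hr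
      exacts [hxm, h3 r hr]
    · exfalso
      push Not at hx
      have : (maximalIdeal D : Set D) ⊆ ⋃ p ∈ associatedPrimes D M, (p : Set D) := by
        rw [biUnion_associatedPrimes_eq_compl_regular]
        intro x hxQ; exact hx x hxQ
      have := (Ideal.subset_union_prime_finite (associatedPrimes.finite D M) (f := id) ⊤ ⊤
        (fun p hp _ _ => hp.isPrime)).mp this
      obtain ⟨p, hp, hQp⟩ := this
      obtain ⟨m, hm0⟩ := (isAssociatedPrime_iff.mp hp).2
      have hmem : ∀ r : D, r ∈ p ↔ r • m = 0 := by
        intro r; rw [hm0, Submodule.mem_colon_singleton]; simp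
      have hm00 : m ≠ 0 := by
        rintro rfl
        exact hp.isPrime.ne_top ((Ideal.eq_top_iff_one _).mpr ((hmem 1).mpr (by simp)))
      have hne : (1 : S) ⊗ₜ[D] m ≠ 0 := by
        intro h0
        apply hm00
        exact Module.FaithfullyFlat.tensorProduct_mk_injective (A := D) (B := S) M (by simpa using h0)
      obtain ⟨rs, hl, hm, hr⟩ := id h
      match rs, hl with
      | x :: rs, hl =>
        have hxm := hm x (by simp)
        have hreg := ((isRegular_cons_iff _ _ _).mp hr).1
        apply hne
        apply hreg
        show x • ((1 : S) ⊗ₜ[D] m) = x • 0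
        rw [smul_zero]
        have : ∀ y ∈ (maximalIdeal D).map (algebraMap D S), y • ((1 : S) ⊗ₜ[D] m) = 0 := by
          intro y hy
          induction hy using Submodule.span_induction with
          | mem y hy =>
            obtain ⟨z, hz, rfl⟩ := hy
            rw [algebraMap_smul, ← tmul_smul, (hmem z).mp (hQp hz), tmul_zero]
          | zero => simp
          | add a b _ _ ha hb => rw [add_smul, ha, hb, add_zero]
          | smul a b _ hb => rw [smul_eq_mul, mul_smul, hb, smul_zero]
        exact this x (by rwa [hmax])

lemma cm_of_cmAt_polynomial {D : Type u} [CommRing D] [IsLocalRing D] [IsNoetherianRing D]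
    (h : CMAt D[X] ((maximalIdeal D).map C)) : IsCohenMacaulayLocalRing D := by
  set P := (maximalIdeal D).map (C : D →+* D[X]) with hPdef
  let S := Localization.AtPrime P
  obtain ⟨hN, hL, rs, h1, h2, h3⟩ := h
  have hmax : (maximalIdeal D).map (algebraMap D S) = maximalIdeal S := by
    rw [IsScalarTower.algebraMap_eq D D[X] S, ← Ideal.map_map, Polynomial.algebraMap_eq, ← hPdef]
    exact Localization.AtPrime.map_eq_maximalIdeal
  haveI : Module.Flat D[X] S := IsLocalization.flat S P.primeCompl
  haveI : Module.Flat D S := Module.Flat.trans D D[X] S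
  haveI : IsLocalHom (algebraMap D S) := by
    rw [((IsLocalRing.local_hom_TFAE (algebraMap D S)).out 0 2 :)]
    exact hmax.le
  haveI : Module.FaithfullyFlat D S := Module.FaithfullyFlat.of_flat_of_isLocalHom
  have h4 : DepthGe S (S ⊗[D] D) rs.length :=
    DepthGe.of_equiv (TensorProduct.AlgebraTensorModule.rid D S S).symm ⟨rs, rfl, h1, h2⟩
  obtain ⟨ss, g1, g2, g3⟩ := h4.of_tensor hmax
  refine ⟨inferInstance, inferInstance, ss, g2, g3, ?_⟩
  rw [g1, h3, IsLocalization.AtPrime.ringKrullDim_eq_height P, hPdef, Polynomial.height_map_C,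
    IsLocalRing.maximalIdeal_height_eq_ringKrullDim]
end CMTheory3


section CMTheory4
universe u
set_option linter.all false
open IsLocalRing Polynomial

lemma CMAt.congr {R : Type u} [CommRing R] {P Q : Ideal R} [P.IsPrime] [Q.IsPrime] (h : P = Q) :
    CMAt R P ↔ CMAt R Q := by subst h; rfl

lemma cmAt_localization_iff {R S : Type u} [CommRing R] [CommRing S] [Algebra R S]
    (M : Submonoid R) [IsLocalization M S] (Q : Ideal S) [Q.IsPrime] (P : Ideal R) [P.IsPrime]
    (hP : Q.comap (algebraMap R S) = P) : CMAt S Q ↔ CMAt R P := by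
  subst hP
  haveI : IsLocalization.AtPrime (Localization.AtPrime Q) (Q.comap (algebraMap R S)) :=
    IsLocalization.isLocalization_isLocalization_atPrime_isLocalization M _ _
  let e := (IsLocalization.algEquiv (Q.comap (algebraMap R S)).primeCompl
    (Localization.AtPrime Q) (Localization.AtPrime (Q.comap (algebraMap R S)))).toRingEquiv
  exact ⟨fun h => h.of_equiv e, fun h => h.of_equiv e.symm⟩

lemma cmAt_comap_iff {R S : Type u} [CommRing R] [CommRing S] (φ : R →+* S)
    (hφ : Function.Injective φ) (u : R) (hu : ∀ s, ∃ n r, φ r = φ u ^ n * s)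
    (Q : Ideal S) [Q.IsPrime] (huQ : φ u ∉ Q) (P : Ideal R) [P.IsPrime] (hP : P = Q.comap φ) :
    CMAt R P ↔ CMAt S Q := by
  let f := Localization.localRingHom P Q φ hP
  have hpow : ∀ n, φ u ^ n ∉ Q := fun n h => huQ (Ideal.IsPrime.mem_of_pow_mem inferInstance n h)
  have hinj : Function.Injective f := by
    rw [injective_iff_map_eq_zero]
    intro x hx
    obtain ⟨r, s, rfl⟩ := IsLocalization.exists_mk'_eq P.primeCompl x
    rw [Localization.localRingHom_mk', IsLocalization.mk'_eq_zero_iff] at hx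
    obtain ⟨⟨t, ht⟩, htr⟩ := hx
    obtain ⟨n, t', ht'⟩ := hu t
    rw [IsLocalization.mk'_eq_zero_iff]
    refine ⟨⟨t', ?_⟩, ?_⟩
    · intro h
      rw [hP] at h
      have h : φ t' ∈ Q := h
      rw [ht'] at h
      rcases Ideal.IsPrime.mem_or_mem inferInstance h with h | h
      exacts [hpow n h, ht h]
    · apply hφ
      rw [map_mul, map_zero]
      show φ t' * φ r = 0
      rw [ht', mul_assoc]
      have : t * φ r = 0 := htr
      rw [this, mul_zero]
  have hsurj : Function.Surjective f := by
    intro x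
    obtain ⟨r, ⟨s, hs⟩, rfl⟩ := IsLocalization.exists_mk'_eq Q.primeCompl x
    obtain ⟨n, r', hr'⟩ := hu r
    obtain ⟨m, s', hs'⟩ := hu s
    have hs'P : u ^ n * s' ∉ P := by
      rw [hP]
      intro h
      have h : φ (u ^ n * s') ∈ Q := h
      rw [map_mul, map_pow, hs'] at h
      rcases Ideal.IsPrime.mem_or_mem inferInstance h with h | h
      · exact hpow n h
      rcases Ideal.IsPrime.mem_or_mem inferInstance h with h | h
      exacts [hpow m h, hs h]
    refine ⟨IsLocalization.mk' _ (u ^ m * r') (⟨u ^ n * s', hs'P⟩ : P.primeCompl), ?_⟩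
    rw [Localization.localRingHom_mk']
    rw [IsLocalization.mk'_eq_iff_eq]
    congr 1
    simp only [map_mul, map_pow, hr', hs']
    ring
  let e := RingEquiv.ofBijective f ⟨hinj, hsurj⟩
  exact ⟨fun h => h.of_equiv e, fun h => h.of_equiv e.symm⟩

lemma cmAt_polynomial_of_map {B : Type u} [CommRing B] [IsNoetherianRing B] (P : Ideal B[X])
    [P.IsPrime] (p : Ideal B) [p.IsPrime] (hp : P.comap C = p)
    (h : CMAt B[X] (p.map C)) : CMAt B[X] P := by
  let D := Localization.AtPrime p
  letI : Algebra B[X] D[X] := Polynomial.algebra B D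
  haveI : IsLocalization (Submonoid.map (C : B →+* B[X]) p.primeCompl) D[X] :=
    Polynomial.isLocalization p.primeCompl D
  have halg : ∀ f : B[X], algebraMap B[X] D[X] f = f.map (algebraMap B D) := fun f => rfl
  have h1 : CMAt D[X] ((maximalIdeal D).map C) := by
    refine (cmAt_localization_iff (Submonoid.map (C : B →+* B[X]) p.primeCompl) _ _ ?_).mpr h
    ext f
    rw [Ideal.mem_comap, halg, Ideal.mem_map_C_iff, Ideal.mem_map_C_iff]
    simp only [coeff_map, D]
    exact forall_congr' fun n => IsLocalization.AtPrime.to_map_mem_maximal_iff _ p _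
  have h2 := cm_of_cmAt_polynomial h1
  have hd : Disjoint ((Submonoid.map (C : B →+* B[X]) p.primeCompl : Submonoid B[X]) : Set B[X])
      (P : Set B[X]) := by
    rw [Set.disjoint_left]
    rintro _ ⟨b, hb, rfl⟩ hbP
    exact hb (by rw [← hp]; exact hbP)
  haveI : (P.map (algebraMap B[X] D[X])).IsPrime :=
    IsLocalization.isPrime_of_isPrime_disjoint _ _ P inferInstance hd
  have hc : (P.map (algebraMap B[X] D[X])).comap (algebraMap B[X] D[X]) = P :=
    IsLocalization.under_map_of_isPrime_disjoint (Submonoid.map (C : B →+* B[X]) p.primeCompl) _ inferInstance hd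
  refine (cmAt_localization_iff (Submonoid.map (C : B →+* B[X]) p.primeCompl) _ _ hc).mp
    (cmAt_polynomial_of_comap h2 _ ?_)
  intro hL
  apply (IsLocalization.orderEmbedding p.primeCompl D).injective
  show Ideal.comap _ _ = Ideal.comap _ _
  rw [Ideal.comap_comap]
  have e1 : (C : D →+* D[X]).comp (algebraMap B D) = (algebraMap B[X] D[X]).comp C := by
    ext b; simp [halg]
  rw [e1, ← Ideal.comap_comap, hc, hp]
  exact (IsLocalization.AtPrime.under_maximalIdeal D p).symm

/-- The largest graded ideal inside `P`. -/
noncomputable def starIdeal {R : Type u} [CommRing R] (δ : R →+* R[X]) (P : Ideal R) : Ideal R :=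
  (P.map C).comap δ

lemma mem_starIdeal {R : Type u} [CommRing R] (δ : R →+* R[X]) (P : Ideal R) (f : R) :
    f ∈ starIdeal δ P ↔ ∀ m, (δ f).coeff m ∈ P := by
  rw [starIdeal, Ideal.mem_comap, Ideal.mem_map_C_iff]

instance starIdeal_isPrime {R : Type u} [CommRing R] (δ : R →+* R[X]) (P : Ideal R) [P.IsPrime] :
    (starIdeal δ P).IsPrime := by
  unfold starIdeal; infer_instance

lemma cmAt_of_star {R : Type u} [CommRing R] [IsDomain R] [IsNoetherianRing R] (δ : R →+* R[X])
    (h1 : ∀ f, (δ f).eval 1 = f) (h2 : ∀ f m, δ ((δ f).coeff m) = monomial m ((δ f).coeff m))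
    (u : R) (hu0 : u ≠ 0) (hu : δ u = monomial 1 u) (P : Ideal R) [P.IsPrime] (huP : u ∉ P)
    (h : CMAt R (starIdeal δ P)) : CMAt R P := by
  let B := R ⧸ Ideal.span {u - 1}
  let ε : R →+* B := Ideal.Quotient.mk _
  have hεu : ε u = 1 := by
    rw [← sub_eq_zero, ← map_one ε, ← map_sub, Ideal.Quotient.eq_zero_iff_mem]
    exact Ideal.mem_span_singleton_self _
  let ψ : R →+* B[X] := (mapRingHom ε).comp δ
  have hψ : ∀ f, ψ f = (δ f).map ε := fun f => rfl
  have hψu : ψ u = X := by rw [hψ, hu, map_monomial, hεu]; rfl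
  have hψm : ∀ f m, ψ ((δ f).coeff m) = monomial m (ε ((δ f).coeff m)) := by
    intro f m; rw [hψ, h2, map_monomial]
  have hinj : Function.Injective ψ := by
    rw [injective_iff_map_eq_zero]
    intro f hf
    have hδ : δ f = 0 := by
      ext m
      rw [coeff_zero]
      have h3 : ε ((δ f).coeff m) = 0 := by
        have := congrArg (fun g => g.coeff m) hf
        simpa [hψ] using this
      obtain ⟨g, hg⟩ := Ideal.mem_span_singleton'.mp (Ideal.Quotient.eq_zero_iff_mem.mp h3)
      have h4 : δ g * (monomial 1 u - 1) = monomial m ((δ f).coeff m) := by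
        rw [← h2, ← hg, map_mul, map_sub, hu, map_one]
      by_contra hne
      have hmn : (monomial m ((δ f).coeff m) : R[X]) ≠ 0 := by simpa using hne
      rw [← h4] at hmn
      have hg0 := left_ne_zero_of_mul hmn
      have hg1 := right_ne_zero_of_mul hmn
      have d1 := natDegree_mul hg0 hg1
      have d2 := natTrailingDegree_mul hg0 hg1
      rw [h4] at d1 d2
      rw [natDegree_monomial_eq _ hne] at d1
      rw [natTrailingDegree_monomial hne] at d2
      have e1 : (monomial 1 u - 1 : R[X]).natDegree = 1 := by
        rw [natDegree_sub_eq_left_of_natDegree_lt]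
        · exact natDegree_monomial_eq _ hu0
        · rw [natDegree_one, natDegree_monomial_eq _ hu0]; norm_num
      have e2 : (monomial 1 u - 1 : R[X]).natTrailingDegree = 0 := by
        apply Nat.eq_zero_of_le_zero
        apply natTrailingDegree_le_of_ne_zero
        simp [coeff_monomial]
      have := natTrailingDegree_le_natDegree (δ g)
      omega
    rw [← h1 f, hδ, eval_zero]
  have hX : ∀ s : B[X], ∃ n r, ψ r = ψ u ^ n * s := by
    intro s
    induction s using Polynomial.induction_on' with
    | add p q hp hq =>
      obtain ⟨n, r, hr⟩ := hp
      obtain ⟨m, t, ht⟩ := hq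
      exact ⟨n + m, u ^ m * r + u ^ n * t, by simp only [map_add, map_mul, map_pow, hr, ht]; ring⟩
    | monomial i b =>
      obtain ⟨c, rfl⟩ := Ideal.Quotient.mk_surjective b
      refine ⟨(δ c).natDegree, ∑ m ∈ Finset.range ((δ c).natDegree + 1),
        (δ c).coeff m * u ^ (i + ((δ c).natDegree - m)), ?_⟩
      have hc : ε c = ∑ m ∈ Finset.range ((δ c).natDegree + 1), ε ((δ c).coeff m) := by
        conv_lhs => rw [← h1 c, eval_eq_sum_range]
        simp
      change _ = _ * monomial i (ε c)
      rw [hc, map_sum, map_sum, Finset.mul_sum]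
      refine Finset.sum_congr rfl fun m hm => ?_
      rw [map_mul, map_pow, hψm, hψu, ← C_mul_X_pow_eq_monomial, ← C_mul_X_pow_eq_monomial]
      have : i + ((δ c).natDegree - m) + m = (δ c).natDegree + i := by
        have := Finset.mem_range.mp hm; omega
      rw [mul_assoc, ← pow_add, add_comm m, this, pow_add]; ring
  have hup : ∀ n, u ^ n ∉ P := fun n h => huP (Ideal.IsPrime.mem_of_pow_mem inferInstance n h)
  let P' : Ideal B[X] :=
    { carrier := {g | ∃ n, ∃ r ∈ P, ψ r = ψ u ^ n * g}
      add_mem' := by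
        rintro a b ⟨n, r, hr, ha⟩ ⟨m, t, ht, hb⟩
        exact ⟨n + m, u ^ m * r + u ^ n * t, P.add_mem (P.mul_mem_left _ hr) (P.mul_mem_left _ ht),
          by simp only [map_add, map_mul, map_pow, ha, hb]; ring⟩
      zero_mem' := ⟨0, 0, P.zero_mem, by simp⟩
      smul_mem' := by
        rintro c a ⟨n, r, hr, ha⟩
        obtain ⟨m, t, ht⟩ := hX c
        exact ⟨n + m, t * r, P.mul_mem_left _ hr, by
          simp only [map_mul, ha, ht, smul_eq_mul]; ring⟩ }
  have hP' : ∀ g n r, ψ r = ψ u ^ n * g → (g ∈ P' ↔ r ∈ P) := by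
    intro g n r hr
    constructor
    · rintro ⟨m, t, ht, ht'⟩
      have : u ^ m * r = u ^ n * t := by
        apply hinj
        simp only [map_mul, map_pow, hr, ht']; ring
      have h3 : u ^ m * r ∈ P := by rw [this]; exact P.mul_mem_left _ ht
      exact (Ideal.IsPrime.mem_or_mem inferInstance h3).resolve_left (hup m)
    · intro h; exact ⟨n, r, h, hr⟩
  haveI : P'.IsPrime := by
    refine Ideal.isPrime_iff.mpr ⟨?_, ?_⟩
    · rw [Ne, Ideal.eq_top_iff_one, hP' 1 0 1 (by simp)]
      intro h; exact hup 0 (by simpa using h)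
    · intro x y hxy
      obtain ⟨n, r, hr⟩ := hX x
      obtain ⟨m, t, ht⟩ := hX y
      rw [hP' x n r hr, hP' y m t ht]
      rw [hP' (x * y) (n + m) (r * t) (by rw [map_mul, hr, ht]; ring)] at hxy
      exact Ideal.IsPrime.mem_or_mem inferInstance hxy
  have hPP' : P = P'.comap ψ := by
    ext f; rw [Ideal.mem_comap, hP' _ 0 f (by simp)]
  have huP' : ψ u ∉ P' := by rw [hP' _ 0 u (by simp)]; exact huP
  rw [cmAt_comap_iff ψ hinj u hX P' huP' P hPP']
  haveI : (P'.comap C).IsPrime := Ideal.comap_isPrime _ _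
  refine cmAt_polynomial_of_map P' (P'.comap C) rfl ?_
  rw [← cmAt_comap_iff ψ hinj u hX _ ?_ (starIdeal δ P) ?_]
  · exact h
  · rw [hψu, Ideal.mem_map_C_iff]
    intro h
    have := h 1
    rw [coeff_X_one, Ideal.mem_comap, map_one] at this
    exact Ideal.IsPrime.ne_top inferInstance ((Ideal.eq_top_iff_one _).mpr this)
  · ext f
    rw [mem_starIdeal, Ideal.mem_comap, Ideal.mem_map_C_iff]
    refine forall_congr' fun m => ?_
    rw [Ideal.mem_comap, hψ, coeff_map]
    rw [← hP' (ψ ((δ f).coeff m)) 0 _ (by simp), hψm, ← C_mul_X_pow_eq_monomial]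
    constructor
    · intro h
      refine (Ideal.IsPrime.mem_or_mem inferInstance h).resolve_right fun h => huP' ?_
      rw [hψu]
      exact Ideal.IsPrime.mem_of_pow_mem inferInstance _ h
    · intro h; exact P'.mul_mem_right _ h
end CMTheory4


section RR
universe u
set_option linter.all false
open MvPolynomial

/-- exponent vectors -/
noncomputable def ee (m n : ℕ) : Fin 2 →₀ ℕ := Finsupp.single 0 m + Finsupp.single 1 n

@[simp] lemma ee_zero (m n : ℕ) : ee m n 0 = m := by simp [ee]
@[simp] lemma ee_one (m n : ℕ) : ee m n 1 = n := by simp [ee]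
lemma ee_eta (d : Fin 2 →₀ ℕ) : ee (d 0) (d 1) = d := by
  ext i; fin_cases i <;> simp
lemma ee_add (m n i j : ℕ) : ee m n + ee i j = ee (m+i) (n+j) := by
  ext i; fin_cases i <;> simp
@[simp] lemma ee_inj {m n i j : ℕ} : ee m n = ee i j ↔ m = i ∧ n = j := by
  constructor
  · intro h
    have h0 := DFunLike.congr_fun h 0
    have h1 := DFunLike.congr_fun h 1
    simpa using And.intro h0 h1
  · rintro ⟨rfl, rfl⟩; rfl
lemma ee_le {m n i j : ℕ} : ee m n ≤ ee i j ↔ m ≤ i ∧ n ≤ j := by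
  rw [Finsupp.le_def]; simp
lemma ee_sub (m n i j : ℕ) : ee m n - ee i j = ee (m-i) (n-j) := by
  ext i; fin_cases i <;> simp
lemma ee_zero_zero : ee 0 0 = 0 := by simp [ee]

variable {A : Type u} [CommRing A]

/-- bigraded coefficients -/
noncomputable def cf (f : MvPolynomial (Fin 2) A) (m n : ℕ) : A := coeff (ee m n) f

/-- bigraded monomials -/
noncomputable def mo (m n : ℕ) (a : A) : MvPolynomial (Fin 2) A := monomial (ee m n) a

lemma cf_ext {f g : MvPolynomial (Fin 2) A} (h : ∀ m n, cf f m n = cf g m n) : f = g := by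
  ext d; rw [← ee_eta d]; exact h _ _
@[simp] lemma cf_add (f g : MvPolynomial (Fin 2) A) (m n) : cf (f+g) m n = cf f m n + cf g m n := by
  simp [cf]
@[simp] lemma cf_sub (f g : MvPolynomial (Fin 2) A) (m n) : cf (f-g) m n = cf f m n - cf g m n := by
  simp [cf]
@[simp] lemma cf_neg (f : MvPolynomial (Fin 2) A) (m n) : cf (-f) m n = - cf f m n := by
  simp [cf]
@[simp] lemma cf_zero (m n) : cf (0 : MvPolynomial (Fin 2) A) m n = 0 := by simp [cf]
lemma cf_mo (i j : ℕ) (a : A) (m n) : cf (mo i j a) m n = if i = m ∧ j = n then a else 0 := by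
  simp [cf, mo, coeff_monomial]
@[simp] lemma cf_mo_self (i j : ℕ) (a : A) : cf (mo i j a) i j = a := by simp [cf_mo]
lemma cf_mo_mul (i j : ℕ) (a : A) (f) (m n) :
    cf (mo i j a * f) m n = if i ≤ m ∧ j ≤ n then a * cf f (m-i) (n-j) else 0 := by
  rw [cf, mo, coeff_monomial_mul', ee_sub]; simp only [ee_le]; rfl
lemma mo_mul (i j m n : ℕ) (a b : A) : mo i j a * mo m n b = mo (i+m) (j+n) (a*b) := by
  simp [mo, monomial_mul, ee_add]
lemma mo_add (i j : ℕ) (a b : A) : mo i j (a + b) = mo i j a + mo i j b := by simp [mo]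
lemma mo_sub (i j : ℕ) (a b : A) : mo i j (a - b) = mo i j a - mo i j b := by simp [mo]
lemma mo_neg (i j : ℕ) (a : A) : mo i j (-a) = - mo i j a := by simp [mo]
lemma mo_zz (a : A) : mo 0 0 a = C a := by simp [mo, ee_zero_zero]
@[simp] lemma mo_zero (i j : ℕ) : mo i j (0 : A) = 0 := by simp [mo]
lemma mo_pow (i j n : ℕ) (a : A) : mo i j a ^ n = mo (n*i) (n*j) (a^n) := by
  induction n with
  | zero => simp [mo_zz]
  | succ n ih => rw [pow_succ, ih, mo_mul, pow_succ]; congr 1 <;> ring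
lemma mo_inj (i j : ℕ) {a b : A} (h : mo i j a = mo i j b) : a = b := by
  have := congrArg (fun f => cf f i j) h; simpa using this
lemma eq_sum_mo (f : MvPolynomial (Fin 2) A) :
    f = ∑ d ∈ f.support, mo (d 0) (d 1) (cf f (d 0) (d 1)) := by
  conv_lhs => rw [f.as_sum]
  refine Finset.sum_congr rfl fun d _ => ?_
  rw [mo, cf, ee_eta]

/-- the multi-Rees algebra of two ideals -/
noncomputable abbrev RR (I J : Ideal A) := multiReesAlgebra ![I, J]

variable {I J : Ideal A}

/-- auxiliary description -/
noncomputable def RRaux (I J : Ideal A) : Subalgebra A (MvPolynomial (Fin 2) A) where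
  carrier := {f | ∀ m n, cf f m n ∈ I ^ m * J ^ n}
  add_mem' := fun {f g} hf hg m n => by rw [cf_add]; exact Ideal.add_mem _ (hf m n) (hg m n)
  mul_mem' := fun {f g} hf hg m n => by
    rw [cf, coeff_mul]
    refine Ideal.sum_mem _ fun x hx => ?_
    rw [Finset.HasAntidiagonal.mem_antidiagonal] at hx
    have h1 := hf (x.1 0) (x.1 1)
    have h2 := hg (x.2 0) (x.2 1)
    rw [cf, ee_eta] at h1 h2
    have e0 : x.1 0 + x.2 0 = m := by rw [← Finsupp.add_apply, hx, ee_zero]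
    have e1 : x.1 1 + x.2 1 = n := by rw [← Finsupp.add_apply, hx, ee_one]
    have := Ideal.mul_mem_mul h1 h2
    rw [← e0, ← e1, pow_add, pow_add]
    convert this using 1
    ring
  algebraMap_mem' := fun a m n => by
    rw [MvPolynomial.algebraMap_eq, ← mo_zz, cf_mo]
    split_ifs with h
    · obtain ⟨rfl, rfl⟩ := h; simp
    · exact Ideal.zero_mem _

lemma mo_mem_RR_aux (m n : ℕ) : ∀ a ∈ I ^ m * J ^ n, mo m n a ∈ RR I J := by
  have hI : ∀ a ∈ I, mo 1 0 a ∈ RR I J := by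
    intro a ha
    refine Algebra.subset_adjoin (Set.mem_iUnion.mpr ⟨0, a, ha, ?_⟩)
    simp only [mo, ee, Finsupp.single_zero, add_zero]
    rw [C_mul_X_eq_monomial]
  have hJ : ∀ a ∈ J, mo 0 1 a ∈ RR I J := by
    intro a ha
    refine Algebra.subset_adjoin (Set.mem_iUnion.mpr ⟨1, a, ha, ?_⟩)
    simp only [mo, ee, Finsupp.single_zero, zero_add]
    rw [C_mul_X_eq_monomial]
  have hIm : ∀ m, ∀ a ∈ I ^ m, mo m 0 a ∈ RR I J := by
    intro m
    induction m with
    | zero => intro a _; rw [mo_zz]; exact (RR I J).algebraMap_mem a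
    | succ m ih =>
      intro a ha
      rw [pow_succ] at ha
      refine Submodule.mul_induction_on ha ?_ ?_
      · intro x hx y hy
        have := (RR I J).mul_mem (ih x hx) (hI y hy)
        rwa [mo_mul] at this
      · intro x y hx hy; rw [mo_add]; exact (RR I J).add_mem hx hy
  have hJn : ∀ m, ∀ a ∈ J ^ m, mo 0 m a ∈ RR I J := by
    intro m
    induction m with
    | zero => intro a _; rw [mo_zz]; exact (RR I J).algebraMap_mem a
    | succ m ih =>
      intro a ha
      rw [pow_succ] at ha
      refine Submodule.mul_induction_on ha ?_ ?_
      · intro x hx y hy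
        have := (RR I J).mul_mem (ih x hx) (hJ y hy)
        rwa [mo_mul] at this
      · intro x y hx hy; rw [mo_add]; exact (RR I J).add_mem hx hy
  intro a ha
  refine Submodule.mul_induction_on ha ?_ ?_
  · intro x hx y hy
    have := (RR I J).mul_mem (hIm m x hx) (hJn n y hy)
    rwa [mo_mul, add_zero, zero_add] at this
  · intro x y hx hy; rw [mo_add]; exact (RR I J).add_mem hx hy

lemma mem_RR {f : MvPolynomial (Fin 2) A} : f ∈ RR I J ↔ ∀ m n, cf f m n ∈ I ^ m * J ^ n := by
  constructor
  · intro h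
    have hle : RR I J ≤ RRaux I J := by
      refine Algebra.adjoin_le ?_
      rintro _ hf
      obtain ⟨i, a, ha, rfl⟩ := Set.mem_iUnion.mp hf
      intro m n
      fin_cases i
      · have : (C a * X 0 : MvPolynomial (Fin 2) A) = mo 1 0 a := by
          simp only [mo, ee, Finsupp.single_zero, add_zero]; rw [C_mul_X_eq_monomial]
        show cf (C a * X 0) m n ∈ _
        rw [this, cf_mo]
        split_ifs with h
        · obtain ⟨rfl, rfl⟩ := h; simpa using ha
        · exact Ideal.zero_mem _
      · have : (C a * X 1 : MvPolynomial (Fin 2) A) = mo 0 1 a := by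
          simp only [mo, ee, Finsupp.single_zero, zero_add]; rw [C_mul_X_eq_monomial]
        show cf (C a * X 1) m n ∈ _
        rw [this, cf_mo]
        split_ifs with h
        · obtain ⟨rfl, rfl⟩ := h; simpa using ha
        · exact Ideal.zero_mem _
    exact hle h
  · intro h
    rw [eq_sum_mo f]
    exact (RR I J).sum_mem fun d _ => mo_mem_RR_aux _ _ _ (h _ _)

lemma mo_mem_RR {m n : ℕ} {a : A} : mo m n a ∈ RR I J ↔ a ∈ I ^ m * J ^ n := by
  refine ⟨fun h => by simpa using mem_RR.mp h m n, fun h => mo_mem_RR_aux m n a h⟩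

/-- The coaction on the polynomial ring. -/
noncomputable def Del (i : Fin 2) : MvPolynomial (Fin 2) A →+* Polynomial (MvPolynomial (Fin 2) A) :=
  eval₂Hom (Polynomial.C.comp C)
    (fun j => if j = i then Polynomial.C (X j) * Polynomial.X else Polynomial.C (X j))

lemma Del_monomial (i : Fin 2) (d : Fin 2 →₀ ℕ) (a : A) :
    Del i (monomial d a) = Polynomial.monomial (d i) (monomial d a) := by
  rw [Del, coe_eval₂Hom, eval₂_monomial, ← Polynomial.C_mul_X_pow_eq_monomial, monomial_eq]
  simp only [RingHom.comp_apply, Finsupp.prod_fintype, map_mul, map_pow, Fin.prod_univ_two,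
    pow_zero, implies_true]
  fin_cases i <;> simp [mul_pow] <;> ring

lemma coeff_Del (i : Fin 2) (f : MvPolynomial (Fin 2) A) (m : ℕ) (d) :
    coeff d ((Del i f).coeff m) = if d i = m then coeff d f else 0 := by
  induction f using MvPolynomial.induction_on' with
  | monomial e a =>
    rw [Del_monomial, Polynomial.coeff_monomial]
    by_cases h : e = d
    · subst h; split_ifs <;> simp
    · split_ifs <;> simp [coeff_monomial, h]
  | add p q hp hq => simp only [map_add, Polynomial.coeff_add, coeff_add, hp, hq]; split_ifs <;> simp

lemma Del_coeff_mem (i : Fin 2) (f : RR I J) (m : ℕ) : (Del i (f : MvPolynomial (Fin 2) A)).coeff m ∈ RR I J := by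
  rw [mem_RR]
  intro a b
  rw [cf, coeff_Del]
  split_ifs
  · exact mem_RR.mp f.2 a b
  · exact Ideal.zero_mem _

lemma Del_eval_one (i : Fin 2) (f : MvPolynomial (Fin 2) A) : (Del i f).eval 1 = f := by
  induction f using MvPolynomial.induction_on' with
  | monomial e a => rw [Del_monomial]; simp
  | add p q hp hq => simp only [map_add, Polynomial.eval_add, hp, hq]

/-- coaction on the multi-Rees algebra, underlying function -/
noncomputable def delFun (I J : Ideal A) (i : Fin 2) (f : RR I J) : Polynomial (RR I J) :=
  ∑ m ∈ (Del i (f : MvPolynomial (Fin 2) A)).support,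
    Polynomial.monomial m ⟨(Del i (f : MvPolynomial (Fin 2) A)).coeff m, Del_coeff_mem i f m⟩

lemma delFun_map (i : Fin 2) (f : RR I J) :
    (delFun I J i f).map (RR I J).subtype = Del i (f : MvPolynomial (Fin 2) A) := by
  rw [delFun, Polynomial.map_sum]
  conv_rhs => rw [(Del i (f : MvPolynomial (Fin 2) A)).as_sum_support]
  refine Finset.sum_congr rfl fun m _ => ?_
  rw [Polynomial.map_monomial]; rfl

lemma map_subtype_inj : Function.Injective (Polynomial.map (RR I J).subtype) :=
  Polynomial.map_injective _ Subtype.val_injective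

/-- coaction on the multi-Rees algebra -/
noncomputable def del (I J : Ideal A) (i : Fin 2) : RR I J →+* Polynomial (RR I J) where
  toFun f := delFun I J i f
  map_one' := map_subtype_inj (by rw [delFun_map, Polynomial.map_one]; simp)
  map_mul' f g := map_subtype_inj (by
    rw [Polynomial.map_mul, delFun_map, delFun_map, delFun_map]; simp)
  map_zero' := map_subtype_inj (by rw [delFun_map, Polynomial.map_zero]; simp)
  map_add' f g := map_subtype_inj (by
    rw [Polynomial.map_add, delFun_map, delFun_map, delFun_map]; simp)

lemma del_map (i : Fin 2) (f : RR I J) :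
    (del I J i f).map (RR I J).subtype = Del i (f : MvPolynomial (Fin 2) A) := delFun_map i f

lemma coe_coeff_del (i : Fin 2) (f : RR I J) (m : ℕ) :
    (((del I J i f).coeff m : RR I J) : MvPolynomial (Fin 2) A) = (Del i (f : MvPolynomial (Fin 2) A)).coeff m := by
  rw [← del_map, Polynomial.coeff_map]; rfl

lemma coeff_coeff_del (i : Fin 2) (f : RR I J) (m : ℕ) (d) :
    coeff d (((del I J i f).coeff m : RR I J) : MvPolynomial (Fin 2) A) =
      if d i = m then coeff d (f : MvPolynomial (Fin 2) A) else 0 := by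
  rw [coe_coeff_del, coeff_Del]

lemma del_eval_one (i : Fin 2) (f : RR I J) : (del I J i f).eval 1 = f := by
  apply Subtype.ext
  have := Polynomial.eval_map_apply (RR I J).subtype (p := del I J i f) 1
  rw [del_map] at this
  have h2 : (RR I J).subtype ((del I J i f).eval 1) = f := by
    rw [← this, map_one, Del_eval_one]
  exact h2

lemma del_del (i : Fin 2) (f : RR I J) (m : ℕ) :
    del I J i ((del I J i f).coeff m) = Polynomial.monomial m ((del I J i f).coeff m) := by
  ext n d
  rw [coeff_coeff_del, coeff_coeff_del, Polynomial.coeff_monomial]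
  by_cases h : m = n
  · subst h; rw [if_pos rfl, coeff_coeff_del]; split_ifs <;> rfl
  · rw [if_neg h]
    split_ifs with h1 h2
    · omega
    · simp
    · simp

lemma del_homog (i : Fin 2) (m n : ℕ) (a : A) (h : mo m n a ∈ RR I J) :
    del I J i ⟨mo m n a, h⟩ = Polynomial.monomial (ee m n i) ⟨mo m n a, h⟩ := by
  apply map_subtype_inj
  rw [del_map, Polynomial.map_monomial]
  exact Del_monomial i (ee m n) a
end RR


section RR6
universe u
set_option linter.all false
open MvPolynomial

variable {A : Type u} [CommRing A] {I J : Ideal A}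

/-- homogeneous elements of the multi-Rees algebra -/
noncomputable def mr (I J : Ideal A) (m n : ℕ) (a : A) (h : a ∈ I ^ m * J ^ n) : RR I J :=
  ⟨mo m n a, mo_mem_RR.mpr h⟩

@[simp] lemma mr_val (m n : ℕ) (a : A) (h : a ∈ I ^ m * J ^ n) : (mr I J m n a h).1 = mo m n a := rfl

lemma mem_10 {a : A} (h : a ∈ I) : a ∈ I ^ 1 * J ^ 0 := by simpa using h
lemma mem_01 {a : A} (h : a ∈ J) : a ∈ I ^ 0 * J ^ 1 := by simpa using h
lemma mem_00 (a : A) : a ∈ I ^ 0 * J ^ 0 := by simp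

lemma RR_ext {f g : RR I J} (h : ∀ m n, cf f.1 m n = cf g.1 m n) : f = g :=
  Subtype.ext (cf_ext h)

lemma mr_mul {m n i j : ℕ} {a b : A} (ha : a ∈ I ^ m * J ^ n) (hb : b ∈ I ^ i * J ^ j)
    (hab : a * b ∈ I ^ (m+i) * J ^ (n+j)) :
    mr I J m n a ha * mr I J i j b hb = mr I J (m+i) (n+j) (a*b) hab :=
  Subtype.ext (by show mo _ _ _ * mo _ _ _ = mo _ _ _; rw [mo_mul])

lemma mul_mem_pow {m n i j : ℕ} {a b : A} (ha : a ∈ I ^ m * J ^ n) (hb : b ∈ I ^ i * J ^ j) :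
    a * b ∈ I ^ (m+i) * J ^ (n+j) := by
  have := Ideal.mul_mem_mul ha hb
  rw [pow_add, pow_add]; convert this using 1; ring

lemma mr_add {m n : ℕ} {a b : A} (ha : a ∈ I ^ m * J ^ n) (hb : b ∈ I ^ m * J ^ n)
    (hab : a + b ∈ I ^ m * J ^ n) :
    mr I J m n (a+b) hab = mr I J m n a ha + mr I J m n b hb :=
  Subtype.ext (by show mo _ _ _ = mo _ _ _ + mo _ _ _; rw [mo_add])

/-- component of an element -/
noncomputable def cp (f : RR I J) (m n : ℕ) : RR I J := mr I J m n (cf f.1 m n) (mem_RR.mp f.2 m n)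

lemma eq_sum_cp (f : RR I J) : f = ∑ d ∈ f.1.support, cp f (d 0) (d 1) := by
  apply Subtype.ext
  rw [AddSubmonoidClass.coe_finsetSum]
  exact eq_sum_mo f.1

lemma mem_of_cp (Q : Ideal (RR I J)) (f : RR I J) (h : ∀ m n, cf f.1 m n ≠ 0 → cp f m n ∈ Q) : f ∈ Q := by
  rw [eq_sum_cp f]
  refine Ideal.sum_mem _ fun d hd => h _ _ ?_
  rw [cf, ee_eta]; exact mem_support_iff.mp hd

lemma mr_left_mem (Q : Ideal (RR I J)) (hQ : ∀ c (hc : c ∈ I), mr I J 1 0 c (mem_10 hc) ∈ Q) (m n : ℕ) :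
    ∀ a (ha : a ∈ I ^ (m+1) * J ^ n), mr I J (m+1) n a ha ∈ Q := by
  intro a ha
  have key : ∀ a ∈ I * (I ^ m * J ^ n), ∃ h : a ∈ I ^ (m+1) * J ^ n, mr I J (m+1) n a h ∈ Q := by
    intro a ha
    refine Submodule.mul_induction_on ha ?_ ?_
    · intro x hx y hy
      have hxy : x * y ∈ I ^ (m+1) * J ^ n := by
        rw [pow_succ', mul_assoc]; exact Ideal.mul_mem_mul hx hy
      refine ⟨hxy, ?_⟩
      have := Q.mul_mem_right (mr I J m n y hy) (hQ x hx)
      convert this using 1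
      apply Subtype.ext
      show mo _ _ _ = mo _ _ _ * mo _ _ _
      rw [mo_mul]; congr 1 <;> ring
    · rintro x y ⟨h1, h2⟩ ⟨h3, h4⟩
      exact ⟨Ideal.add_mem _ h1 h3, by rw [mr_add h1 h3]; exact Q.add_mem h2 h4⟩
  obtain ⟨_, h⟩ := key a (by rw [← mul_assoc, ← pow_succ']; exact ha)
  exact h

lemma mr_right_mem (Q : Ideal (RR I J)) (hQ : ∀ c (hc : c ∈ J), mr I J 0 1 c (mem_01 hc) ∈ Q) (m n : ℕ) :
    ∀ a (ha : a ∈ I ^ m * J ^ (n+1)), mr I J m (n+1) a ha ∈ Q := by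
  intro a ha
  have key : ∀ a ∈ J * (I ^ m * J ^ n), ∃ h : a ∈ I ^ m * J ^ (n+1), mr I J m (n+1) a h ∈ Q := by
    intro a ha
    refine Submodule.mul_induction_on ha ?_ ?_
    · intro x hx y hy
      have hxy : x * y ∈ I ^ m * J ^ (n+1) := by
        rw [pow_succ', mul_left_comm]; exact Ideal.mul_mem_mul hx hy
      refine ⟨hxy, ?_⟩
      have := Q.mul_mem_right (mr I J m n y hy) (hQ x hx)
      convert this using 1
      apply Subtype.ext
      show mo _ _ _ = mo _ _ _ * mo _ _ _
      rw [mo_mul]; congr 1 <;> ring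
    · rintro x y ⟨h1, h2⟩ ⟨h3, h4⟩
      exact ⟨Ideal.add_mem _ h1 h3, by rw [mr_add h1 h3]; exact Q.add_mem h2 h4⟩
  obtain ⟨_, h⟩ := key a (by rw [mul_left_comm, ← pow_succ']; exact ha)
  exact h

/-- degree zero part -/
noncomputable def c00 (I J : Ideal A) : RR I J →+* A := constantCoeff.comp (RR I J).subtype

lemma c00_eq (f : RR I J) : c00 I J f = cf f.1 0 0 := by
  rw [cf, ee_zero_zero]; rfl

@[simp] lemma c00_algebraMap (a : A) : c00 I J (algebraMap A (RR I J) a) = a := by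
  show constantCoeff (algebraMap A (MvPolynomial (Fin 2) A) a) = a
  simp [MvPolynomial.algebraMap_eq]

lemma mr00 (a : A) : mr I J 0 0 a (mem_00 a) = algebraMap A (RR I J) a :=
  Subtype.ext (by show mo 0 0 a = algebraMap A (MvPolynomial (Fin 2) A) a; rw [mo_zz]; rfl)

lemma RR_eq_adjoin (s t : Set A) (hs : Submodule.span A s = I) (ht : Submodule.span A t = J) :
    RR I J = Algebra.adjoin A ((mo 1 0) '' s ∪ (mo 0 1) '' t) := by
  set T : Set (MvPolynomial (Fin 2) A) := (mo 1 0) '' s ∪ (mo 0 1) '' t with hT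
  have hsm : ∀ (b c : A) m n, mo m n (b * c) = b • mo m n c := by
    intro b c m n; simp [mo, smul_monomial]
  apply le_antisymm
  · refine Algebra.adjoin_le ?_
    rintro _ hf
    obtain ⟨i, a, ha, rfl⟩ := Set.mem_iUnion.mp hf
    fin_cases i
    · have e : (C a * X 0 : MvPolynomial (Fin 2) A) = mo 1 0 a := by
        simp only [mo, ee, Finsupp.single_zero, add_zero]; rw [C_mul_X_eq_monomial]
      show (C a * X 0 : MvPolynomial (Fin 2) A) ∈ Algebra.adjoin A T
      rw [e]
      have ha' : a ∈ Submodule.span A s := by rw [hs]; exact ha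
      refine Submodule.span_induction (p := fun a _ => mo 1 0 a ∈ Algebra.adjoin A T) ?_ ?_ ?_ ?_ ha'
      · intro x hx; exact Algebra.subset_adjoin (Or.inl ⟨x, hx, rfl⟩)
      · simp
      · intro x y _ _ hx hy; rw [mo_add]; exact add_mem hx hy
      · intro b x _ hx; rw [smul_eq_mul, hsm]; exact Subalgebra.smul_mem _ hx b
    · have e : (C a * X 1 : MvPolynomial (Fin 2) A) = mo 0 1 a := by
        simp only [mo, ee, Finsupp.single_zero, zero_add]; rw [C_mul_X_eq_monomial]
      show (C a * X 1 : MvPolynomial (Fin 2) A) ∈ Algebra.adjoin A T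
      rw [e]
      have ha' : a ∈ Submodule.span A t := by rw [ht]; exact ha
      refine Submodule.span_induction (p := fun a _ => mo 0 1 a ∈ Algebra.adjoin A T) ?_ ?_ ?_ ?_ ha'
      · intro x hx; exact Algebra.subset_adjoin (Or.inr ⟨x, hx, rfl⟩)
      · simp
      · intro x y _ _ hx hy; rw [mo_add]; exact add_mem hx hy
      · intro b x _ hx; rw [smul_eq_mul, hsm]; exact Subalgebra.smul_mem _ hx b
  · refine Algebra.adjoin_le ?_
    rintro _ (⟨x, hx, rfl⟩ | ⟨x, hx, rfl⟩)
    · exact mo_mem_RR.mpr (mem_10 (by rw [← hs]; exact Submodule.subset_span hx))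
    · exact mo_mem_RR.mpr (mem_01 (by rw [← ht]; exact Submodule.subset_span hx))

instance RR_noeth [IsNoetherianRing A] : IsNoetherianRing (RR I J) := by
  obtain ⟨s, hs⟩ := IsNoetherian.noetherian I
  obtain ⟨t, ht⟩ := IsNoetherian.noetherian J
  have hfg : (RR I J).FG := by
    classical
    rw [RR_eq_adjoin s t hs ht]
    exact Subalgebra.fg_def.mpr ⟨_, (s.finite_toSet.image _).union (t.finite_toSet.image _), rfl⟩
  haveI : Algebra.FiniteType A (RR I J) := (Subalgebra.fg_iff_finiteType _).mp hfg
  exact Algebra.FiniteType.isNoetherianRing A _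

variable [IsDomain A] [IsNoetherianRing A]

lemma star_eq_of_left (P : Ideal (RR I J)) [P.IsPrime] (i : Fin 2)
    (hQ : ∀ m n, ee m n i ≠ 0 → ∀ a (ha : a ∈ I ^ m * J ^ n), mr I J m n a ha ∈ P) :
    starIdeal (del I J i) P = P := by
  have key : ∀ (f : RR I J) m, m ≠ 0 → (del I J i f).coeff m ∈ P := by
    intro f m hm
    refine mem_of_cp _ _ fun a b hab => hQ _ _ ?_ _ _
    rw [cf, coeff_coeff_del] at hab
    split_ifs at hab with h
    · omega
    · exact absurd rfl hab
  have hsum : ∀ f : RR I J, f - (del I J i f).coeff 0 ∈ P := by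
    intro f
    have : f = ∑ m ∈ Finset.range ((del I J i f).natDegree + 1), (del I J i f).coeff m := by
      conv_lhs => rw [← del_eval_one i f, Polynomial.eval_eq_sum_range]
      simp
    rw [Finset.sum_range_succ'] at this
    have h2 := sub_eq_of_eq_add this
    rw [h2]
    exact Ideal.sum_mem _ fun m _ => key _ _ (by omega)
  ext f
  rw [mem_starIdeal]
  constructor
  · intro h
    have := P.add_mem (hsum f) (h 0)
    simpa using this
  · intro h m
    by_cases hm : m = 0
    · subst hm
      have := P.sub_mem h (hsum f)
      simpa using this
    · exact key f m hm

lemma cmAt_of_star_RR (hI : I ≠ ⊥) (hJ : J ≠ ⊥) (i : Fin 2) (P : Ideal (RR I J)) [P.IsPrime]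
    (h : CMAt (RR I J) (starIdeal (del I J i) P)) : CMAt (RR I J) P := by
  have main : ∀ (m n : ℕ) (c : A) (hc : c ∈ I ^ m * J ^ n), ee m n i = 1 → mr I J m n c hc ∉ P → CMAt (RR I J) P := by
    intro m n c hc hmn hu
    refine cmAt_of_star (del I J i) (del_eval_one i) (del_del i) (mr I J m n c hc) ?_ ?_ P hu h
    · intro h0; rw [h0] at hu; exact hu P.zero_mem
    · rw [mr, del_homog, hmn]
  fin_cases i
  · by_cases hQ : ∀ c (hc : c ∈ I), mr I J 1 0 c (mem_10 hc) ∈ P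
    · rw [← CMAt.congr (star_eq_of_left P 0 _)]
      · exact h
      · intro m n hm a ha
        obtain ⟨m, rfl⟩ : ∃ k, m = k + 1 := ⟨m - 1, by simp at hm; omega⟩
        exact mr_left_mem P hQ m n a ha
    · push Not at hQ
      obtain ⟨c, hc, hu⟩ := hQ
      exact main 1 0 c (mem_10 hc) (by simp) hu
  · by_cases hQ : ∀ c (hc : c ∈ J), mr I J 0 1 c (mem_01 hc) ∈ P
    · rw [← CMAt.congr (star_eq_of_left P 1 _)]
      · exact h
      · intro m n hm a ha
        obtain ⟨n, rfl⟩ : ∃ k, n = k + 1 := ⟨n - 1, by simp at hm; omega⟩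
        exact mr_right_mem P hQ m n a ha
    · push Not at hQ
      obtain ⟨c, hc, hu⟩ := hQ
      exact main 0 1 c (mem_01 hc) (by simp) hu

/-- the graded maximal ideal -/
noncomputable def NN [IsLocalRing A] (I J : Ideal A) : Ideal (RR I J) := (IsLocalRing.maximalIdeal A).comap (c00 I J)

instance NN_prime [IsLocalRing A] : (NN I J).IsPrime := by unfold NN; infer_instance

lemma mem_NN [IsLocalRing A] (f : RR I J) : f ∈ NN I J ↔ cf f.1 0 0 ∈ IsLocalRing.maximalIdeal A := by
  rw [NN, Ideal.mem_comap, c00_eq]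

lemma cm_of_cmAt_NN [IsLocalRing A] (hI : I ≠ ⊥) (hJ : J ≠ ⊥) (h : CMAt (RR I J) (NN I J)) :
    IsCohenMacaulayRing (RR I J) := by
  refine ⟨inferInstance, fun P hP => ?_⟩
  letI := hP
  refine cmAt_of_star_RR hI hJ 0 P (cmAt_of_star_RR hI hJ 1 _ ?_)
  refine CMAt.mono ?_ h
  intro f hf
  rw [mem_starIdeal] at hf
  have h1 := hf 0
  rw [mem_starIdeal] at h1
  have h2 := h1 0
  have h3 : (del I J 0 ((del I J 1 f).coeff 0)).coeff 0 = algebraMap A (RR I J) (cf f.1 0 0) := by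
    rw [← mr00]
    refine RR_ext fun m n => ?_
    rw [cf, coeff_coeff_del, coeff_coeff_del, mr_val, cf_mo]
    simp only [ee_zero, ee_one]
    by_cases hm : m = 0
    · by_cases hn : n = 0
      · subst hm; subst hn; simp [cf]
      · rw [if_pos hm, if_neg hn, if_neg (by omega)]
    · rw [if_neg hm, if_neg (by omega)]
  rw [h3] at h2
  rw [mem_NN]
  intro hu
  exact hP.ne_top (Ideal.eq_top_of_isUnit_mem _ h2 (hu.map (algebraMap A (RR I J))))

end RR6


section RR7
universe u
set_option linter.all false
open MvPolynomial

lemma dim_le_of_surj_poly {S T : Type*} [CommRing S] [IsDomain S] [IsNoetherianRing S] [CommRing T]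
    (φ : Polynomial S →+* T) (hφ : Function.Surjective φ) (p : Polynomial S) (hp : p ≠ 0) (hp0 : φ p = 0)
    (n : ℕ) (hn : ringKrullDim S ≤ n) : ringKrullDim T ≤ n := by
  have h1 := ringKrullDim_quotient_succ_le_of_nonZeroDivisor (mem_nonZeroDivisors_of_ne_zero hp)
  rw [Polynomial.ringKrullDim_of_isNoetherianRing] at h1
  have h2 : ringKrullDim T ≤ ringKrullDim (Polynomial S ⧸ Ideal.span {p}) := by
    refine ringKrullDim_le_of_surjective (Ideal.Quotient.lift (Ideal.span {p}) φ ?_) ?_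
    · intro a ha
      obtain ⟨c, rfl⟩ := Ideal.mem_span_singleton.mp ha
      rw [map_mul, hp0, zero_mul]
    · exact Ideal.Quotient.lift_surjective_of_surjective _ _ hφ
  have h3 : ringKrullDim T + 1 ≤ (n : WithBot ℕ∞) + 1 := by
    refine le_trans (add_le_add_left h2 1) (h1.trans (add_le_add_left hn 1))
  generalize ringKrullDim T = d at h3
  cases d with
  | bot => exact bot_le
  | coe d =>
    cases d with
    | top =>
      exfalso
      have : ((⊤ : ℕ∞) : WithBot ℕ∞) + 1 = ((⊤ + 1 : ℕ∞) : WithBot ℕ∞) := rfl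
      rw [this] at h3
      have h4 : ((n : WithBot ℕ∞) + 1) = ((n + 1 : ℕ∞) : WithBot ℕ∞) := rfl
      rw [h4, WithBot.coe_le_coe] at h3
      simp at h3
    | coe d => norm_cast at h3 ⊢; omega

variable {A : Type u} [CommRing A] [IsDomain A] [IsNoetherianRing A] {I J : Ideal A}

lemma dim_adjoin_le (n : ℕ) (T : Set (MvPolynomial (Fin 2) A)) (hT : T.Finite)
    (hd : ringKrullDim (Algebra.adjoin A T) ≤ n) (s : Set (MvPolynomial (Fin 2) A)) (hs : s.Finite)
    (h : ∀ x ∈ s, ∃ c ∈ Algebra.adjoin A T, ∃ d ∈ Algebra.adjoin A T, c ≠ 0 ∧ c * x = d) :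
    ringKrullDim (Algebra.adjoin A (T ∪ s)) ≤ n := by
  induction s, hs using Set.Finite.induction_on with
  | empty => rw [Set.union_empty]; exact hd
  | @insert x s hx hs ih =>
    have ih' := ih (fun y hy => h y (Set.mem_insert_of_mem _ hy))
    set B := Algebra.adjoin A (T ∪ s) with hB
    haveI : IsNoetherianRing B := by
      have hfg : B.FG := Subalgebra.fg_def.mpr ⟨_, hT.union hs, rfl⟩
      haveI : Algebra.FiniteType A B := (Subalgebra.fg_iff_finiteType _).mp hfg
      exact Algebra.FiniteType.isNoetherianRing A _
    have hTB : Algebra.adjoin A T ≤ B := Algebra.adjoin_mono Set.subset_union_left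
    obtain ⟨c, hc, d, hd', hc0, hcd⟩ := h x (Set.mem_insert _ _)
    have e : Algebra.adjoin A (T ∪ insert x s) = (Polynomial.aeval (R := B) x).range.restrictScalars A := by
      rw [← Algebra.adjoin_singleton_eq_range_aeval, ← Algebra.adjoin_union_eq_adjoin_adjoin]
      congr 1
      ext y; simp
    rw [e]
    refine dim_le_of_surj_poly (S := B) (Polynomial.aeval (R := B) x).rangeRestrict.toRingHom
      (AlgHom.rangeRestrict_surjective _)
      (Polynomial.C ⟨c, hTB hc⟩ * Polynomial.X - Polynomial.C ⟨d, hTB hd'⟩) ?_ ?_ n ih'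
    · intro h0
      have := congrArg (fun p => p.coeff 1) h0
      simp [Polynomial.coeff_C] at this
      exact hc0 (congrArg Subtype.val this)
    · apply Subtype.ext
      show Polynomial.aeval (R := B) x _ = 0
      simp
      rw [sub_eq_zero]; exact hcd

lemma dim_adjoin_pair (hdim : ringKrullDim A ≤ 2) (x y : MvPolynomial (Fin 2) A) :
    ringKrullDim (Algebra.adjoin A ({x, y} : Set (MvPolynomial (Fin 2) A))) ≤ 4 := by
  have e2 : ({x, y} : Set (MvPolynomial (Fin 2) A)) = Set.range ![x, y] := by
    simp [Set.pair_comm]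
  rw [e2, Algebra.adjoin_range_eq_range_aeval]
  refine (ringKrullDim_le_of_surjective (aeval ![x, y] : MvPolynomial (Fin 2) A →ₐ[A] _).rangeRestrict.toRingHom
    (AlgHom.rangeRestrict_surjective _)).trans ?_
  rw [MvPolynomial.ringKrullDim_of_isNoetherianRing]
  simp only [Nat.card_eq_fintype_card, Fintype.card_fin]
  have := add_le_add_left hdim (2 : WithBot ℕ∞)
  refine le_trans this (by norm_num)

lemma dim_RR_le (hdim : ringKrullDim A ≤ 2) (hI : I ≠ ⊥) (hJ : J ≠ ⊥) : ringKrullDim (RR I J) ≤ 4 := by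
  obtain ⟨a, haI, ha0⟩ := Submodule.exists_mem_ne_zero_of_ne_bot hI
  obtain ⟨b, hbJ, hb0⟩ := Submodule.exists_mem_ne_zero_of_ne_bot hJ
  obtain ⟨s, hs⟩ := IsNoetherian.noetherian I
  obtain ⟨t, ht⟩ := IsNoetherian.noetherian J
  have e : RR I J = Algebra.adjoin A (({mo 1 0 a, mo 0 1 b} : Set _) ∪ ((mo 1 0) '' (s : Set A) ∪ (mo 0 1) '' (t : Set A))) := by
    have hR := RR_eq_adjoin (I := I) (J := J) (s : Set A) (t : Set A) hs ht
    rw [hR]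
    apply le_antisymm
    · exact Algebra.adjoin_mono Set.subset_union_right
    · refine Algebra.adjoin_le (Set.union_subset ?_ Algebra.subset_adjoin)
      rw [← hR]
      rintro _ (rfl | rfl)
      · exact mo_mem_RR.mpr (mem_10 haI)
      · exact mo_mem_RR.mpr (mem_01 hbJ)
  rw [e]
  have ha1 : mo 1 0 a ∈ Algebra.adjoin A ({mo 1 0 a, mo 0 1 b} : Set (MvPolynomial (Fin 2) A)) :=
    Algebra.subset_adjoin (by simp)
  have hb1 : mo 0 1 b ∈ Algebra.adjoin A ({mo 1 0 a, mo 0 1 b} : Set (MvPolynomial (Fin 2) A)) :=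
    Algebra.subset_adjoin (by simp)
  refine dim_adjoin_le 4 _ (by simp) ?_ _ ((s.finite_toSet.image _).union (t.finite_toSet.image _)) ?_
  · exact dim_adjoin_pair hdim _ _
  · rintro _ (⟨x, hx, rfl⟩ | ⟨x, hx, rfl⟩)
    · refine ⟨mo 0 0 a, ?_, mo 0 0 x * mo 1 0 a, ?_, ?_, ?_⟩
      · rw [mo_zz]; exact Subalgebra.algebraMap_mem _ a
      · exact mul_mem (by rw [mo_zz]; exact Subalgebra.algebraMap_mem _ x) ha1
      · intro h; exact ha0 (mo_inj 0 0 (h.trans (mo_zero 0 0).symm))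
      · rw [mo_mul, mo_mul, mul_comm]
    · refine ⟨mo 0 0 b, ?_, mo 0 0 x * mo 0 1 b, ?_, ?_, ?_⟩
      · rw [mo_zz]; exact Subalgebra.algebraMap_mem _ b
      · exact mul_mem (by rw [mo_zz]; exact Subalgebra.algebraMap_mem _ x) hb1
      · intro h; exact hb0 (mo_inj 0 0 (h.trans (mo_zero 0 0).symm))
      · rw [mo_mul, mo_mul, mul_comm]

lemma lt_of_le_of_mem {R : Type*} [CommRing R] {P Q : Ideal R} (h : P ≤ Q) {x : R} (hx : x ∈ Q) (hx' : x ∉ P) : P < Q :=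
  lt_of_le_of_ne h (by rintro rfl; exact hx' hx)

/-- projection to `t₁`-degree zero -/
noncomputable def e0 (I J : Ideal A) : RR I J →+* RR I J := Polynomial.constantCoeff.comp (del I J 0)

lemma cf_e0 (f : RR I J) (m n : ℕ) : cf (e0 I J f).1 m n = if m = 0 then cf f.1 m n else 0 := by
  show coeff (ee m n) (((del I J 0 f).coeff 0 : RR I J) : MvPolynomial (Fin 2) A) = _
  rw [coeff_coeff_del]; simp [cf]

lemma exists_mid_prime [IsLocalRing A] (hdim : ringKrullDim A = 2) (x : A) (hx : x ∈ IsLocalRing.maximalIdeal A) :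
    ∃ p : Ideal A, p.IsPrime ∧ x ∈ p ∧ p < IsLocalRing.maximalIdeal A := by
  have hle : Ideal.span {x} ≤ IsLocalRing.maximalIdeal A := by
    rw [Ideal.span_le]; simpa using hx
  obtain ⟨p, hp, hpm⟩ := Ideal.exists_minimalPrimes_le hle
  refine ⟨p, hp.1.1, hp.1.2 (Ideal.mem_span_singleton_self x), lt_of_le_of_ne hpm ?_⟩
  rintro rfl
  have h1 := Ideal.height_le_one_of_isPrincipal_of_mem_minimalPrimes _ _ hp
  have h2 := IsLocalRing.maximalIdeal_height_eq_ringKrullDim (R := A)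
  rw [hdim] at h2
  have h3 : (((IsLocalRing.maximalIdeal A).height : ℕ∞) : WithBot ℕ∞) ≤ ((1 : ℕ∞) : WithBot ℕ∞) := by
    exact_mod_cast h1
  rw [h2] at h3
  exact absurd h3 (by decide)

lemma exists_ne_zero_max [IsLocalRing A] (hdim : ringKrullDim A = 2) : ∃ x ∈ IsLocalRing.maximalIdeal A, x ≠ 0 := by
  obtain ⟨p, _, _, h⟩ := exists_mid_prime hdim 0 (Ideal.zero_mem _)
  obtain ⟨x, hx, hxp⟩ := SetLike.exists_of_lt h
  exact ⟨x, hx, by rintro rfl; exact hxp (Ideal.zero_mem _)⟩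

lemma height_succ {R : Type*} [CommRing R] {P Q : Ideal R} [P.IsPrime] [Q.IsPrime] (n : ℕ) (h : P < Q)
    (hP : (n : ℕ∞) ≤ P.height) : ((n + 1 : ℕ) : ℕ∞) ≤ Q.height := by
  have := Ideal.height_add_one_le_of_lt_of_isPrime h
  refine le_trans ?_ this
  push_cast
  exact add_le_add_left hP 1

lemma four_le_height_NN [IsLocalRing A] (hdim : ringKrullDim A = 2) (hI : I ≠ ⊥) (hJ : J ≠ ⊥) :
    ((4 : ℕ) : ℕ∞) ≤ (NN I J).height := by
  obtain ⟨a, haI, ha0⟩ := Submodule.exists_mem_ne_zero_of_ne_bot hI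
  obtain ⟨b, hbJ, hb0⟩ := Submodule.exists_mem_ne_zero_of_ne_bot hJ
  obtain ⟨x, hxm, hx0⟩ := exists_ne_zero_max hdim
  obtain ⟨p, hp, hxp, hpm⟩ := exists_mid_prime hdim x hxm
  obtain ⟨y, hym, hyp⟩ := SetLike.exists_of_lt hpm
  have h1 : (⊥ : Ideal (RR I J)) < (⊥ : Ideal (RR I J)).comap (e0 I J) := by
    refine lt_of_le_of_mem bot_le (x := mr I J 1 0 a (mem_10 haI)) ?_ ?_
    · rw [Ideal.mem_comap, Ideal.mem_bot]
      refine RR_ext fun m n => ?_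
      rw [cf_e0, mr_val, cf_mo]
      split_ifs <;> first | omega | simp
    · rw [Ideal.mem_bot]; intro h
      have := congrArg (fun f : RR I J => cf f.1 1 0) h
      simp at this; exact ha0 this
  have h2 : (⊥ : Ideal (RR I J)).comap (e0 I J) < (⊥ : Ideal A).comap (c00 I J) := by
    refine lt_of_le_of_mem ?_ (x := mr I J 0 1 b (mem_01 hbJ)) ?_ ?_
    · intro f hf
      rw [Ideal.mem_comap, Ideal.mem_bot] at hf ⊢
      have := congrArg (fun f : RR I J => cf f.1 0 0) hf
      simp only [cf_e0] at this
      rw [c00_eq]; simpa using this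
    · rw [Ideal.mem_comap, Ideal.mem_bot, c00_eq, mr_val, cf_mo]; simp
    · rw [Ideal.mem_comap, Ideal.mem_bot]; intro h
      have := congrArg (fun f : RR I J => cf f.1 0 1) h
      simp only [cf_e0] at this
      simp at this; exact hb0 this
  have h3 : (⊥ : Ideal A).comap (c00 I J) < p.comap (c00 I J) := by
    refine lt_of_le_of_mem (Ideal.comap_mono bot_le) (x := algebraMap A _ x) ?_ ?_
    · rw [Ideal.mem_comap, c00_algebraMap]; exact hxp
    · rw [Ideal.mem_comap, c00_algebraMap]; exact hx0
  have h4 : p.comap (c00 I J) < NN I J := by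
    refine lt_of_le_of_mem (Ideal.comap_mono hpm.le) (x := algebraMap A _ y) ?_ ?_
    · rw [NN, Ideal.mem_comap, c00_algebraMap]; exact hym
    · rw [Ideal.mem_comap, c00_algebraMap]; exact hyp
  exact height_succ 3 h4 (height_succ 2 h3 (height_succ 1 h2 (height_succ 0 h1 (by simp))))

lemma dim_NN [IsLocalRing A] (hdim : ringKrullDim A = 2) (hI : I ≠ ⊥) (hJ : J ≠ ⊥) :
    ringKrullDim (Localization.AtPrime (NN I J)) = 4 := by
  rw [IsLocalization.AtPrime.ringKrullDim_eq_height (NN I J) (Localization.AtPrime (NN I J))]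
  apply le_antisymm
  · exact (Ideal.height_le_ringKrullDim_of_isPrime).trans (dim_RR_le hdim.le hI hJ)
  · have := four_le_height_NN hdim hI hJ
    exact WithBot.coe_le_coe.mpr this
end RR7


section RR8
universe u v
set_option linter.all false
open MvPolynomial

/-- a property holds for generic elements of an ideal -/
def Gen {A : Type u} [CommRing A] (I : Ideal A) (p : A → Prop) : Prop :=
  ∃ W : Set (Ideal A), W.Finite ∧ (∀ w ∈ W, ¬ I ≤ w) ∧ ∀ a ∈ I, (∀ w ∈ W, a ∉ w) → p a

lemma Gen.and {A : Type u} [CommRing A] {I : Ideal A} {p q : A → Prop} (hp : Gen I p) (hq : Gen I q) :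
    Gen I (fun a => p a ∧ q a) := by
  obtain ⟨W, h1, h2, h3⟩ := hp
  obtain ⟨V, g1, g2, g3⟩ := hq
  refine ⟨W ∪ V, h1.union g1, ?_, ?_⟩
  · rintro w (hw | hw)
    · exact h2 w hw
    · exact g2 w hw
  · intro a ha h
    exact ⟨h3 a ha fun w hw => h w (Or.inl hw), g3 a ha fun w hw => h w (Or.inr hw)⟩

lemma Gen.exists (k : Type v) [Field k] [Infinite k] {A : Type u} [CommRing A] [Algebra k A] {I : Ideal A} {p : A → Prop}
    (hp : Gen I p) : ∃ a ∈ I, p a := by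
  obtain ⟨W, h1, h2, h3⟩ := hp
  let g : Ideal A → Submodule k (I.restrictScalars k) := fun w =>
    (w.restrictScalars k).comap (I.restrictScalars k).subtype
  have key := Subspace.biUnion_ne_univ_of_top_notMem (s := (h1.image g).toFinset) (by
    rw [Set.Finite.mem_toFinset]
    rintro ⟨w, hw, hg⟩
    refine h2 w hw fun x hx => ?_
    have : (⟨x, hx⟩ : I.restrictScalars k) ∈ g w := by rw [hg]; trivial
    exact this)
  rw [Set.ne_univ_iff_exists_notMem] at key
  obtain ⟨⟨x, hx⟩, h⟩ := key
  refine ⟨x, hx, h3 x hx fun w hw hxw => h ?_⟩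
  simp only [Set.mem_iUnion]
  exact ⟨g w, by rw [Set.Finite.mem_toFinset]; exact ⟨w, hw, rfl⟩, hxw⟩

variable {A : Type u} [CommRing A] {I J : Ideal A}

lemma c00_of_star (P : Ideal (RR I J)) (h0 : starIdeal (del I J 0) P = P) (h1 : starIdeal (del I J 1) P = P)
    (f : RR I J) (hf : f ∈ P) : algebraMap A _ (cf f.1 0 0) ∈ P := by
  rw [← h1, mem_starIdeal] at hf
  have h2 := hf 0
  rw [← h0, mem_starIdeal] at h2
  have h3 : (del I J 0 ((del I J 1 f).coeff 0)).coeff 0 = algebraMap A (RR I J) (cf f.1 0 0) := by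
    rw [← mr00]
    refine RR_ext fun m n => ?_
    rw [cf, coeff_coeff_del, coeff_coeff_del, mr_val, cf_mo]
    simp only [ee_zero, ee_one]
    by_cases hm : m = 0
    · by_cases hn : n = 0
      · subst hm; subst hn; simp [cf]
      · rw [if_pos hm, if_neg hn, if_neg (by omega)]
    · rw [if_neg hm, if_neg (by omega)]
  rw [← h3]; exact h2 0

lemma starIdeal_le (i : Fin 2) (P : Ideal (RR I J)) : starIdeal (del I J i) P ≤ P := by
  intro f hf
  rw [mem_starIdeal] at hf
  rw [← del_eval_one i f, Polynomial.eval_eq_sum_range]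
  exact Ideal.sum_mem _ fun m _ => Ideal.mul_mem_right _ _ (hf m)

lemma mr_mem_star (i : Fin 2) (P : Ideal (RR I J)) (m n : ℕ) (a : A) (h : a ∈ I ^ m * J ^ n)
    (hP : mr I J m n a h ∈ P) : mr I J m n a h ∈ starIdeal (del I J i) P := by
  rw [mem_starIdeal, mr, del_homog]
  intro l
  rw [Polynomial.coeff_monomial]
  split_ifs
  · exact hP
  · exact P.zero_mem

variable [IsDomain A] [IsNoetherianRing A] [IsLocalRing A]

lemma R1_prime (hdim : ringKrullDim A = 2) (hI : I ≠ ⊥) (hJ : J ≠ ⊥) (a b : A) (ha : a ∈ I) (hb : b ∈ J)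
    (hga : ∀ P ∈ ((IsLocalRing.maximalIdeal A).map (algebraMap A (RR I J))).minimalPrimes,
      mr I J 1 0 a (mem_10 ha) ∈ P → ∀ c (hc : c ∈ I), mr I J 1 0 c (mem_10 hc) ∈ P)
    (hgb : ∀ P ∈ ((IsLocalRing.maximalIdeal A).map (algebraMap A (RR I J)) ⊔ Ideal.span {mr I J 1 0 a (mem_10 ha)}).minimalPrimes,
      mr I J 0 1 b (mem_01 hb) ∈ P → ∀ c (hc : c ∈ J), mr I J 0 1 c (mem_01 hc) ∈ P)
    (P : Ideal (RR I J)) [P.IsPrime] (h1 : (IsLocalRing.maximalIdeal A).map (algebraMap A (RR I J)) ≤ P)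
    (h2 : mr I J 1 0 a (mem_10 ha) ∈ P) (h3 : mr I J 0 1 b (mem_01 hb) ∈ P) :
    (∀ c (hc : c ∈ I), mr I J 1 0 c (mem_10 hc) ∈ P) ∨ (∀ c (hc : c ∈ J), mr I J 0 1 c (mem_01 hc) ∈ P) := by
  by_contra hcon
  push Not at hcon
  obtain ⟨⟨c, hc, hcP⟩, ⟨d, hd, hdP⟩⟩ := hcon
  set M := (IsLocalRing.maximalIdeal A).map (algebraMap A (RR I J)) with hM
  set α := mr I J 1 0 a (mem_10 ha) with hα
  set β := mr I J 0 1 b (mem_01 hb) with hβ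
  obtain ⟨Q, hQ, hQP⟩ := Ideal.exists_minimalPrimes_le (I := M ⊔ Ideal.span {α} ⊔ Ideal.span {β}) (J := P) (by
    refine sup_le (sup_le h1 ?_) ?_
    · rw [Ideal.span_singleton_le_iff_mem]; exact h2
    · rw [Ideal.span_singleton_le_iff_mem]; exact h3)
  haveI := hQ.1.1
  have hcQ : mr I J 1 0 c (mem_10 hc) ∉ Q := fun h => hcP (hQP h)
  have hdQ : mr I J 0 1 d (mem_01 hd) ∉ Q := fun h => hdP (hQP h)
  have hMQ : M ≤ Q := (le_sup_left.trans le_sup_left).trans hQ.1.2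
  have hαQ : α ∈ Q := hQ.1.2 (Ideal.mem_sup_left (Ideal.mem_sup_right (Ideal.mem_span_singleton_self _)))
  have hβQ : β ∈ Q := hQ.1.2 (Ideal.mem_sup_right (Ideal.mem_span_singleton_self _))
  have hgr : ∀ i, starIdeal (del I J i) Q = Q := by
    intro i
    refine le_antisymm (starIdeal_le i Q) (hQ.2 ⟨inferInstance, ?_⟩ (starIdeal_le i Q))
    refine sup_le (sup_le ?_ ?_) ?_
    · rw [hM, Ideal.map_le_iff_le_comap]
      intro x hx
      rw [Ideal.mem_comap, ← mr00]
      refine mr_mem_star i Q _ _ _ _ ?_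
      rw [mr00]; exact hMQ (Ideal.mem_map_of_mem _ hx)
    · rw [Ideal.span_singleton_le_iff_mem]; exact mr_mem_star i Q _ _ _ _ hαQ
    · rw [Ideal.span_singleton_le_iff_mem]; exact mr_mem_star i Q _ _ _ _ hβQ
  obtain ⟨P1, hP1, hP1Q⟩ := Ideal.exists_minimalPrimes_le (I := M ⊔ Ideal.span {α}) (J := Q)
    (le_sup_left.trans hQ.1.2)
  haveI := hP1.1.1
  obtain ⟨P0, hP0, hP01⟩ := Ideal.exists_minimalPrimes_le (I := M) (J := P1) (le_sup_left.trans hP1.1.2)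
  haveI := hP0.1.1
  obtain ⟨x, hxm, hx0⟩ := exists_ne_zero_max hdim
  have l0 : ⊥ < P0 := by
    refine lt_of_le_of_mem bot_le (x := algebraMap A _ x) (hP0.1.2 (Ideal.mem_map_of_mem _ hxm)) ?_
    rw [Ideal.mem_bot]
    intro h
    have := congrArg (c00 I J) h
    rw [c00_algebraMap, map_zero] at this
    exact hx0 this
  have l1 : P0 < P1 := by
    refine lt_of_le_of_mem hP01 (x := α) (hP1.1.2 (Ideal.mem_sup_right (Ideal.mem_span_singleton_self _))) ?_
    intro h
    exact hcQ (hP1Q (hP01 (hga P0 hP0 h c hc)))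
  have l2 : P1 < Q := by
    refine lt_of_le_of_mem hP1Q (x := β) hβQ ?_
    intro h
    exact hdQ (hP1Q (hgb P1 hP1 h d hd))
  have l3 : Q < Q.comap (e0 I J) := by
    refine lt_of_le_of_mem ?_ (x := mr I J 1 0 c (mem_10 hc)) ?_ hcQ
    · intro f hf
      rw [← hgr 0, mem_starIdeal] at hf
      exact hf 0
    · rw [Ideal.mem_comap]
      convert Q.zero_mem
      refine RR_ext fun m n => ?_
      rw [cf_e0, mr_val, cf_mo]
      split_ifs <;> first | omega | simp
  have l4 : Q.comap (e0 I J) < NN I J := by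
    refine lt_of_le_of_mem ?_ (x := mr I J 0 1 d (mem_01 hd)) ?_ ?_
    · intro f hf
      rw [Ideal.mem_comap] at hf
      have := c00_of_star Q (hgr 0) (hgr 1) _ hf
      rw [cf_e0, if_pos rfl] at this
      rw [mem_NN]
      intro hu
      exact hQ.1.1.ne_top (Ideal.eq_top_of_isUnit_mem _ this (hu.map (algebraMap A (RR I J))))
    · rw [mem_NN, mr_val, cf_mo]; simp
    · rw [Ideal.mem_comap]
      have he : e0 I J (mr I J 0 1 d (mem_01 hd)) = mr I J 0 1 d (mem_01 hd) := by
        refine RR_ext fun m n => ?_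
        rw [cf_e0, mr_val, cf_mo]
        split_ifs <;> first | omega | simp
      rw [he]; exact hdQ
  have h5 : ((5 : ℕ) : ℕ∞) ≤ (NN I J).height :=
    height_succ 4 l4 (height_succ 3 l3 (height_succ 2 l2 (height_succ 1 l1 (height_succ 0 l0 (by simp)))))
  have h6 : ((NN I J).height : WithBot ℕ∞) ≤ 4 :=
    (Ideal.height_le_ringKrullDim_of_isPrime).trans (dim_RR_le hdim.le hI hJ)
  have h7 := (WithBot.coe_le_coe.mpr h5).trans h6
  exact absurd h7 (by decide)

/-- joint reduction -/
def R1P (I J : Ideal A) (a b : A) : Prop :=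
  ∃ n, I ^ (n+1) * J ^ (n+1) ≤ Ideal.span {a} * (I ^ n * J ^ (n+1)) ⊔ Ideal.span {b} * (I ^ (n+1) * J ^ n)

lemma cf_mul_mo10 (f : RR I J) (a : A) (ha : a ∈ I) (m n : ℕ) :
    cf (f * mr I J 1 0 a (mem_10 ha)).1 (m+1) n = a * cf f.1 m n := by
  rw [mul_comm]
  show cf (mo 1 0 a * f.1) (m+1) n = _
  rw [cf_mo_mul, if_pos (by omega)]; simp

lemma cf_mul_mo01 (f : RR I J) (a : A) (ha : a ∈ J) (m n : ℕ) :
    cf (f * mr I J 0 1 a (mem_01 ha)).1 m (n+1) = a * cf f.1 m n := by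
  rw [mul_comm]
  show cf (mo 0 1 a * f.1) m (n+1) = _
  rw [cf_mo_mul, if_pos (by omega)]; simp

lemma cf_mul_mem (K : Ideal A) (f g : RR I J) (hf : ∀ m n, cf f.1 m n ∈ K * (I ^ m * J ^ n)) (m n : ℕ) :
    cf (g * f).1 m n ∈ K * (I ^ m * J ^ n) := by
  show coeff (ee m n) (g.1 * f.1) ∈ _
  rw [coeff_mul]
  refine Ideal.sum_mem _ fun x hx => ?_
  rw [Finset.HasAntidiagonal.mem_antidiagonal] at hx
  have h1 := mem_RR.mp g.2 (x.1 0) (x.1 1)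
  have h2 := hf (x.2 0) (x.2 1)
  rw [cf, ee_eta] at h1 h2
  have e0 : x.1 0 + x.2 0 = m := by rw [← Finsupp.add_apply, hx, ee_zero]
  have e1 : x.1 1 + x.2 1 = n := by rw [← Finsupp.add_apply, hx, ee_one]
  have := Ideal.mul_mem_mul h1 h2
  rw [← e0, ← e1, pow_add, pow_add]
  convert this using 1
  ring

lemma cf_mem_of_mem_map (K : Ideal A) (f : RR I J) (hf : f ∈ K.map (algebraMap A (RR I J))) (m n : ℕ) :
    cf f.1 m n ∈ K * (I ^ m * J ^ n) := by
  revert m n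
  refine Submodule.span_induction (p := fun f _ => ∀ m n, cf f.1 m n ∈ K * (I ^ m * J ^ n)) ?_ ?_ ?_ ?_ hf
  · rintro _ ⟨x, hx, rfl⟩ m n
    rw [← mr00, mr_val, cf_mo]
    split_ifs with h
    · obtain ⟨rfl, rfl⟩ := h; simpa using hx
    · exact Ideal.zero_mem _
  · intro m n
    show cf 0 m n ∈ _
    rw [cf_zero]; exact Ideal.zero_mem _
  · intro x y _ _ hx hy m n
    show cf (x.1 + y.1) m n ∈ _
    rw [cf_add]; exact Ideal.add_mem _ (hx m n) (hy m n)
  · intro g f _ hf m n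
    exact cf_mul_mem K f g hf m n

lemma R1P_of_primes (a b : A) (ha : a ∈ I) (hb : b ∈ J)
    (H : ∀ P : Ideal (RR I J), P.IsPrime → (IsLocalRing.maximalIdeal A).map (algebraMap A (RR I J)) ≤ P →
      mr I J 1 0 a (mem_10 ha) ∈ P → mr I J 0 1 b (mem_01 hb) ∈ P → 
      (∀ c (hc : c ∈ I), mr I J 1 0 c (mem_10 hc) ∈ P) ∨ (∀ c (hc : c ∈ J), mr I J 0 1 c (mem_01 hc) ∈ P)) :
    R1P I J a b := by
  set M := (IsLocalRing.maximalIdeal A).map (algebraMap A (RR I J)) with hM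
  set α := mr I J 1 0 a (mem_10 ha) with hα
  set β := mr I J 0 1 b (mem_01 hb) with hβ
  let S : Set (RR I J) := {f | ∃ y, ∃ h : y ∈ I ^ 1 * J ^ 1, f = mr I J 1 1 y h}
  have hrad : Ideal.span S ≤ (M ⊔ Ideal.span {α} ⊔ Ideal.span {β}).radical := by
    rw [Ideal.span_le]
    rintro _ ⟨y, hy, rfl⟩
    rw [SetLike.mem_coe, Ideal.radical_eq_sInf, Ideal.mem_sInf]
    rintro P ⟨hP, hPp⟩
    rcases H P hPp ((le_sup_left.trans le_sup_left).trans hP)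
      (hP (Ideal.mem_sup_left (Ideal.mem_sup_right (Ideal.mem_span_singleton_self _))))
      (hP (Ideal.mem_sup_right (Ideal.mem_span_singleton_self _))) with h | h
    · exact mr_left_mem P h 0 1 y hy
    · exact mr_right_mem P h 1 0 y hy
  obtain ⟨n, hn⟩ := Ideal.exists_pow_le_of_le_radical_of_fg hrad (IsNoetherian.noetherian _)
  have hpow : ∀ n, ∀ y ∈ (I * J) ^ n, ∃ h : y ∈ I ^ n * J ^ n, mr I J n n y h ∈ Ideal.span S ^ n := by
    intro n
    induction n with
    | zero => intro y hy; exact ⟨by simp, by simp⟩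
    | succ n ih =>
      intro y hy
      rw [pow_succ] at hy
      refine Submodule.mul_induction_on hy ?_ ?_
      · intro x hx z hz
        obtain ⟨h1, h2⟩ := ih x hx
        have hz' : z ∈ I ^ 1 * J ^ 1 := by simpa using hz
        refine ⟨mul_mem_pow h1 hz', ?_⟩
        rw [← mr_mul h1 hz', pow_succ]
        exact Ideal.mul_mem_mul h2 (Ideal.subset_span ⟨z, hz', rfl⟩)
      · rintro x z ⟨h1, h2⟩ ⟨h3, h4⟩
        exact ⟨Ideal.add_mem _ h1 h3, by rw [mr_add h1 h3]; exact Ideal.add_mem _ h2 h4⟩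
  refine ⟨n, ?_⟩
  refine Submodule.le_of_le_smul_of_le_jacobson_bot (I := IsLocalRing.maximalIdeal A) (IsNoetherian.noetherian _)
    (IsLocalRing.maximalIdeal_le_jacobson _) ?_
  intro y hy
  obtain ⟨h1, h2⟩ := hpow (n+1) y (by rw [mul_pow]; exact hy)
  have h3 := hn (Ideal.pow_le_pow_right (Nat.le_succ n) h2)
  obtain ⟨f, hf, g, hg, hfg⟩ := Submodule.mem_sup.mp h3
  obtain ⟨f, hf, l, hl, hfl⟩ := Submodule.mem_sup.mp hf
  obtain ⟨g, rfl⟩ := Ideal.mem_span_singleton'.mp hg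
  obtain ⟨l, rfl⟩ := Ideal.mem_span_singleton'.mp hl
  have h4 := congrArg (fun f : RR I J => cf f.1 (n+1) (n+1)) (hfl ▸ hfg)
  have e : ∀ p q r : RR I J, cf (p + q + r).1 (n+1) (n+1) = cf p.1 (n+1) (n+1) + cf q.1 (n+1) (n+1) + cf r.1 (n+1) (n+1) := by
    intro p q r
    show cf (p.1 + q.1 + r.1) _ _ = _
    rw [cf_add, cf_add]
  simp only [e, hα, hβ, cf_mul_mo10, cf_mul_mo01, mr_val, cf_mo_self] at h4
  rw [← h4]
  refine Ideal.add_mem _ (Ideal.add_mem _ ?_ ?_) ?_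
  · exact Ideal.mem_sup_right (cf_mem_of_mem_map _ f hf _ _)
  · rw [cf_mul_mo10 _ _ ha]
    exact Ideal.mem_sup_left (Ideal.mem_sup_left (Ideal.mul_mem_mul (Ideal.mem_span_singleton_self a) (mem_RR.mp l.2 _ _)))
  · rw [cf_mul_mo01 _ _ hb]
    exact Ideal.mem_sup_left (Ideal.mem_sup_right (Ideal.mul_mem_mul (Ideal.mem_span_singleton_self b) (mem_RR.mp g.2 _ _)))

/-- coefficients landing in an ideal, first variable -/
noncomputable def W1 (P : Ideal (RR I J)) : Ideal A where
  carrier := {c | ∃ h : c ∈ I, mr I J 1 0 c (mem_10 h) ∈ P}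
  add_mem' := by
    rintro x y ⟨h1, h2⟩ ⟨h3, h4⟩
    exact ⟨I.add_mem h1 h3, by rw [mr_add (mem_10 h1) (mem_10 h3)]; exact P.add_mem h2 h4⟩
  zero_mem' := ⟨I.zero_mem, by convert P.zero_mem; exact RR_ext fun m n => by simp⟩
  smul_mem' := by
    rintro r x ⟨h1, h2⟩
    refine ⟨I.mul_mem_left r h1, ?_⟩
    convert P.mul_mem_left (algebraMap A _ r) h2
    rw [← mr00]
    apply Subtype.ext
    show mo _ _ _ = mo _ _ _ * mo _ _ _
    rw [mo_mul]; simp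

/-- coefficients landing in an ideal, second variable -/
noncomputable def W2 (P : Ideal (RR I J)) : Ideal A where
  carrier := {c | ∃ h : c ∈ J, mr I J 0 1 c (mem_01 h) ∈ P}
  add_mem' := by
    rintro x y ⟨h1, h2⟩ ⟨h3, h4⟩
    exact ⟨J.add_mem h1 h3, by rw [mr_add (mem_01 h1) (mem_01 h3)]; exact P.add_mem h2 h4⟩
  zero_mem' := ⟨J.zero_mem, by convert P.zero_mem; exact RR_ext fun m n => by simp⟩
  smul_mem' := by
    rintro r x ⟨h1, h2⟩
    refine ⟨J.mul_mem_left r h1, ?_⟩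
    convert P.mul_mem_left (algebraMap A _ r) h2
    rw [← mr00]
    apply Subtype.ext
    show mo _ _ _ = mo _ _ _ * mo _ _ _
    rw [mo_mul]; simp

lemma R1 (hdim : ringKrullDim A = 2) (hI : I ≠ ⊥) (hJ : J ≠ ⊥) :
    Gen I (fun a => Gen J (fun b => R1P I J a b)) := by
  set M := (IsLocalRing.maximalIdeal A).map (algebraMap A (RR I J)) with hM
  refine ⟨W1 '' {P | P ∈ M.minimalPrimes ∧ ¬ I ≤ W1 P}, ?_, ?_, ?_⟩
  · exact (Ideal.finite_minimalPrimes_of_isNoetherianRing _ M |>.subset fun P hP => hP.1).image _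
  · rintro _ ⟨P, hP, rfl⟩; exact hP.2
  intro a ha hga
  refine ⟨W2 '' {P | P ∈ (M ⊔ Ideal.span {mr I J 1 0 a (mem_10 ha)}).minimalPrimes ∧ ¬ J ≤ W2 P}, ?_, ?_, ?_⟩
  · exact (Ideal.finite_minimalPrimes_of_isNoetherianRing _ _ |>.subset fun P hP => hP.1).image _
  · rintro _ ⟨P, hP, rfl⟩; exact hP.2
  intro b hb hgb
  refine R1P_of_primes a b ha hb fun P hP h1 h2 h3 => ?_
  refine R1_prime hdim hI hJ a b ha hb ?_ ?_ P h1 h2 h3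
  · intro Q hQ h c hc
    by_contra hcon
    refine hga (W1 Q) ⟨Q, ⟨hQ, fun hle => ?_⟩, rfl⟩ ⟨ha, h⟩
    obtain ⟨_, h'⟩ := hle hc
    exact hcon h'
  · intro Q hQ h c hc
    by_contra hcon
    refine hgb (W2 Q) ⟨Q, ⟨hQ, fun hle => ?_⟩, rfl⟩ ⟨hb, h⟩
    obtain ⟨_, h'⟩ := hle hc
    exact hcon h'

end RR8


section RR9
universe u v
set_option linter.all false
open Polynomial

/-- determinant trick -/
lemma DT {A : Type u} [CommRing A] [IsDomain A] [IsIntegrallyClosed A] (L K : Ideal A) (hL : L ≠ ⊥) (hLfg : L.FG)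
    (hK : IdealIsIntegrallyClosed K) (x y : A) (hy : y ≠ 0)
    (h : ∀ l ∈ L, ∃ l' ∈ K * L, x * l = y * l') : ∃ z ∈ K, x = y * z := by
  classical
  have h' : ∀ l : L, ∃ l' : L, (l' : A) ∈ K * L ∧ x * l = y * l' := by
    intro l
    obtain ⟨l', h1, h2⟩ := h l l.2
    exact ⟨⟨l', Ideal.mul_le_right h1⟩, h1, h2⟩
  choose g hg1 hg2 using h'
  let φ : L →ₗ[A] L :=
    { toFun := g
      map_add' := fun a b => by
        apply Subtype.ext
        apply mul_left_cancel₀ hy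
        rw [← hg2]
        show x * (a + b : A) = y * (g a + g b : A)
        rw [mul_add, mul_add, hg2, hg2]
      map_smul' := fun r a => by
        apply Subtype.ext
        apply mul_left_cancel₀ hy
        rw [← hg2]
        show x * (r * a : A) = y * (r * g a : A)
        rw [mul_left_comm, hg2, mul_left_comm] }
  have hφ : ∀ l, x * l = y * φ l := hg2
  haveI : Module.Finite A L := Module.Finite.iff_fg.mpr hLfg
  obtain ⟨p, hp, -, hc, h0⟩ := LinearMap.exists_monic_and_natDegree_eq_and_coeff_mem_pow_and_aeval_eq_zero A φ K (by
    rintro _ ⟨l, rfl⟩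
    have h1 : ((φ l : L) : A) ∈ K * L := hg1 l
    have h2 : (K • (⊤ : Submodule A L)).map L.subtype = K * L := by
      rw [Submodule.map_smul'', Submodule.map_top, Submodule.range_subtype]; rfl
    rw [← h2] at h1
    obtain ⟨m, hm, hm2⟩ := h1
    have : m = φ l := Subtype.ext hm2
    rwa [this] at hm)
  let F := FractionRing A
  set z : F := algebraMap A F x / algebraMap A F y with hz
  have hyF : algebraMap A F y ≠ 0 := by simpa using hy
  have hzφ : ∀ l : L, algebraMap A F (φ l : A) = z * algebraMap A F l := by
    intro l
    rw [hz, div_mul_eq_mul_div, eq_div_iff hyF, ← map_mul, ← map_mul, hφ, mul_comm]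
  have hpz : ∀ (q : A[X]) (l : L), algebraMap A F ((aeval φ q l : L) : A) = aeval z q * algebraMap A F l := by
    intro q l
    induction q using Polynomial.induction_on' with
    | add p q hp hq => simp [hp, hq, add_mul]
    | monomial n a =>
      have : ∀ n (l : L), algebraMap A F (((φ ^ n) l : L) : A) = z ^ n * algebraMap A F l := by
        intro n
        induction n with
        | zero => intro l; simp
        | succ n ih => intro l; rw [pow_succ, Module.End.mul_apply, ih, hzφ, pow_succ, mul_assoc]
      rw [aeval_monomial, aeval_monomial]
      simp [this, mul_assoc]
  obtain ⟨l0, hl0, hl00⟩ := Submodule.exists_mem_ne_zero_of_ne_bot hL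
  have hz0 : aeval z p = 0 := by
    have := hpz p ⟨l0, hl0⟩
    rw [h0] at this
    simp at this
    rcases this with h | h
    · exact h
    · exact absurd h hl00
  have hintz : IsIntegral A z := ⟨p, hp, by rw [← aeval_def]; exact hz0⟩
  obtain ⟨w, hw⟩ := IsIntegrallyClosed.isIntegral_iff.mp hintz
  have hxy : x = y * w := by
    apply IsFractionRing.injective A F
    rw [map_mul, hw, hz, mul_div_cancel₀ _ hyF]
  refine ⟨w, hK w ?_, hxy⟩
  have hw0 : p.eval w = 0 := by
    apply IsFractionRing.injective A F
    rw [map_zero, ← hz0, ← hw, aeval_algebraMap_apply]; rfl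
  refine ⟨p.natDegree, ?_, fun i => p.coeff (p.natDegree - i), ?_, ?_⟩
  · rw [Nat.pos_iff_ne_zero]
    intro hd
    rw [hp.natDegree_eq_zero.mp hd] at hw0
    simp at hw0
  · intro i h1 h2
    have := hc (p.natDegree - i)
    rwa [Nat.sub_sub_self h2] at this
  · rw [eval_eq_sum_range, Finset.sum_range_succ, hp.coeff_natDegree, one_mul] at hw0
    rw [← hw0, add_comm]
    congr 1
    refine Finset.sum_bij' (fun i _ => p.natDegree - i) (fun i _ => p.natDegree - i) ?_ ?_ ?_ ?_ ?_ <;>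
      simp only [Finset.mem_Icc, Finset.mem_range] <;> intros <;> first | omega | trivial | rfl

lemma sup_pow_le {A : Type u} [CommRing A] (K X : Ideal A) (m : ℕ) :
    (K ⊔ X) ^ (m+1) ≤ K * (K ⊔ X) ^ m ⊔ X ^ (m+1) := by
  induction m with
  | zero => simp
  | succ m ih =>
    calc (K ⊔ X) ^ (m+2) = K * (K ⊔ X) ^ (m+1) ⊔ X * (K ⊔ X) ^ (m+1) := by rw [pow_succ' _ (m+1), Ideal.sup_mul]
      _ ≤ K * (K ⊔ X) ^ (m+1) ⊔ X * (K * (K ⊔ X) ^ m ⊔ X ^ (m+1)) := sup_le_sup_left (Ideal.mul_mono_right ih) _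
      _ ≤ _ := by
        rw [Ideal.mul_sup, ← pow_succ']
        refine sup_le le_sup_left (sup_le (le_sup_of_le_left ?_) le_sup_right)
        rw [mul_left_comm, pow_succ']
        exact Ideal.mul_mono_right (Ideal.mul_mono_left le_sup_right)

lemma exists_L_of_integral {A : Type u} [CommRing A] [IsDomain A] (K : Ideal A) (hK : K ≠ ⊥) (x : A)
    (hx : IsIntegralOverIdeal K x) : ∃ L : Ideal A, L ≠ ⊥ ∧ ∀ l ∈ L, x * l ∈ K * L := by
  obtain ⟨n, hn, c, hc, h0⟩ := hx
  obtain ⟨n, rfl⟩ : ∃ m, n = m + 1 := ⟨n - 1, by omega⟩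
  set X := Ideal.span {x} with hX
  have hxX : x ∈ K ⊔ X := Ideal.mem_sup_right (Ideal.mem_span_singleton_self x)
  refine ⟨(K ⊔ X) ^ n, ?_, ?_⟩
  · have : K ⊔ X ≠ ⊥ := fun h => hK (eq_bot_iff.mpr (le_sup_left.trans h.le))
    exact pow_ne_zero n this
  · intro l hl
    have h1 : x * l ∈ (K ⊔ X) ^ (n+1) := by
      rw [pow_succ']; exact Ideal.mul_mem_mul hxX hl
    have h2 : X ^ (n+1) ≤ K * (K ⊔ X) ^ n := by
      rw [hX, Ideal.span_singleton_pow, Ideal.span_singleton_le_iff_mem, eq_neg_of_add_eq_zero_left h0]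
      refine Ideal.neg_mem_iff _ |>.mpr (Ideal.sum_mem _ fun i hi => ?_)
      rw [Finset.mem_Icc] at hi
      have h3 := hc i hi.1 hi.2
      obtain ⟨j, rfl⟩ : ∃ j, i = j + 1 := ⟨i - 1, by omega⟩
      have h4 : c (j+1) * x ^ (n + 1 - (j+1)) ∈ K ^ (j+1) * (K ⊔ X) ^ (n - j) := by
        refine Ideal.mul_mem_mul h3 ?_
        rw [show n + 1 - (j+1) = n - j by omega]
        exact Ideal.pow_mem_pow hxX _
      have h5 : K ^ (j+1) * (K ⊔ X) ^ (n - j) ≤ K * (K ⊔ X) ^ n := by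
        rw [pow_succ', mul_assoc]
        refine Ideal.mul_mono_right ?_
        calc K ^ j * (K ⊔ X) ^ (n - j) ≤ (K ⊔ X) ^ j * (K ⊔ X) ^ (n-j) := Ideal.mul_mono_left (Ideal.pow_right_mono le_sup_left j)
          _ = (K ⊔ X) ^ n := by rw [← pow_add]; congr 1; omega
      exact h5 h4
    exact (sup_le le_rfl h2) (sup_pow_le K X n h1)

section T2
variable {A : Type u} [CommRing A] [IsDomain A] [IsNoetherianRing A] [IsLocalRing A] [IsIntegrallyClosed A]

lemma top_closed : IdealIsIntegrallyClosed (⊤ : Ideal A) := fun _ _ => trivial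

lemma not_pow_le_span (hdim : ringKrullDim A = 2) (t : A) (n : ℕ) : ¬ IsLocalRing.maximalIdeal A ^ n ≤ Ideal.span {t} ∨ IsUnit t := by
  by_contra hcon
  push Not at hcon
  obtain ⟨h, ht⟩ := hcon
  obtain ⟨p, hp, htp, hlt⟩ := exists_mid_prime hdim t ((IsLocalRing.mem_maximalIdeal t).mpr ht)
  have : IsLocalRing.maximalIdeal A ≤ p := by
    refine hp.le_of_pow_le (h.trans ?_)
    rw [Ideal.span_singleton_le_iff_mem]; exact htp
  exact absurd this (not_le_of_gt hlt)

lemma T2_aux (hdim : ringKrullDim A = 2) (u y : A) (hy : y ≠ 0)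
    (h : ∀ m ∈ IsLocalRing.maximalIdeal A, y ∣ m * u) : y ∣ u := by
  by_cases h1 : ∀ m ∈ IsLocalRing.maximalIdeal A, ∃ l' ∈ IsLocalRing.maximalIdeal A, m * u = y * l'
  · obtain ⟨x, hx, hx0⟩ := exists_ne_zero_max hdim
    obtain ⟨z, -, hz⟩ := DT (IsLocalRing.maximalIdeal A) ⊤ (fun hb => hx0 (by rw [hb] at hx; exact hx))
      (IsNoetherian.noetherian _) top_closed u y hy (fun l hl => by
        obtain ⟨l', h2, h3⟩ := h1 l hl
        exact ⟨l', by simpa using h2, by rw [mul_comm, h3]⟩)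
    exact ⟨z, hz⟩
  · push Not at h1
    obtain ⟨m0, hm0, hm⟩ := h1
    obtain ⟨c, hc⟩ := h m0 hm0
    have hcu : IsUnit c := by
      by_contra hcu
      exact hm c ((IsLocalRing.mem_maximalIdeal c).mpr hcu) hc
    by_cases hu : u = 0
    · rw [hu]; exact dvd_zero y
    exfalso
    rcases not_pow_le_span hdim m0 1 with h2 | h2
    · apply h2
      rw [pow_one]
      intro m hmm
      obtain ⟨d, hd⟩ := h m hmm
      rw [Ideal.mem_span_singleton]
      obtain ⟨c', hc'⟩ := hcu.exists_right_inv
      refine ⟨d * c', mul_right_cancel₀ hu ?_⟩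
      calc m * u = y * d := hd
        _ = y * d * (c * c') := by rw [hc', mul_one]
        _ = (y * c) * (d * c') := by ring
        _ = m0 * u * (d * c') := by rw [hc]
        _ = m0 * (d * c') * u := by ring
    · exact hm0 h2

lemma T2 (hdim : ringKrullDim A = 2) (u y : A) (hy : y ≠ 0) (n : ℕ)
    (h : ∀ m ∈ IsLocalRing.maximalIdeal A ^ n, y ∣ m * u) : y ∣ u := by
  induction n generalizing u with
  | zero => simpa using h 1 (by simp)
  | succ n ih =>
    refine T2_aux hdim u y hy fun m hm => ih (m * u) fun m' hm' => ?_
    have := h (m' * m) (by rw [pow_succ]; exact Ideal.mul_mem_mul hm' hm)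
    rwa [mul_assoc] at this

lemma RP (hdim : ringKrullDim A = 2) (x y : A) (n : ℕ) (h : IsLocalRing.maximalIdeal A ^ n ≤ Ideal.span {x, y})
    (u v : A) (huv : x * u = y * v) : ∃ w, u = y * w ∧ v = x * w := by
  by_cases hy : y = 0
  · subst hy
    have h' : IsLocalRing.maximalIdeal A ^ n ≤ Ideal.span {x} := by
      refine h.trans (Ideal.span_le.mpr ?_)
      rintro _ (rfl | rfl)
      · exact Ideal.mem_span_singleton_self _
      · exact Ideal.zero_mem _
    rcases not_pow_le_span hdim x n with h2 | h2
    · exact absurd h' h2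
    · obtain ⟨x', hx'⟩ := h2.exists_right_inv
      refine ⟨x' * v, ?_, by rw [← mul_assoc, hx', one_mul]⟩
      rw [zero_mul] at huv ⊢
      exact (mul_eq_zero.mp huv).resolve_left h2.ne_zero
  · obtain ⟨w, hw⟩ := T2 hdim u y hy n (fun m hm => by
      obtain ⟨a, b, hab⟩ := Ideal.mem_span_pair.mp (h hm)
      rw [← hab]
      refine ⟨a * v + b * u, ?_⟩
      linear_combination a * huv)
    refine ⟨w, hw, mul_left_cancel₀ hy ?_⟩
    rw [← huv, hw]; ring
end T2

end RR9

section
universe u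
set_option linter.all false
open MvPolynomial

variable {A : Type u} [CommRing A] {I J : Ideal A}

attribute [local instance] Polynomial.algebra

lemma integral_mo (s : MvPolynomial (Fin 2) A) (h : IsIntegral (RR I J) s) (m n : ℕ) :
    IsIntegral (RR I J) (mo m n (cf s m n)) := by
  have key : ∀ (i : Fin 2) (s : MvPolynomial (Fin 2) A) (h : IsIntegral (RR I J) s) (m : ℕ),
      IsIntegral (RR I J) ((Del i s).coeff m) := by
    intro i s h m
    have h1 : IsIntegral (Polynomial (RR I J)) (Del i s) := by
      obtain ⟨p, hp, h0⟩ := h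
      refine ⟨p.map (del I J i), hp.map _, ?_⟩
      rw [Polynomial.eval₂_map]
      have e : (algebraMap (Polynomial (RR I J)) (Polynomial (MvPolynomial (Fin 2) A))).comp (del I J i) =
          (Del i).comp (algebraMap (RR I J) (MvPolynomial (Fin 2) A)) := by
        ext1 f
        exact del_map i f
      rw [e, ← Polynomial.hom_eval₂, h0, map_zero]
    exact Polynomial.isIntegral_iff_isIntegral_coeff.mp h1 m
  have := key 1 _ (key 0 s h m) n
  have e : (Del 1 ((Del 0 s).coeff m)).coeff n = mo m n (cf s m n) := by
    apply cf_ext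
    intro a b
    rw [cf, coeff_Del, coeff_Del, cf_mo]
    simp only [ee_zero, ee_one]
    by_cases h1 : a = m <;> by_cases h2 : b = n <;> simp [h1, h2, cf, eq_comm]
    all_goals (intros; simp_all)
  rwa [e] at this

lemma integral_of_mo [Nontrivial A] (m n : ℕ) (x : A) (h : IsIntegral (RR I J) (mo m n x)) :
    IsIntegralOverIdeal (I^m * J^n) x := by
  obtain ⟨p, hp, h0⟩ := h
  have hN := congrArg (fun f => cf f (p.natDegree * m) (p.natDegree * n)) h0
  rw [Polynomial.eval₂_eq_sum_range] at hN
  have hs : ∀ (t : Finset ℕ) (g : ℕ → MvPolynomial (Fin 2) A) a b, cf (∑ i ∈ t, g i) a b = ∑ i ∈ t, cf (g i) a b := by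
    intro t g a b
    simp [cf, coeff_sum]
  simp only [hs, cf_zero] at hN
  have hterm : ∀ i ∈ Finset.range (p.natDegree + 1), cf ((algebraMap (RR I J) (MvPolynomial (Fin 2) A)) (p.coeff i) * mo m n x ^ i) (p.natDegree * m) (p.natDegree * n) =
      cf (p.coeff i).1 ((p.natDegree - i) * m) ((p.natDegree - i) * n) * x ^ i := by
    intro i hi
    have hi' : i ≤ p.natDegree := by simpa [Nat.lt_succ_iff] using hi
    rw [mo_pow, mul_comm, cf_mo_mul, if_pos ⟨Nat.mul_le_mul_right _ hi', Nat.mul_le_mul_right _ hi'⟩, Nat.sub_mul, Nat.sub_mul, mul_comm]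
    rfl
  rw [Finset.sum_congr rfl hterm, Finset.sum_range_succ, hp.coeff_natDegree] at hN
  refine ⟨p.natDegree, ?_, fun i => cf (p.coeff (p.natDegree - i)).1 (i * m) (i*n), ?_, ?_⟩
  · rw [Nat.pos_iff_ne_zero]
    intro hd
    rw [hp.natDegree_eq_zero.mp hd] at h0
    simp at h0
  · intro i h1 h2
    have := mem_RR.mp (p.coeff (p.natDegree - i)).2 (i * m) (i * n)
    rw [mul_pow, ← pow_mul, ← pow_mul, mul_comm m, mul_comm n]; exact this
  · have h1 : cf (1 : RR I J).1 ((p.natDegree - p.natDegree) * m) ((p.natDegree - p.natDegree) * n) = 1 := by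
      simp only [Nat.sub_self, zero_mul]
      show cf (1 : MvPolynomial (Fin 2) A) 0 0 = 1
      have := cf_mo_self 0 0 (1:A)
      rwa [mo_zz, map_one] at this
    rw [h1, one_mul] at hN
    rw [← hN, add_comm]
    congr 1
    refine Finset.sum_bij' (fun i _ => p.natDegree - i) (fun i _ => p.natDegree - i) ?_ ?_ ?_ ?_ ?_ <;>
      simp only [Finset.mem_Icc, Finset.mem_range] <;> intros <;> try omega
    rename_i i hi
    rw [Nat.sub_sub_self hi.2]

lemma integral_mo_of (m n : ℕ) (x : A) (h : IsIntegralOverIdeal (I^m * J^n) x) : IsIntegral (RR I J) (mo m n x) := by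
  obtain ⟨N, hN, c, hc, h0⟩ := h
  have hc' : ∀ i, (if 1 ≤ i ∧ i ≤ N then c i else 0) ∈ I^(i*m) * J^(i*n) := by
    intro i
    split_ifs with h
    · have := hc i h.1 h.2
      rwa [mul_pow, ← pow_mul, ← pow_mul, mul_comm m, mul_comm n] at this
    · exact zero_mem _
  refine ⟨Polynomial.X ^ N + ∑ i ∈ Finset.Icc 1 N, Polynomial.C (mr I J (i*m) (i*n) _ (hc' i)) * Polynomial.X ^ (N - i), ?_, ?_⟩
  · refine Polynomial.monic_X_pow_add ?_
    refine lt_of_le_of_lt (Polynomial.degree_sum_le _ _) ?_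
    rw [Finset.sup_lt_iff (by exact_mod_cast WithBot.bot_lt_coe N)]
    intro i hi
    rw [Finset.mem_Icc] at hi
    refine lt_of_le_of_lt (Polynomial.degree_C_mul_X_pow_le _ _) ?_
    exact_mod_cast (by omega : N - i < N)
  · rw [Polynomial.eval₂_add, Polynomial.eval₂_finset_sum, Polynomial.eval₂_pow, Polynomial.eval₂_X, mo_pow]
    have : ∀ i ∈ Finset.Icc 1 N, Polynomial.eval₂ (algebraMap (RR I J) (MvPolynomial (Fin 2) A)) (mo m n x) (Polynomial.C (mr I J (i*m) (i*n) _ (hc' i)) * Polynomial.X ^ (N - i)) = mo (N*m) (N*n) (c i * x ^ (N-i)) := by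
      intro i hi
      rw [Finset.mem_Icc] at hi
      rw [Polynomial.eval₂_mul, Polynomial.eval₂_pow, Polynomial.eval₂_X, Polynomial.eval₂_C, mo_pow]
      show mo _ _ _ * _ = _
      rw [mo_mul, if_pos hi, ← add_mul, ← add_mul, Nat.add_sub_cancel' hi.2]
    rw [Finset.sum_congr rfl this]
    have hs : ∑ i ∈ Finset.Icc 1 N, mo (N*m) (N*n) (c i * x ^ (N-i)) = mo (N*m) (N*n) (∑ i ∈ Finset.Icc 1 N, c i * x ^ (N-i)) := by
      simp only [mo, map_sum]
    rw [hs, ← mo_add, h0, mo_zero]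

lemma mv_normal [IsDomain A] [IsIntegrallyClosed A] : IsIntegrallyClosed (MvPolynomial (Fin 2) A) := by
  have h0 : IsIntegrallyClosed (MvPolynomial (Fin 0) A) :=
    IsIntegrallyClosed.of_equiv (MvPolynomial.isEmptyAlgEquiv A (Fin 0)).symm.toRingEquiv
  have h1 : IsIntegrallyClosed (MvPolynomial (Fin 1) A) :=
    IsIntegrallyClosed.of_equiv (MvPolynomial.finSuccEquiv A 0).symm.toRingEquiv
  exact IsIntegrallyClosed.of_equiv (MvPolynomial.finSuccEquiv A 1).symm.toRingEquiv

variable [IsDomain A]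

lemma am_apply (r : RR I J) : algebraMap (RR I J) (FractionRing (MvPolynomial (Fin 2) A)) r =
    algebraMap (MvPolynomial (Fin 2) A) (FractionRing (MvPolynomial (Fin 2) A)) r.1 := rfl

/-- the canonical map of fraction fields -/
noncomputable def fracLift (I J : Ideal A) : FractionRing (RR I J) →ₐ[RR I J] FractionRing (MvPolynomial (Fin 2) A) :=
  { IsFractionRing.lift (A := RR I J) (K := FractionRing (RR I J)) (g := (algebraMap (RR I J) (FractionRing (MvPolynomial (Fin 2) A)))) (by
      intro a b hab
      rw [am_apply, am_apply] at hab
      exact Subtype.ext (IsFractionRing.injective _ _ hab)) with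
    commutes' := fun r => IsFractionRing.lift_algebraMap _ r }

lemma RR_normal_of [IsIntegrallyClosed A] (h : ∀ m n, IdealIsIntegrallyClosed (I^m * J^n)) : IsIntegrallyClosed (RR I J) := by
  have := mv_normal (A := A)
  rw [isIntegrallyClosed_iff (FractionRing (RR I J))]
  intro x hx
  have hy : IsIntegral (RR I J) (fracLift I J x) := hx.map _
  have hy2 : IsIntegral (MvPolynomial (Fin 2) A) (fracLift I J x) := hy.tower_top
  obtain ⟨s, hs⟩ := IsIntegrallyClosed.isIntegral_iff.mp hy2
  have hs2 : IsIntegral (RR I J) s := by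
    rw [← hs] at hy
    exact (isIntegral_algebraMap_iff (IsFractionRing.injective _ _)).mp hy
  have hs3 : s ∈ RR I J := by
    rw [mem_RR]
    intro m n
    exact h m n _ (integral_of_mo m n _ (integral_mo s hs2 m n))
  refine ⟨⟨s, hs3⟩, ?_⟩
  apply (fracLift I J).toRingHom.injective
  show fracLift I J _ = fracLift I J x
  rw [AlgHom.commutes, ← hs]
  rfl

lemma closed_of_RR_normal [IsIntegrallyClosed (RR I J)] (hI : I ≠ ⊥) (hJ : J ≠ ⊥) (m n : ℕ) : IdealIsIntegrallyClosed (I^m * J^n) := by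
  intro x hx
  obtain ⟨c, hc, hc0⟩ := Submodule.exists_mem_ne_zero_of_ne_bot hI
  obtain ⟨e, he, he0⟩ := Submodule.exists_mem_ne_zero_of_ne_bot hJ
  set d := c^m * e^n with hd
  have hdm : d ∈ I^m * J^n := Ideal.mul_mem_mul (Ideal.pow_mem_pow hc _) (Ideal.pow_mem_pow he _)
  have hd0 : d ≠ 0 := mul_ne_zero (pow_ne_zero _ hc0) (pow_ne_zero _ he0)
  have hw := integral_mo_of (I := I) (J := J) m n x hx
  set D := mr I J 0 0 d (mem_00 d) with hD
  set E := mr I J m n (d*x) (Ideal.mul_mem_right _ _ hdm) with hE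
  have hDE : mo 0 0 d * mo m n x = mo m n (d*x) := by rw [mo_mul]; simp
  have hD0 : D ≠ 0 := by
    intro h
    have := congrArg (fun f : RR I J => cf f.1 0 0) h
    simp [hD, cf] at this
    exact hd0 (by simpa [mo, ee_zero_zero] using this)
  set y : FractionRing (RR I J) := algebraMap _ _ E / algebraMap _ _ D with hy
  have hD0' : fracLift I J (algebraMap _ _ D) ≠ 0 := by
    rw [← map_zero (fracLift I J)]
    intro h
    have h2 := (fracLift I J).toRingHom.injective h
    exact hD0 (IsFractionRing.injective (RR I J) (FractionRing (RR I J)) (h2.trans (map_zero _).symm))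
  have hyw : fracLift I J y = algebraMap (MvPolynomial (Fin 2) A) _ (mo m n x) := by
    rw [hy, map_div₀, div_eq_iff hD0', AlgHom.commutes (fracLift I J) E, AlgHom.commutes (fracLift I J) D, mul_comm]
    rw [am_apply, am_apply, ← map_mul]
    exact congrArg _ hDE.symm
  have hyi : IsIntegral (RR I J) y := by
    rw [← isIntegral_algHom_iff (fracLift I J) (fracLift I J).toRingHom.injective, hyw]
    exact hw.algebraMap
  obtain ⟨r, hr⟩ := IsIntegrallyClosed.isIntegral_iff.mp hyi
  have hr2 : r.1 = mo m n x := by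
    apply IsFractionRing.injective (MvPolynomial (Fin 2) A) (FractionRing (MvPolynomial (Fin 2) A))
    rw [← hyw, ← hr, AlgHom.commutes]
    rfl
  exact mo_mem_RR.mp (hr2 ▸ r.2)

end

section
universe u
set_option linter.all false
open RingTheory.Sequence

lemma isWeaklyRegular4 {R : Type u} [CommRing R] (x y z w : R)
    (h1 : ∀ g, x * g = 0 → g = 0)
    (h2 : ∀ g, y * g ∈ Ideal.span {x} → g ∈ Ideal.span {x})
    (h3 : ∀ g, z * g ∈ Ideal.span {x, y} → g ∈ Ideal.span {x, y})
    (h4 : ∀ g, w * g ∈ Ideal.span {x, y, z} → g ∈ Ideal.span {x, y, z}) :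
    IsWeaklyRegular R [x, y, z, w] := by
  constructor
  intro i hi
  rw [isSMulRegular_quotient_iff_mem_of_smul_mem]
  have e : ∀ (l : List R) (K : Ideal R), Ideal.ofList l = K → (Ideal.ofList l • ⊤ : Submodule R R) = K := by
    rintro l K rfl
    simp [smul_eq_mul]
  simp only [List.length_cons, List.length_nil, zero_add] at hi
  have hi' : i = 0 ∨ i = 1 ∨ i = 2 ∨ i = 3 := by omega
  rcases hi' with rfl | rfl | rfl | rfl
  · rw [e _ ⊥ (by simp)]
    intro g hg
    rw [Ideal.mem_bot] at hg ⊢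
    exact h1 g hg
  · rw [e _ (Ideal.span {x}) (by simp)]
    exact h2
  · rw [e _ (Ideal.span {x, y}) (by simp [Ideal.span_insert])]
    exact h3
  · rw [e _ (Ideal.span {x, y, z}) (by simp [Ideal.span_insert])]
    exact h4

variable {A : Type u} [CommRing A] [IsDomain A] [IsNoetherianRing A] [IsLocalRing A]

lemma minimal_ne_max (hdim : ringKrullDim A = 2) (c : A) (p : Ideal A) (hp : p ∈ (Ideal.span {c}).minimalPrimes) :
    ¬ IsLocalRing.maximalIdeal A ≤ p := by
  intro h
  have hpp : p.IsPrime := hp.1.1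
  have he : p = IsLocalRing.maximalIdeal A := le_antisymm (IsLocalRing.le_maximalIdeal hpp.ne_top) h
  have h1 := Ideal.height_le_one_of_isPrincipal_of_mem_minimalPrimes (Ideal.span {c}) p hp
  have h2 := IsLocalRing.maximalIdeal_height_eq_ringKrullDim (R := A)
  rw [← he, hdim] at h2
  have h3 : p.height = 2 := WithBot.coe_injective h2
  rw [h3] at h1
  exact absurd h1 (by decide)

lemma pow_le_of_avoid (c γ : A) (h : ∀ p ∈ (Ideal.span {c}).minimalPrimes, γ ∉ p)
    (hh : ∀ p : Ideal A, p.IsPrime → c ∈ p → γ ∈ p → p = IsLocalRing.maximalIdeal A) :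
    ∃ N, IsLocalRing.maximalIdeal A ^ N ≤ Ideal.span {c, γ} := by
  refine Ideal.exists_pow_le_of_le_radical_of_fg ?_ (IsNoetherian.noetherian _)
  rw [Ideal.radical_eq_sInf]
  refine le_sInf ?_
  rintro p ⟨hp, hpp⟩
  rw [Ideal.span_le] at hp
  rw [hh p hpp (hp (by simp)) (hp (by simp))]

lemma avoid_pow (hdim : ringKrullDim A = 2) (c γ : A) (h : ∀ p ∈ (Ideal.span {c}).minimalPrimes, γ ∉ p) (hc : c ≠ 0) :
    ∃ N, IsLocalRing.maximalIdeal A ^ N ≤ Ideal.span {c, γ} := by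
  refine pow_le_of_avoid c γ h ?_
  intro p hp hcp hγ
  by_contra hne
  obtain ⟨q, hq, hqp⟩ := Ideal.exists_minimalPrimes_le (I := Ideal.span {c}) (J := p) (by rw [Ideal.span_le]; simpa using hcp)
  have hqq : q.IsPrime := hq.1.1
  have hlt : q < p := lt_of_le_of_ne hqp (by rintro rfl; exact h q hq hγ)
  have hlt2 : p < IsLocalRing.maximalIdeal A := lt_of_le_of_ne (IsLocalRing.le_maximalIdeal hp.ne_top) hne
  have hlt0 : (⊥ : Ideal A) < q := by
    rw [bot_lt_iff_ne_bot]
    rintro rfl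
    have := hq.1.2 (show c ∈ Ideal.span {c} from Ideal.mem_span_singleton_self c)
    exact hc (by simpa using this)
  have h1 := Ideal.height_add_one_le_of_lt_of_isPrime hlt0
  have h2 := Ideal.height_add_one_le_of_lt_of_isPrime hlt
  have h3 := Ideal.height_add_one_le_of_lt_of_isPrime hlt2
  have h4 := IsLocalRing.maximalIdeal_height_eq_ringKrullDim (R := A)
  rw [hdim] at h4
  have h5 : (IsLocalRing.maximalIdeal A).height = 2 := WithBot.coe_injective h4
  rw [h5] at h3
  have h6 : (1 : ℕ∞) ≤ q.height := le_trans (by simp) h1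
  have h7 : (2 : ℕ∞) ≤ p.height := le_trans (by exact_mod_cast add_le_add_left h6 1) h2
  have h8 : (3 : ℕ∞) ≤ 2 := le_trans (by exact_mod_cast add_le_add_left h7 1) h3
  exact absurd h8 (by decide)

lemma exists_avoid (hdim : ringKrullDim A = 2) (c d : A) (hc : c ≠ 0) (hd : d ≠ 0) :
    ∃ γ ∈ IsLocalRing.maximalIdeal A, γ ≠ 0 ∧ ∃ N, IsLocalRing.maximalIdeal A ^ N ≤ Ideal.span {c, γ} ∧
      IsLocalRing.maximalIdeal A ^ N ≤ Ideal.span {d, γ} := by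
  set S : Set (Ideal A) := (Ideal.span {c}).minimalPrimes ∪ ((Ideal.span {d}).minimalPrimes ∪ (Ideal.span {0}).minimalPrimes) with hS
  have hfin : S.Finite := (Ideal.finite_minimalPrimes_of_isNoetherianRing _ _).union
    ((Ideal.finite_minimalPrimes_of_isNoetherianRing _ _).union (Ideal.finite_minimalPrimes_of_isNoetherianRing _ _))
  have hnot : ¬ ((IsLocalRing.maximalIdeal A : Set A) ⊆ ⋃ p ∈ S, (p : Set A)) := by
    have hpr : ∀ p ∈ S, p.IsPrime := by
      rintro p (hp | hp | hp) <;> exact hp.1.1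
    rw [Ideal.subset_union_prime_finite hfin ⊥ ⊥ (fun p hp _ _ => hpr p hp)]
    rintro ⟨p, hp, hle⟩
    rcases hp with hp | hp | hp <;> exact minimal_ne_max hdim _ p hp hle
  rw [Set.not_subset] at hnot
  obtain ⟨γ, hγ, hγ2⟩ := hnot
  simp only [Set.mem_iUnion, not_exists] at hγ2
  obtain ⟨N1, h1⟩ := avoid_pow hdim c γ (fun p hp => hγ2 p (Or.inl hp)) hc
  obtain ⟨N2, h2⟩ := avoid_pow hdim d γ (fun p hp => hγ2 p (Or.inr (Or.inl hp))) hd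
  refine ⟨γ, hγ, ?_, max N1 N2, (Ideal.pow_le_pow_right (le_max_left _ _)).trans h1, (Ideal.pow_le_pow_right (le_max_right _ _)).trans h2⟩
  rintro rfl
  obtain ⟨p, hp, _⟩ := Ideal.exists_minimalPrimes_le (I := Ideal.span {(0:A)}) (J := IsLocalRing.maximalIdeal A) (by simp)
  exact hγ2 p (Or.inr (Or.inr hp)) (Submodule.zero_mem _)

variable [IsIntegrallyClosed A]

lemma pow_red (J : Ideal A) (b b' : A) (h : J^2 ≤ Ideal.span {b, b'} * J) (n : ℕ) :
    J^(n+2) ≤ Ideal.span {b} * J^(n+1) ⊔ Ideal.span {b'} * J^(n+1) := by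
  rw [← Ideal.sup_mul, ← Ideal.span_insert, pow_add, pow_succ J n, mul_comm (J^n) (J^2), mul_comm (J^n) J, ← mul_assoc]
  exact Ideal.mul_mono_left h

lemma pow_red' (J : Ideal A) (b b' : A) (hb' : b' ∈ J) (h : J^2 ≤ Ideal.span {b, b'} * J) (n : ℕ) :
    J^(n+1) ≤ Ideal.span {b} * J^n ⊔ Ideal.span {b'^n} * J := by
  induction n with
  | zero => simp
  | succ n ih =>
    refine (pow_red J b b' h n).trans (sup_le le_sup_left ?_)
    refine (Ideal.mul_mono_right ih).trans ?_
    rw [Ideal.mul_sup]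
    refine sup_le ?_ ?_
    · refine le_trans ?_ le_sup_left
      rw [← mul_assoc, mul_comm (Ideal.span {b'}), mul_assoc, pow_succ']
      exact Ideal.mul_mono_right (Ideal.mul_mono_left ((Ideal.span_singleton_le_iff_mem _).mpr hb'))
    · refine le_trans (le_of_eq ?_) le_sup_right
      rw [← mul_assoc, Ideal.span_singleton_mul_span_singleton, pow_succ']

/-- property (ii) -/
lemma div_memJ (hdim : ringKrullDim A = 2) (J : Ideal A) (b b' : A) (hb' : b' ∈ J) (h : J^2 ≤ Ideal.span {b, b'} * J)
    (hJ : ∃ N, IsLocalRing.maximalIdeal A ^ N ≤ Ideal.span {b, b'}) (hb : b ≠ 0) (n : ℕ) (x : A) (hx : b * x ∈ J^(n+1)) :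
    x ∈ J^n := by
  rcases n with _ | n
  · simp
  obtain ⟨N, hN⟩ := hJ
  have h1 := pow_red' J b b' hb' h (n+1) hx
  obtain ⟨s', hs', t', ht', hst⟩ := Submodule.mem_sup.mp h1
  obtain ⟨s, hs, rfl⟩ := Ideal.mem_span_singleton_mul.mp hs'
  obtain ⟨t, ht, rfl⟩ := Ideal.mem_span_singleton_mul.mp ht'
  have hM : IsLocalRing.maximalIdeal A ^ (N * (n+1)) ≤ Ideal.span {b, b'^(n+1)} := by
    rw [pow_mul]
    refine (Ideal.pow_right_mono hN (n+1)).trans ?_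
    rw [Ideal.span_insert]
    refine (sup_pow_le _ _ n).trans ?_
    rw [Ideal.span_insert b, Ideal.span_singleton_pow]
    exact sup_le_sup_right Ideal.mul_le_left _
  obtain ⟨w, hw1, hw2⟩ := RP hdim b (b'^(n+1)) _ hM (x - s) t (by linear_combination -hst)
  have : x = s + b'^(n+1) * w := by linear_combination hw1
  rw [this]
  exact Ideal.add_mem _ hs (Ideal.mul_mem_right _ _ (Ideal.pow_mem_pow hb' _))

lemma seqL (hdim : ringKrullDim A = 2) (J : Ideal A) (b b' β γ : A) (hbJ : b ∈ J) (hb' : b' ∈ J) (h : J^2 ≤ Ideal.span {b, b'} * J)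
    (hJ : ∃ N, IsLocalRing.maximalIdeal A ^ N ≤ Ideal.span {b, b'}) (hb : b ≠ 0)
    (g : ℕ → A) (hg : ∀ n, g n ∈ J^n) (hfin : ∃ N, ∀ n ≥ N, g n = 0)
    (hrec : ∀ n, b' * g n - β * g (n+1) ∈ Ideal.span {b} * J^n ⊔ Ideal.span {γ} * J^(n+1)) (n : ℕ) :
    g (n+1) ∈ Ideal.span {b} * J^n ⊔ Ideal.span {γ} * J^(n+1) := by
  obtain ⟨N, hN⟩ := hfin
  have key : ∀ k n, n + k = N → g (n+1) ∈ Ideal.span {b} * J^n ⊔ Ideal.span {γ} * J^(n+1) := by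
    intro k
    induction k with
    | zero => intro n hn; rw [hN (n+1) (by omega)]; exact Ideal.zero_mem _
    | succ k ih =>
      intro n hn
      have h1 := ih (n+1) (by omega)
      have h2 := Ideal.add_mem _ (hrec (n+1)) (Ideal.mul_mem_left _ β h1)
      rw [sub_add_cancel] at h2
      obtain ⟨s', hs', t', ht', hst⟩ := Submodule.mem_sup.mp h2
      obtain ⟨s, hs, rfl⟩ := Ideal.mem_span_singleton_mul.mp hs'
      obtain ⟨t, ht, rfl⟩ := Ideal.mem_span_singleton_mul.mp ht'
      have h3 := pow_red J b b' h n ht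
      obtain ⟨p', hp', q', hq', hpq⟩ := Submodule.mem_sup.mp h3
      obtain ⟨p, hp, rfl⟩ := Ideal.mem_span_singleton_mul.mp hp'
      obtain ⟨q, hq, rfl⟩ := Ideal.mem_span_singleton_mul.mp hq'
      obtain ⟨M, hM⟩ := hJ
      obtain ⟨w, hw1, hw2⟩ := RP hdim b b' M hM (s + γ * p) (g (n+1) - γ * q) (by rw [← hpq] at hst; linear_combination hst)
      have hbw : b * w ∈ J^(n+1) := by
        rw [← hw2]
        exact Ideal.sub_mem _ (hg _) (Ideal.mul_mem_left _ _ hq)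
      have hw := div_memJ hdim J b b' hb' h ⟨M, hM⟩ hb n w hbw
      have : g (n+1) = b * w + γ * q := by linear_combination hw2
      rw [this]
      exact Ideal.add_mem _ (Ideal.mem_sup_left (Ideal.mul_mem_mul (Ideal.mem_span_singleton_self b) hw))
        (Ideal.mem_sup_right (Ideal.mul_mem_mul (Ideal.mem_span_singleton_self γ) hq))
  rcases le_or_gt N n with hn | hn
  · rw [hN (n+1) (by omega)]; exact Ideal.zero_mem _
  · exact key (N - n) n (by omega)

end

section
universe u
set_option linter.all false
open RingTheory.Sequence MvPolynomial

variable {A : Type u} [CommRing A] {I J : Ideal A}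

lemma mr_mem_of (Q : Ideal (RR I J)) {i j : ℕ} {c : A} (hc : c ∈ I^i * J^j) (hQ : mr I J i j c hc ∈ Q)
    {m n p q : ℕ} (hp : p = i + m) (hq : q = j + n) {x : A} (hx : x ∈ Ideal.span {c} * (I^m * J^n)) :
    ∃ h : x ∈ I^p * J^q, mr I J p q x h ∈ Q := by
  subst hp hq
  obtain ⟨z, hz, rfl⟩ := Ideal.mem_span_singleton_mul.mp hx
  refine ⟨mul_mem_pow hc hz, ?_⟩
  rw [← mr_mul hc hz]
  exact Ideal.mul_mem_right _ _ hQ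

lemma mr_mem_sup (Q : Ideal (RR I J)) {p q : ℕ} {K L : Ideal A}
    (hK : ∀ x ∈ K, ∃ h : x ∈ I^p * J^q, mr I J p q x h ∈ Q) (hL : ∀ x ∈ L, ∃ h : x ∈ I^p * J^q, mr I J p q x h ∈ Q)
    (x : A) (hx : x ∈ K ⊔ L) : ∃ h : x ∈ I^p * J^q, mr I J p q x h ∈ Q := by
  obtain ⟨y, hy, z, hz, rfl⟩ := Submodule.mem_sup.mp hx
  obtain ⟨h1, h1'⟩ := hK y hy
  obtain ⟨h2, h2'⟩ := hL z hz
  refine ⟨Ideal.add_mem _ h1 h2, ?_⟩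
  rw [mr_add h1 h2]
  exact Ideal.add_mem _ h1' h2'

lemma IJ_pow (a b : A) (hIJ : I * J ≤ Ideal.span {a} * J ⊔ Ideal.span {b} * I) (m n : ℕ) :
    I^(m+1) * J^(n+1) ≤ Ideal.span {a} * (I^m * J^(n+1)) ⊔ Ideal.span {b} * (I^(m+1) * J^n) := by
  have := Ideal.mul_mono_left (K := I^m * J^n) hIJ
  rw [Ideal.sup_mul] at this
  calc I^(m+1) * J^(n+1) = I * J * (I^m*J^n) := by ring
    _ ≤ _ := this
    _ = _ := by congr 1 <;> ring

lemma cfv_add (f g : RR I J) (m n) : cf (f+g).1 m n = cf f.1 m n + cf g.1 m n := cf_add _ _ _ _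
lemma cfv_sub (f g : RR I J) (m n) : cf (f-g).1 m n = cf f.1 m n - cf g.1 m n := cf_sub _ _ _ _
lemma cfv_am (f : RR I J) (c : A) (m n) : cf (f * algebraMap A (RR I J) c).1 m n = c * cf f.1 m n := by
  rw [← mr00, mul_comm]
  show cf (mo 0 0 c * f.1) m n = _
  rw [cf_mo_mul]; simp
lemma cfv_10_zero (f : RR I J) (a : A) (ha) (n) : cf (f * mr I J 1 0 a ha).1 0 n = 0 := by
  rw [mul_comm]
  show cf (mo 1 0 a * f.1) 0 n = _
  rw [cf_mo_mul]; simp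
lemma cfv_01_zero (f : RR I J) (a : A) (ha) (m) : cf (f * mr I J 0 1 a ha).1 m 0 = 0 := by
  rw [mul_comm]
  show cf (mo 0 1 a * f.1) m 0 = _
  rw [cf_mo_mul]; simp

variable [IsDomain A] [IsNoetherianRing A] [IsLocalRing A]

lemma mem3 (a b γ : A) (ha : a ∈ I) (hb : b ∈ J) (hIJ : I * J ≤ Ideal.span {a} * J ⊔ Ideal.span {b} * I) (g : RR I J) :
    g ∈ Ideal.span {mr I J 1 0 a (mem_10 ha), mr I J 0 1 b (mem_01 hb), algebraMap A (RR I J) γ} ↔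
      cf g.1 0 0 ∈ Ideal.span {γ} ∧
      (∀ m, cf g.1 (m+1) 0 ∈ Ideal.span {a} * I^m ⊔ Ideal.span {γ} * I^(m+1)) ∧
      (∀ n, cf g.1 0 (n+1) ∈ Ideal.span {b} * J^n ⊔ Ideal.span {γ} * J^(n+1)) := by
  constructor
  · intro h
    obtain ⟨x, y, z, rfl⟩ := Submodule.mem_span_triple.mp h
    simp only [smul_eq_mul]
    refine ⟨?_, fun m => ?_, fun n => ?_⟩
    · rw [cfv_add, cfv_add, cfv_10_zero, cfv_01_zero, cfv_am, zero_add, zero_add]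
      exact Ideal.mul_mem_right _ _ (Ideal.mem_span_singleton_self γ)
    · rw [cfv_add, cfv_add, cf_mul_mo10 x a ha m 0, cfv_01_zero, cfv_am, add_zero]
      refine Ideal.add_mem _ (Ideal.mem_sup_left (Ideal.mul_mem_mul (Ideal.mem_span_singleton_self a) ?_))
        (Ideal.mem_sup_right (Ideal.mul_mem_mul (Ideal.mem_span_singleton_self γ) ?_))
      · simpa using mem_RR.mp x.2 m 0
      · simpa using mem_RR.mp z.2 (m+1) 0
    · rw [cfv_add, cfv_add, cf_mul_mo01 y b hb 0 n, cfv_10_zero, cfv_am, zero_add]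
      refine Ideal.add_mem _ (Ideal.mem_sup_left (Ideal.mul_mem_mul (Ideal.mem_span_singleton_self b) ?_))
        (Ideal.mem_sup_right (Ideal.mul_mem_mul (Ideal.mem_span_singleton_self γ) ?_))
      · simpa using mem_RR.mp y.2 0 n
      · simpa using mem_RR.mp z.2 0 (n+1)
  · rintro ⟨h0, h1, h2⟩
    set Q := Ideal.span {mr I J 1 0 a (mem_10 ha), mr I J 0 1 b (mem_01 hb), algebraMap A (RR I J) γ} with hQ
    have q1 : mr I J 1 0 a (mem_10 ha) ∈ Q := Ideal.subset_span (by simp)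
    have q2 : mr I J 0 1 b (mem_01 hb) ∈ Q := Ideal.subset_span (by simp)
    have q3 : mr I J 0 0 γ (mem_00 γ) ∈ Q := by rw [mr00]; exact Ideal.subset_span (by simp)
    refine mem_of_cp Q g fun m n _ => ?_
    rcases m with _ | m <;> rcases n with _ | n
    · exact (mr_mem_of Q (mem_00 γ) q3 (m := 0) (n := 0) (p := 0) (q := 0) rfl rfl (by simpa using h0)).2
    · exact (mr_mem_sup Q (fun x hx => mr_mem_of Q (mem_01 hb) q2 (m := 0) (n := n) (p := 0) (q := n+1) rfl (by omega) hx)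
        (fun x hx => mr_mem_of Q (mem_00 γ) q3 (m := 0) (n := n+1) (p := 0) (q := n+1) rfl (by omega) hx) _ (by simpa using h2 n)).2
    · exact (mr_mem_sup Q (fun x hx => mr_mem_of Q (mem_10 ha) q1 (m := m) (n := 0) (p := m+1) (q := 0) (by omega) rfl hx)
        (fun x hx => mr_mem_of Q (mem_00 γ) q3 (m := m+1) (n := 0) (p := m+1) (q := 0) (by omega) rfl hx) _ (by simpa using h1 m)).2
    · exact (mr_mem_sup Q (fun x hx => mr_mem_of Q (mem_10 ha) q1 (m := m) (n := n+1) (p := m+1) (q := n+1) (by omega) (by omega) hx)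
        (fun x hx => mr_mem_of Q (mem_01 hb) q2 (m := m+1) (n := n) (p := m+1) (q := n+1) (by omega) (by omega) hx) _
        (IJ_pow a b hIJ m n (mem_RR.mp g.2 _ _))).2

lemma cf_fin (f : MvPolynomial (Fin 2) A) : ∃ N, ∀ m n, N ≤ m + n → cf f m n = 0 := by
  refine ⟨f.totalDegree + 1, fun m n h => ?_⟩
  refine coeff_eq_zero_of_totalDegree_lt ?_
  have : ∑ i ∈ (ee m n).support, ee m n i = m + n := by
    rw [Finset.sum_subset (Finset.subset_univ _) (by intro i _ hi; simpa using hi), Fin.sum_univ_two]; simp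
  omega

variable [IsIntegrallyClosed A]

theorem CM_of_data (hdim : ringKrullDim A = 2) (hcl : ∀ m n, IdealIsIntegrallyClosed (I^m * J^n))
    (a a' b b' : A) (ha : a ∈ I) (ha' : a' ∈ I) (hb : b ∈ J) (hb' : b' ∈ J) (ha0 : a ≠ 0) (hb0 : b ≠ 0)
    (hI : ∃ n, IsLocalRing.maximalIdeal A ^ n ≤ I) (hJ : ∃ n, IsLocalRing.maximalIdeal A ^ n ≤ J)
    (hI2 : I^2 ≤ Ideal.span {a, a'} * I) (hJ2 : J^2 ≤ Ideal.span {b, b'} * J)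
    (hIJ : I * J ≤ Ideal.span {a} * J ⊔ Ideal.span {b} * I) : IsCMNormalDomain (RR I J) := by
  have hIb : I ≠ ⊥ := by rintro rfl; exact ha0 (by simpa using ha)
  have hJb : J ≠ ⊥ := by rintro rfl; exact hb0 (by simpa using hb)
  have hIm : ∃ N, IsLocalRing.maximalIdeal A ^ N ≤ Ideal.span {a, a'} := by
    obtain ⟨n, hn⟩ := hI
    refine ⟨n*2, ?_⟩
    rw [pow_mul]
    exact (Ideal.pow_right_mono hn 2).trans (hI2.trans Ideal.mul_le_left)
  have hJm : ∃ N, IsLocalRing.maximalIdeal A ^ N ≤ Ideal.span {b, b'} := by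
    obtain ⟨n, hn⟩ := hJ
    refine ⟨n*2, ?_⟩
    rw [pow_mul]
    exact (Ideal.pow_right_mono hn 2).trans (hJ2.trans Ideal.mul_le_left)
  obtain ⟨γ, hγ, hγ0, N, hγ1, hγ2⟩ := exists_avoid hdim a b ha0 hb0
  obtain ⟨β, hβ, hβ0, N', hβ1, -⟩ := exists_avoid hdim γ γ hγ0 hγ0
  refine ⟨cm_of_cmAt_NN hIb hJb ?_, inferInstance, RR_normal_of hcl⟩
  set r1 := mr I J 1 0 a (mem_10 ha) with hr1
  set r2 := mr I J 0 1 b (mem_01 hb) with hr2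
  set r3 := algebraMap A (RR I J) γ with hr3
  set f1 := mr I J 1 0 a' (mem_10 ha') with hf1
  set f2 := mr I J 0 1 b' (mem_01 hb') with hf2
  have hcfm : ∀ (x : RR I J) m n, cf x.1 m n ∈ I^m * J^n := fun x m n => mem_RR.mp x.2 m n
  have hreg : IsWeaklyRegular (RR I J) [r1, r2, r3, f1 + f2 - algebraMap A (RR I J) β] := by
    refine isWeaklyRegular4 _ _ _ _ ?_ ?_ ?_ ?_
    · intro g hg
      rcases mul_eq_zero.mp hg with h | h
      · have := congrArg (fun f : RR I J => cf f.1 1 0) h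
        exact absurd (show a = 0 by simpa [hr1, cf] using (cf_mo_self 1 0 a).symm.trans this) ha0
      · exact h
    · intro g hg
      rw [Ideal.mem_span_singleton'] at hg
      obtain ⟨h, hh⟩ := hg
      have e : ∀ m n, cf (h * r1).1 m n = cf (g * r2).1 m n := by
        intro m n; rw [hh, mul_comm]
      refine mem_of_cp _ g fun m n hne => ?_
      rcases m with _ | m
      · have := e 0 (n+1)
        rw [cfv_10_zero, cf_mul_mo01 g b hb 0 n] at this
        exact absurd ((mul_eq_zero.mp this.symm).resolve_left hb0) hne
      · have := e (m+1) (n+1)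
        rw [cf_mul_mo10 h a ha m (n+1), cf_mul_mo01 g b hb (m+1) n] at this
        refine (mr_mem_of _ (mem_10 ha) (Ideal.mem_span_singleton_self _) (m := m) (n := n) (by omega) (by omega) ?_).2
        rw [Ideal.mem_span_singleton_mul]
        have hL : I * J ≠ ⊥ := by rw [Ne, Ideal.mul_eq_bot]; tauto
        obtain ⟨z, hz, hz2⟩ := DT (I * J) (I^m * J^n) hL (IsNoetherian.noetherian _) (hcl m n) (cf g.1 (m+1) n) a ha0 (by
          intro l hl
          obtain ⟨s', hs', t', ht', hst⟩ := Submodule.mem_sup.mp (hIJ hl)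
          obtain ⟨s, hs, rfl⟩ := Ideal.mem_span_singleton_mul.mp hs'
          obtain ⟨t, ht, rfl⟩ := Ideal.mem_span_singleton_mul.mp ht'
          refine ⟨cf g.1 (m+1) n * s + cf h.1 m (n+1) * t, Ideal.add_mem _ ?_ ?_, ?_⟩
          · have := Ideal.mul_mem_mul (hcfm g (m+1) n) hs
            rwa [show I^m * J^n * (I*J) = I^(m+1) * J^n * J by ring]
          · have := Ideal.mul_mem_mul (hcfm h m (n+1)) ht
            rwa [show I^m * J^n * (I*J) = I^m * J^(n+1) * I by ring]
          · rw [← hst]; linear_combination -t * this)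
        exact ⟨z, hz, hz2.symm⟩
    · intro g hg
      have e0 : Ideal.span {r1, r2} = Ideal.span {r1, r2, algebraMap A (RR I J) 0} := by
        rw [map_zero, Ideal.span_insert, Ideal.span_insert r1, Ideal.span_insert r2]; simp
      rw [e0, hr1, hr2, mem3 a b 0 ha hb hIJ] at hg ⊢
      rw [mul_comm] at hg
      simp only [hr3, cfv_am] at hg
      obtain ⟨g0, g1, g2⟩ := hg
      refine ⟨?_, fun m => ?_, fun n => ?_⟩
      · simpa [hγ0] using g0
      · have := g1 m
        rw [Ideal.span_singleton_zero, Ideal.bot_mul, sup_bot_eq] at this ⊢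
        obtain ⟨z, hz, hz2⟩ := Ideal.mem_span_singleton_mul.mp this
        obtain ⟨w, hw1, hw2⟩ := RP hdim a γ N hγ1 _ _ hz2
        refine Ideal.mem_span_singleton_mul.mpr ⟨w, ?_, hw2.symm⟩
        refine div_memJ hdim I a a' ha' hI2 hIm ha0 m w ?_
        rw [← hw2]; simpa using hcfm g (m+1) 0
      · have := g2 n
        rw [Ideal.span_singleton_zero, Ideal.bot_mul, sup_bot_eq] at this ⊢
        obtain ⟨z, hz, hz2⟩ := Ideal.mem_span_singleton_mul.mp this
        obtain ⟨w, hw1, hw2⟩ := RP hdim b γ N hγ2 _ _ hz2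
        refine Ideal.mem_span_singleton_mul.mpr ⟨w, ?_, hw2.symm⟩
        refine div_memJ hdim J b b' hb' hJ2 hJm hb0 n w ?_
        rw [← hw2]; simpa using hcfm g 0 (n+1)
    · intro g hg
      rw [hr1, hr2, hr3, mem3 a b γ ha hb hIJ] at hg ⊢
      rw [mul_comm, mul_sub, mul_add] at hg
      simp only [cfv_add, cfv_sub, cfv_am, hf1, hf2, cfv_10_zero, cfv_01_zero, cf_mul_mo10 g a' ha', cf_mul_mo01 g b' hb', add_zero, zero_add, zero_sub] at hg
      obtain ⟨g0, g1, g2⟩ := hg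
      obtain ⟨M, hM⟩ := cf_fin g.1
      refine ⟨?_, ?_, ?_⟩
      · rw [Ideal.neg_mem_iff, Ideal.mem_span_singleton] at g0
        obtain ⟨z, hz⟩ := g0
        rw [Ideal.mem_span_singleton]
        obtain ⟨w, hw1, hw2⟩ := RP hdim γ β N' hβ1 _ _ hz.symm
        exact ⟨w, hw2⟩
      · exact seqL hdim I a a' β γ ha ha' hI2 hIm ha0 (fun n => cf g.1 n 0) (fun n => by simpa using hcfm g n 0)
          ⟨M, fun n hn => hM n 0 (by omega)⟩ g1
      · exact seqL hdim J b b' β γ hb hb' hJ2 hJm hb0 (fun n => cf g.1 0 n) (fun n => by simpa using hcfm g 0 n)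
          ⟨M, fun n hn => hM 0 n (by omega)⟩ g2
  have hreg2 := hreg.of_isLocalization (Localization.AtPrime (NN I J)) (NN I J).primeCompl
  refine cm_of_regular _ ?_ hreg2 ?_
  · intro x hx
    rw [List.mem_map] at hx
    obtain ⟨y, hy, rfl⟩ := hx
    rw [IsLocalization.AtPrime.to_map_mem_maximal_iff _ (NN I J) y, mem_NN]
    simp only [List.mem_cons, List.not_mem_nil, or_false] at hy
    rcases hy with rfl | rfl | rfl | rfl
    · simp [hr1, cf_mo]
    · simp [hr2, cf_mo]
    · rw [hr3, ← mr00]; simpa using hγ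
    · rw [cfv_sub, cfv_add, ← mr00]; simp [hf1, hf2, cf_mo, hβ]
  · rw [dim_NN hdim hIb hJb]; simp

end

section
universe u v
set_option linter.all false
open RingTheory.Sequence MvPolynomial

lemma sop_loc {R : Type u} [CommRing R] [IsNoetherianRing R] (N : Ideal R) [N.IsPrime] (hcm : CMAt R N)
    (n : ℕ) (hd : ringKrullDim (Localization.AtPrime N) = n) (xs : List R) (hl : xs.length = n)
    (hxs : ∀ x ∈ xs, x ∈ N) (hp : ∀ P : Ideal R, P.IsPrime → P ≤ N → (∀ x ∈ xs, x ∈ P) → N ≤ P) :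
    IsWeaklyRegular (Localization.AtPrime N) (xs.map (algebraMap R (Localization.AtPrime N))) := by
  have hdep : DepthGe (Localization.AtPrime N) (Localization.AtPrime N) n := by
    obtain ⟨_, hloc, rs, h1, h2, h3⟩ := hcm
    refine ⟨rs, ?_, h1, h2⟩
    rw [hd] at h3
    exact_mod_cast h3
  refine (isRegular_of_sop hdep _ (by simpa using hl) ?_ ?_).toIsWeaklyRegular
  · intro x hx
    rw [List.mem_map] at hx
    obtain ⟨y, hy, rfl⟩ := hx
    rw [IsLocalization.AtPrime.to_map_mem_maximal_iff _ N y]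
    exact hxs y hy
  · intro q hq hxq
    refine le_antisymm (IsLocalRing.le_maximalIdeal hq.ne_top) ?_
    rw [← IsLocalization.AtPrime.map_eq_maximalIdeal N (Localization.AtPrime N), Ideal.map_le_iff_le_comap]
    refine hp _ (Ideal.comap_isPrime _ _) ?_ ?_
    · intro x hx
      rw [← IsLocalization.AtPrime.to_map_mem_maximal_iff (Localization.AtPrime N) N x]
      exact IsLocalRing.le_maximalIdeal hq.ne_top hx
    · intro x hx
      exact hxq _ (List.mem_map_of_mem hx)

lemma wreg_loc {R : Type u} [CommRing R] (N : Ideal R) [N.IsPrime] (xs : List R)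
    (h : IsWeaklyRegular (Localization.AtPrime N) (xs.map (algebraMap R (Localization.AtPrime N))))
    (i : ℕ) (hi : i < xs.length) (g : R) (hg : xs[i] * g ∈ Ideal.ofList (xs.take i)) :
    ∃ s, s ∉ N ∧ s * g ∈ Ideal.ofList (xs.take i) := by
  have h1 := h.regular_mod_prev i (by simpa using hi)
  rw [isSMulRegular_quotient_iff_mem_of_smul_mem] at h1
  have e : (Ideal.ofList ((xs.map (algebraMap R (Localization.AtPrime N))).take i) • ⊤ : Submodule (Localization.AtPrime N) (Localization.AtPrime N)) = (Ideal.ofList (xs.take i)).map (algebraMap R (Localization.AtPrime N)) := by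
    rw [← List.map_take, Ideal.map_ofList]; simp [smul_eq_mul]
  rw [e] at h1
  have h2 := h1 (algebraMap R _ g) (by
    rw [List.getElem_map, smul_eq_mul, ← map_mul]
    exact Ideal.mem_map_of_mem _ hg)
  rw [IsLocalization.algebraMap_mem_map_algebraMap_iff N.primeCompl] at h2
  obtain ⟨s, hs, h3⟩ := h2
  exact ⟨s, hs, h3⟩

variable {A : Type u} [CommRing A] [IsDomain A] [IsNoetherianRing A] [IsLocalRing A] {I J : Ideal A}

lemma R1P_primes (a b : A) (ha : a ∈ I) (hb : b ∈ J) (h : R1P I J a b) (P : Ideal (RR I J)) (hP : P.IsPrime)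
    (h1 : mr I J 1 0 a (mem_10 ha) ∈ P) (h2 : mr I J 0 1 b (mem_01 hb) ∈ P) :
    (∀ c (hc : c ∈ I), mr I J 1 0 c (mem_10 hc) ∈ P) ∨ (∀ c (hc : c ∈ J), mr I J 0 1 c (mem_01 hc) ∈ P) := by
  obtain ⟨n, hn⟩ := h
  by_contra hcon
  push Not at hcon
  obtain ⟨⟨c, hc, hcP⟩, e, he, heP⟩ := hcon
  have hm : mr I J 1 0 c (mem_10 hc) ^ (n+1) * mr I J 0 1 e (mem_01 he) ^ (n+1) ∈ P := by
    have hmem : c^(n+1) * e^(n+1) ∈ I^(n+1) * J^(n+1) := Ideal.mul_mem_mul (Ideal.pow_mem_pow hc _) (Ideal.pow_mem_pow he _)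
    have e1 : mr I J 1 0 c (mem_10 hc) ^ (n+1) * mr I J 0 1 e (mem_01 he) ^ (n+1) = mr I J (n+1) (n+1) (c^(n+1) * e^(n+1)) hmem := by
      apply Subtype.ext
      show mo 1 0 c ^ (n+1) * mo 0 1 e ^ (n+1) = mo _ _ _
      rw [mo_pow, mo_pow, mo_mul]; simp
    rw [e1]
    exact (mr_mem_sup P (fun x hx => mr_mem_of P (mem_10 ha) h1 (m := n) (n := n+1) (p := n+1) (q := n+1) (by omega) (by omega) hx)
        (fun x hx => mr_mem_of P (mem_01 hb) h2 (m := n+1) (n := n) (p := n+1) (q := n+1) (by omega) (by omega) hx) _ (hn hmem)).2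
  rcases hP.mem_or_mem hm with h | h
  · exact hcP (hP.mem_of_pow_mem _ h)
  · exact heP (hP.mem_of_pow_mem _ h)

lemma R1P_self (a a' : A) (h : R1P I I a a') : ∃ n, I^(n+1) ≤ Ideal.span {a} * I^n ⊔ Ideal.span {a'} * I^n := by
  obtain ⟨n, hn⟩ := h
  refine ⟨2*n+1, ?_⟩
  rw [← pow_add, ← pow_add, ← pow_add] at hn
  have e1 : n+1+(n+1) = 2*n+1+1 := by ring
  have e2 : n+(n+1) = 2*n+1 := by ring
  have e3 : n+1+n = 2*n+1 := by ring
  rw [e1, e2, e3] at hn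
  exact hn

lemma R1P_primes_left (a b : A) (ha : a ∈ I) (hb : b ∈ I) (h : R1P I I a b) (P : Ideal (RR I J)) (hP : P.IsPrime)
    (h1 : mr I J 1 0 a (mem_10 ha) ∈ P) (h2 : mr I J 1 0 b (mem_10 hb) ∈ P) 
    (c) (hc : c ∈ I) : mr I J 1 0 c (mem_10 hc) ∈ P := by
  obtain ⟨n, hn⟩ := R1P_self a b h
  refine hP.mem_of_pow_mem (n+1) ?_
  have hmem : c^(n+1) ∈ I^(n+1) * J^0 := by simpa using (Ideal.pow_mem_pow hc (n+1))
  have e1 : mr I J 1 0 c (mem_10 hc) ^ (n+1) = mr I J (n+1) 0 (c^(n+1)) hmem := by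
    apply Subtype.ext
    show mo 1 0 c ^ (n+1) = mo _ _ _
    rw [mo_pow]; simp
  rw [e1]
  exact (mr_mem_sup P (fun x hx => mr_mem_of P (mem_10 ha) h1 (m := n) (n := 0) (p := n+1) (q := 0) (by omega) (by omega) hx)
    (fun x hx => mr_mem_of P (mem_10 hb) h2 (m := n) (n := 0) (p := n+1) (q := 0) (by omega) (by omega) hx) _
    (by simpa using hn (Ideal.pow_mem_pow hc (n+1)))).2

lemma R1P_primes_right (a b : A) (ha : a ∈ J) (hb : b ∈ J) (h : R1P J J a b) (P : Ideal (RR I J)) (hP : P.IsPrime)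
    (h1 : mr I J 0 1 a (mem_01 ha) ∈ P) (h2 : mr I J 0 1 b (mem_01 hb) ∈ P) 
    (c) (hc : c ∈ J) : mr I J 0 1 c (mem_01 hc) ∈ P := by
  obtain ⟨n, hn⟩ := R1P_self a b h
  refine hP.mem_of_pow_mem (n+1) ?_
  have hmem : c^(n+1) ∈ I^0 * J^(n+1) := by simpa using (Ideal.pow_mem_pow hc (n+1))
  have e1 : mr I J 0 1 c (mem_01 hc) ^ (n+1) = mr I J 0 (n+1) (c^(n+1)) hmem := by
    apply Subtype.ext
    show mo 0 1 c ^ (n+1) = mo _ _ _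
    rw [mo_pow]; simp
  rw [e1]
  exact (mr_mem_sup P (fun x hx => mr_mem_of P (mem_01 ha) h1 (m := 0) (n := n) (p := 0) (q := n+1) (by omega) (by omega) hx)
    (fun x hx => mr_mem_of P (mem_01 hb) h2 (m := 0) (n := n) (p := 0) (q := n+1) (by omega) (by omega) hx) _
    (by simpa using hn (Ideal.pow_mem_pow hc (n+1)))).2

lemma NN_le (P : Ideal (RR I J)) (h1 : ∀ c (hc : c ∈ I), mr I J 1 0 c (mem_10 hc) ∈ P)
    (h2 : ∀ c (hc : c ∈ J), mr I J 0 1 c (mem_01 hc) ∈ P)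
    (h3 : ∀ c ∈ IsLocalRing.maximalIdeal A, algebraMap A (RR I J) c ∈ P) : NN I J ≤ P := by
  intro g hg
  rw [mem_NN] at hg
  refine mem_of_cp P g fun m n _ => ?_
  rcases m with _ | m
  · rcases n with _ | n
    · have := h3 _ hg
      rwa [← mr00] at this
    · exact mr_right_mem P h2 0 n _ _
  · exact mr_left_mem P h1 m n _ _

lemma max_mem_of (P : Ideal (RR I J)) (hP : P.IsPrime) (x y : A) (hx : algebraMap A (RR I J) x ∈ P) (hy : algebraMap A (RR I J) y ∈ P)
    (h : ∃ n, IsLocalRing.maximalIdeal A ^ n ≤ Ideal.span {x, y}) :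
    ∀ c ∈ IsLocalRing.maximalIdeal A, algebraMap A (RR I J) c ∈ P := by
  intro c hc
  obtain ⟨n, hn⟩ := h
  refine hP.mem_of_pow_mem n ?_
  rw [← map_pow]
  have : Ideal.span {x, y} ≤ P.comap (algebraMap A (RR I J)) := by
    rw [Ideal.span_le]
    rintro z (rfl | rfl)
    · exact hx
    · exact hy
  exact this (hn (Ideal.pow_mem_pow hc n))

lemma primary_of_R1P (hI : ∃ n, IsLocalRing.maximalIdeal A ^ n ≤ I) (hJ : ∃ n, IsLocalRing.maximalIdeal A ^ n ≤ J) (a b : A) (h : R1P I J a b) :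
    ∃ n, IsLocalRing.maximalIdeal A ^ n ≤ Ideal.span {a, b} := by
  obtain ⟨n, hn⟩ := h
  obtain ⟨p, hp⟩ := hI
  obtain ⟨q, hq⟩ := hJ
  refine ⟨p*(n+1)+q*(n+1), ?_⟩
  rw [pow_add, pow_mul, pow_mul, Ideal.span_insert]
  exact (Ideal.mul_mono (Ideal.pow_right_mono hp _) (Ideal.pow_right_mono hq _)).trans
    (hn.trans (sup_le_sup Ideal.mul_le_left Ideal.mul_le_left))

lemma Gen_avoid_minimal (hdim : ringKrullDim A = 2) (hI : ∃ n, IsLocalRing.maximalIdeal A ^ n ≤ I) (b : A) (hb : b ≠ 0) :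
    Gen I (fun a' => ∃ n, IsLocalRing.maximalIdeal A ^ n ≤ Ideal.span {a', b}) := by
  refine ⟨(Ideal.span {b}).minimalPrimes, Ideal.finite_minimalPrimes_of_isNoetherianRing _ _, ?_, ?_⟩
  · intro p hp hle
    obtain ⟨n, hn⟩ := hI
    have hpp : p.IsPrime := hp.1.1
    exact minimal_ne_max hdim b p hp (Ideal.IsPrime.le_of_pow_le (hn.trans hle))
  · intro a' _ h
    rw [Set.pair_comm]
    exact avoid_pow hdim b a' h hb

lemma ne_bot_of_primary (hdim : ringKrullDim A = 2) (hI : ∃ n, IsLocalRing.maximalIdeal A ^ n ≤ I) : I ≠ ⊥ := by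
  rintro rfl
  obtain ⟨n, hn⟩ := hI
  obtain ⟨x, hx, hx0⟩ := exists_ne_zero_max hdim
  have := hn (Ideal.pow_mem_pow hx n)
  exact pow_ne_zero n hx0 (by simpa using this)

end

section
universe u v
set_option linter.all false
open RingTheory.Sequence MvPolynomial

lemma mem_ofList2 {R : Type u} [CommRing R] (x y z : R) : z ∈ Ideal.ofList [x, y] ↔ ∃ p q, z = p * x + q * y := by
  simp only [Ideal.ofList_cons, Ideal.ofList_nil, Ideal.mem_span_singleton_sup]
  constructor
  · rintro ⟨p, w, ⟨q, v, hv, rfl⟩, rfl⟩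
    simp only [Ideal.mem_bot] at hv
    exact ⟨p, q, by rw [hv]; ring⟩
  · rintro ⟨p, q, rfl⟩
    exact ⟨p, q*y, ⟨q, 0, by simp, by ring⟩, rfl⟩

lemma mem_ofList3 {R : Type u} [CommRing R] (x y w z : R) : z ∈ Ideal.ofList [x, y, w] ↔ ∃ p q r, z = p * x + q * y + r * w := by
  rw [Ideal.ofList_cons]
  simp only [Ideal.mem_span_singleton_sup, mem_ofList2]
  constructor
  · rintro ⟨p, _, ⟨q, r, rfl⟩, rfl⟩
    exact ⟨p, q, r, by ring⟩
  · rintro ⟨p, q, r, rfl⟩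
    exact ⟨p, q*y+r*w, ⟨q, r, rfl⟩, by ring⟩

variable {A : Type u} [CommRing A] [IsDomain A] [IsNoetherianRing A] [IsLocalRing A] {I J : Ideal A}

lemma primes_data (hI : ∃ n, IsLocalRing.maximalIdeal A ^ n ≤ I) (hJ : ∃ n, IsLocalRing.maximalIdeal A ^ n ≤ J)
    (hIm : I ≤ IsLocalRing.maximalIdeal A)
    (a a' b b' : A) (ha : a ∈ I) (ha' : a' ∈ I) (hb : b ∈ J) (hb' : b' ∈ J)
    (h1 : R1P I J a b) (h2 : R1P I I a a') (h3 : R1P J J b b') (h4 : ∃ n, IsLocalRing.maximalIdeal A ^ n ≤ Ideal.span {a', b})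
    (P : Ideal (RR I J)) (hP : P.IsPrime) (p1 : mr I J 1 0 a (mem_10 ha) ∈ P) (p2 : mr I J 0 1 b (mem_01 hb) ∈ P)
    (p3 : algebraMap A (RR I J) a' ∈ P)
    (p4 : mr I J 1 0 a' (mem_10 ha') + mr I J 0 1 b' (mem_01 hb') - algebraMap A (RR I J) a ∈ P) : NN I J ≤ P := by
  rcases R1P_primes a b ha hb h1 P hP p1 p2 with hL | hR
  · have q1 : mr I J 0 1 b' (mem_01 hb') - algebraMap A (RR I J) a ∈ P := by
      have := P.sub_mem p4 (hL a' ha')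
      convert this using 1; ring
    have q2 : algebraMap A (RR I J) b * mr I J 0 1 b' (mem_01 hb') ∈ P := by
      have : algebraMap A (RR I J) b * mr I J 0 1 b' (mem_01 hb') = algebraMap A (RR I J) b' * mr I J 0 1 b (mem_01 hb) := by
        rw [← mr00, ← mr00]
        apply Subtype.ext
        show mo 0 0 b * mo 0 1 b' = mo 0 0 b' * mo 0 1 b
        rw [mo_mul, mo_mul, mul_comm]
      rw [this]; exact P.mul_mem_left _ p2
    have q3 : algebraMap A (RR I J) b * algebraMap A (RR I J) a ∈ P := by
      have := P.sub_mem q2 (P.mul_mem_left (algebraMap A (RR I J) b) q1)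
      convert this using 1; ring
    have qa : algebraMap A (RR I J) a ∈ P := by
      rcases hP.mem_or_mem q3 with h | h
      · exact max_mem_of P hP a' b p3 h h4 a (hIm ha)
      · exact h
    have q5 : mr I J 0 1 b' (mem_01 hb') ∈ P := by
      have := P.add_mem q1 qa
      simpa using this
    exact NN_le P hL (R1P_primes_right b b' hb hb' h3 P hP p2 q5) (max_mem_of P hP a a' qa p3 (primary_of_R1P hI hI a a' h2))
  · have q1 : mr I J 1 0 a' (mem_10 ha') - algebraMap A (RR I J) a ∈ P := by
      have := P.sub_mem p4 (hR b' hb')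
      convert this using 1; ring
    have q2 : algebraMap A (RR I J) a * mr I J 1 0 a' (mem_10 ha') ∈ P := by
      have : algebraMap A (RR I J) a * mr I J 1 0 a' (mem_10 ha') = algebraMap A (RR I J) a' * mr I J 1 0 a (mem_10 ha) := by
        rw [← mr00, ← mr00]
        apply Subtype.ext
        show mo 0 0 a * mo 1 0 a' = mo 0 0 a' * mo 1 0 a
        rw [mo_mul, mo_mul, mul_comm]
      rw [this]; exact P.mul_mem_left _ p1
    have q3 : algebraMap A (RR I J) a * algebraMap A (RR I J) a ∈ P := by
      have := P.sub_mem q2 (P.mul_mem_left (algebraMap A (RR I J) a) q1)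
      convert this using 1; ring
    have qa : algebraMap A (RR I J) a ∈ P := by
      rcases hP.mem_or_mem q3 with h | h <;> exact h
    have q5 : mr I J 1 0 a' (mem_10 ha') ∈ P := by
      have := P.add_mem q1 qa
      simpa using this
    exact NN_le P (R1P_primes_left a a' ha ha' h2 P hP p1 q5) hR (max_mem_of P hP a a' qa p3 (primary_of_R1P hI hI a a' h2))

theorem data_of_elts (hdim : ringKrullDim A = 2) (hI : ∃ n, IsLocalRing.maximalIdeal A ^ n ≤ I) (hJ : ∃ n, IsLocalRing.maximalIdeal A ^ n ≤ J)
    (hIm : I ≤ IsLocalRing.maximalIdeal A) (hcm : CMAt (RR I J) (NN I J))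
    (a a' b b' : A) (ha : a ∈ I) (ha' : a' ∈ I) (hb : b ∈ J) (hb' : b' ∈ J)
    (h1 : R1P I J a b) (h2 : R1P I I a a') (h3 : R1P J J b b') (h4 : ∃ n, IsLocalRing.maximalIdeal A ^ n ≤ Ideal.span {a', b}) :
    I^2 ≤ Ideal.span {a, a'} * I := by
  set α := mr I J 1 0 a (mem_10 ha) with hα
  set β := mr I J 0 1 b (mem_01 hb) with hβ
  set f := mr I J 1 0 a' (mem_10 ha') + mr I J 0 1 b' (mem_01 hb') - algebraMap A (RR I J) a with hf
  have nα : α ∈ NN I J := by rw [mem_NN, hα, mr_val, cf_mo]; simp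
  have nβ : β ∈ NN I J := by rw [mem_NN, hβ, mr_val, cf_mo]; simp
  have nA : ∀ x ∈ I, algebraMap A (RR I J) x ∈ NN I J := by
    intro x hx
    rw [mem_NN, ← mr00, mr_val, cf_mo]; simpa using hIm hx
  have nf : f ∈ NN I J := by
    refine sub_mem (add_mem ?_ ?_) (nA a ha)
    · rw [mem_NN, mr_val, cf_mo]; simp
    · rw [mem_NN, mr_val, cf_mo]; simp
  have hnn := dim_NN hdim (ne_bot_of_primary hdim hI) (ne_bot_of_primary hdim hJ)
  have unit_of : ∀ s : RR I J, s ∉ NN I J → ∃ v, v * cf s.1 0 0 = 1 := by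
    intro s hs
    rw [mem_NN, IsLocalRing.mem_maximalIdeal, mem_nonunits_iff, not_not] at hs
    exact hs.exists_left_inv
  have cfmr : ∀ (i j : ℕ) (x : A) (hx : x ∈ I^i * J^j) (s : RR I J), cf (mr I J i j x hx * s).1 i j = cf s.1 0 0 * x := by
    intro i j x hx s
    show cf (mo i j x * s.1) i j = _
    rw [cf_mo_mul, if_pos ⟨le_rfl, le_rfl⟩]; simp [mul_comm]
  have nfg : ∀ g : RR I J, cf (g * f).1 2 0 = a' * cf g.1 1 0 - a * cf g.1 2 0 := by
    intro g
    rw [hf, mul_sub, mul_add, cfv_sub, cfv_add, cf_mul_mo10 g a' ha' 1 0, cfv_01_zero, cfv_am, add_zero]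
  have hIJ : I * J ≤ Ideal.span {a} * J ⊔ Ideal.span {b} * I := by
    obtain ⟨M, hM, hM0⟩ : ∃ M, IsLocalRing.maximalIdeal A ^ M ≤ Ideal.span {a, b} ∧ M ≠ 0 := by
      obtain ⟨M, hM⟩ := primary_of_R1P hI hJ a b h1
      exact ⟨M+1, (Ideal.pow_le_pow_right (Nat.le_succ M)).trans hM, by omega⟩
    have hw := sop_loc (NN I J) hcm 4 hnn [α, β, algebraMap A (RR I J) (a'^M) , f] rfl
      (by
        intro x hx
        simp only [List.mem_cons, List.not_mem_nil, or_false] at hx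
        rcases hx with rfl | rfl | rfl | rfl
        exacts [nα, nβ, nA _ (Ideal.pow_mem_of_mem I ha' M (Nat.pos_of_ne_zero hM0)), nf])
      (by
        intro P hP _ hx
        refine primes_data hI hJ hIm a a' b b' ha ha' hb hb' h1 h2 h3 h4 P hP (hx α (by simp)) (hx β (by simp)) ?_ (hx f (by simp))
        have := hx (algebraMap A (RR I J) (a'^M)) (by simp)
        rw [map_pow] at this
        exact hP.mem_of_pow_mem _ this)
    intro x hx
    have hx11 : x ∈ I^1 * J^1 := by simpa using hx
    obtain ⟨s, hs, hsg⟩ := wreg_loc (NN I J) _ hw 2 (by simp) (mr I J 1 1 x hx11) (by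
      show algebraMap A (RR I J) (a'^M) * _ ∈ Ideal.ofList [α, β]
      have := hM (Ideal.pow_mem_pow (hIm ha') M)
      obtain ⟨c, d, hcd⟩ := Ideal.mem_span_pair.1 this
      rw [mem_ofList2]
      refine ⟨mr I J 0 1 (c*x) (mem_01 (J.mul_mem_left _ (Ideal.mul_le_right hx))), mr I J 1 0 (d*x) (mem_10 (I.mul_mem_left _ (Ideal.mul_le_left hx))), ?_⟩
      rw [← mr00]
      apply Subtype.ext
      show mo 0 0 (a'^M) * mo 1 1 x = mo 0 1 (c*x) * mo 1 0 a + mo 1 0 (d*x) * mo 0 1 b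
      rw [mo_mul, mo_mul, mo_mul, ← hcd]
      simp only [zero_add, add_zero]
      rw [← mo_add]; congr 1; ring)
    change _ ∈ Ideal.ofList [α, β] at hsg
    rw [mem_ofList2] at hsg
    obtain ⟨p, q, hpq⟩ := hsg
    have := congrArg (fun g : RR I J => cf g.1 1 1) hpq
    simp only [cfv_add] at this
    obtain ⟨v, hv⟩ := unit_of s hs
    rw [mul_comm s, hα, hβ, cf_mul_mo10 p a ha 0 1, cf_mul_mo01 q b hb 1 0, cfmr] at this
    have hp := mem_RR.1 p.2 0 1
    have hq := mem_RR.1 q.2 1 0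
    have e : x = v * (a * cf p.1 0 1 + b * cf q.1 1 0) := by rw [← this]; linear_combination (-x) * hv
    rw [e]
    refine Ideal.mul_mem_left _ _ (Submodule.add_mem_sup ?_ ?_)
    · exact Ideal.mul_mem_mul (Ideal.mem_span_singleton_self _) (by simpa using hp)
    · exact Ideal.mul_mem_mul (Ideal.mem_span_singleton_self _) (by simpa using hq)
  have hw := sop_loc (NN I J) hcm 4 hnn [α, β, f, algebraMap A (RR I J) a'] rfl
      (by
        intro x hx
        simp only [List.mem_cons, List.not_mem_nil, or_false] at hx
        rcases hx with rfl | rfl | rfl | rfl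
        exacts [nα, nβ, nf, nA a' ha'])
      (by
        intro P hP _ hx
        exact primes_data hI hJ hIm a a' b b' ha ha' hb hb' h1 h2 h3 h4 P hP (hx α (by simp)) (hx β (by simp)) (hx _ (by simp)) (hx f (by simp)))
  intro x hx
  have hxI : x ∈ I := Ideal.pow_le_self two_ne_zero hx
  have hx20 : x ∈ I^2 * J^0 := by simpa using hx
  obtain ⟨s, hs, hsg⟩ := wreg_loc (NN I J) _ hw 3 (by simp) (mr I J 2 0 x hx20) (by
      show algebraMap A (RR I J) a' * _ ∈ Ideal.ofList [α, β, f]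
      have hxb : x * b' ∈ Ideal.span {a} * J ⊔ Ideal.span {b} * I := hIJ (Ideal.mul_mem_mul hxI hb')
      obtain ⟨y, hy, z, hz, hyz⟩ := Submodule.mem_sup.mp hxb
      obtain ⟨c, hc, rfl⟩ := Ideal.mem_span_singleton_mul.mp hy
      obtain ⟨d, hd, rfl⟩ := Ideal.mem_span_singleton_mul.mp hz
      rw [mem_ofList3]
      refine ⟨algebraMap A (RR I J) x - mr I J 0 1 c (mem_01 hc), - mr I J 1 0 d (mem_10 hd), mr I J 1 0 x (mem_10 hxI), ?_⟩
      rw [hf, hα, hβ, ← mr00, ← mr00, ← mr00]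
      apply Subtype.ext
      show mo 0 0 a' * mo 2 0 x = (mo 0 0 x - mo 0 1 c) * mo 1 0 a + (- mo 1 0 d) * mo 0 1 b + mo 1 0 x * (mo 1 0 a' + mo 0 1 b' - mo 0 0 a)
      simp only [mul_sub, mul_add, sub_mul, neg_mul, mo_mul, zero_add, add_zero, one_add_one_eq_two]
      rw [← hyz, mo_add, mul_comm a' x, mul_comm c a, mul_comm d b]
      ring)
  change _ ∈ Ideal.ofList [α, β, f] at hsg
  rw [mem_ofList3] at hsg
  obtain ⟨p, q, r, hpq⟩ := hsg
  have := congrArg (fun g : RR I J => cf g.1 2 0) hpq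
  simp only [cfv_add] at this
  obtain ⟨v, hv⟩ := unit_of s hs
  rw [mul_comm s, hα, hβ, cf_mul_mo10 p a ha 1 0, cfv_01_zero, cfmr, nfg] at this
  have hp := mem_RR.1 p.2 1 0
  have hr1 := mem_RR.1 r.2 1 0
  have hr2 := mem_RR.1 r.2 2 0
  simp only [pow_one, pow_zero, Ideal.one_eq_top, Ideal.mul_top] at hp hr1 hr2
  have e : x = v * (a * (cf p.1 1 0 - cf r.1 2 0) + a' * cf r.1 1 0) := by
    linear_combination (-x) * hv + v * this
  rw [e]
  refine Ideal.mul_mem_left _ _ (Ideal.add_mem _ ?_ ?_)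
  · exact Ideal.mul_mem_mul (Ideal.subset_span (by simp)) (I.sub_mem hp (Ideal.pow_le_self two_ne_zero hr2))
  · exact Ideal.mul_mem_mul (Ideal.subset_span (by simp)) hr1

def GD (I : Ideal A) : Prop := Gen I (fun a => Gen I (fun a' => I^2 ≤ Ideal.span {a, a'} * I))

lemma GD_top : GD (⊤ : Ideal A) := by
  refine ⟨{IsLocalRing.maximalIdeal A}, Set.finite_singleton _, ?_, ?_⟩
  · rintro p rfl h
    exact Ideal.IsPrime.ne_top' (top_le_iff.1 h)
  · intro a _ h
    have hu : IsUnit a := by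
      have := h _ rfl
      rwa [IsLocalRing.mem_maximalIdeal, mem_nonunits_iff, not_not] at this
    refine ⟨∅, Set.finite_empty, by simp, ?_⟩
    intro a' _ _
    have : Ideal.span {a, a'} = ⊤ := Ideal.eq_top_of_isUnit_mem _ (Ideal.subset_span (by simp)) hu
    rw [this]; simp

lemma Gen_ne_zero (hJ0 : J ≠ ⊥) : Gen J (fun b => b ≠ 0) := by
  refine ⟨{⊥}, Set.finite_singleton _, ?_, ?_⟩
  · rintro p rfl h
    exact hJ0 (le_bot_iff.1 h)
  · intro b _ h hb
    exact h ⊥ rfl (by simp [hb])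

lemma Gen.imp {p q : A → Prop} (hp : Gen I p) (h : ∀ a ∈ I, p a → q a) : Gen I q := by
  obtain ⟨W, h1, h2, h3⟩ := hp
  exact ⟨W, h1, h2, fun a ha hW => h a ha (h3 a ha hW)⟩

theorem GD_of_CM (k : Type v) [Field k] [Infinite k] [Algebra k A] (hdim : ringKrullDim A = 2) (hI : ∃ n, IsLocalRing.maximalIdeal A ^ n ≤ I) (hJ : ∃ n, IsLocalRing.maximalIdeal A ^ n ≤ J)
    (hcm : CMAt (RR I J) (NN I J)) : GD I := by
  by_cases hIm : I = ⊤
  · rw [hIm]; exact GD_top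
  have hI0 := ne_bot_of_primary hdim hI
  have hJ0 := ne_bot_of_primary hdim hJ
  refine ((R1 hdim hI0 hJ0).and (R1 hdim hI0 hI0)).imp ?_
  rintro a ha ⟨g1, g2⟩
  obtain ⟨b, hb, ⟨r1, g3⟩, hb0⟩ := ((g1.and (R1 hdim hJ0 hJ0)).and (Gen_ne_zero hJ0)).exists k
  refine (g2.and (Gen_avoid_minimal hdim hI b hb0)).imp ?_
  rintro a' ha' ⟨r2, r3⟩
  obtain ⟨b', hb', r4⟩ := g3.exists k
  exact data_of_elts hdim hI hJ (IsLocalRing.le_maximalIdeal hIm) hcm a a' b b' ha ha' hb hb' r1 r2 r4 r3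
end

section
universe u v
set_option linter.all false

lemma det_sub_eq {A : Type u} [CommRing A] (I : Ideal A) (a t : A) (p r : ℕ) (ha : a ∈ I) (ht : t ∈ I^(p+1))
    (C : Matrix (Fin (r+1)) (Fin (r+1)) A) (hC : ∀ i j, C i j ∈ Ideal.span {a} * I^p) :
    ∃ G ∈ I^((p+1)*(r+1)-1), (Matrix.scalar (Fin (r+1)) t - C).det = t^(r+1) - a * G := by
  nontriviality A
  rw [← Matrix.eval_charpoly, Polynomial.eval_eq_sum_range, Matrix.charpoly_natDegree_eq_dim, Finset.sum_range_succ]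
  have hm : C.charpoly.coeff (Fintype.card (Fin (r+1))) = 1 := by
    rw [← Matrix.charpoly_natDegree_eq_dim C]; exact C.charpoly_monic
  rw [hm]
  have key : ∑ x ∈ Finset.range (Fintype.card (Fin (r+1))), C.charpoly.coeff x * t^x ∈ Ideal.span {a} * I^((p+1)*(r+1)-1) := by
    refine Ideal.sum_mem _ fun x hx => ?_
    have h1 := Matrix.coeff_charpoly_mem_ideal_pow hC x
    simp only [Fintype.card_fin, Finset.mem_range] at hx h1 
    obtain ⟨y, rfl⟩ : ∃ y, r = x + y := ⟨r - x, by omega⟩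
    have e : x + y + 1 - x = y + 1 := by omega
    rw [e] at h1
    have h2 : (Ideal.span {a} * I^p)^(y+1) ≤ Ideal.span {a} * I^((p+1)*(y+1)-1) := by
      rw [pow_succ', mul_assoc]
      refine Ideal.mul_mono_right ?_
      have : Ideal.span {a} * I^p ≤ I^(p+1) := by
        rw [pow_succ']; exact Ideal.mul_mono_left ((Ideal.span_singleton_le_iff_mem _).2 ha)
      refine (Ideal.mul_mono_right (Ideal.pow_right_mono this y)).trans ?_
      rw [← pow_mul, ← pow_add]
      refine Ideal.pow_le_pow_right ?_
      have : (p+1)*(y+1) = p + (p+1)*y + 1 := by ring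
      omega
    have h3 := Ideal.mul_mem_mul (h2 h1) (Ideal.pow_mem_pow ht x)
    rw [mul_assoc, ← pow_mul, ← pow_add] at h3
    refine Ideal.mul_mono_right (Ideal.pow_le_pow_right ?_) h3
    have : (p+1)*(x+y+1) = (p+1)*(y+1) + (p+1)*x := by ring
    omega
  obtain ⟨z, hz, hz'⟩ := Ideal.mem_span_singleton_mul.mp key
  refine ⟨-z, neg_mem hz, ?_⟩
  rw [← hz']; simp; ring

lemma cramer_mem {A : Type u} [CommRing A] (H Q : Ideal A) (r : ℕ)
    (T : Matrix (Fin r) (Fin r) A) (hT : ∀ i j, T i j ∈ H) (e : Fin r → A) (he : ∀ i, e i ∈ H * Q) (i : Fin r) :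
    T.cramer e i ∈ H^r * Q := by
  rw [Matrix.cramer_apply, Matrix.det_apply]
  refine Ideal.sum_mem _ fun σ _ => ?_
  refine Submodule.smul_of_tower_mem _ _ ?_
  have h : ∏ j, (T.updateCol i e) (σ j) j ∈ ∏ j : Fin r, (H * if j = i then Q else 1) := by
    refine Ideal.prod_mem_prod fun j _ => ?_
    by_cases hj : j = i
    · subst hj; simpa using he _
    · simpa [hj, Matrix.updateCol_ne] using hT _ _
  rw [Finset.prod_mul_distrib, Finset.prod_ite_eq' Finset.univ i (fun _ => Q), if_pos (Finset.mem_univ i)] at h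
  simpa using h

lemma nak {A : Type u} [CommRing A] (I M Q : Ideal A) (hM : M.FG) (a a' b : A) (ha : a ∈ I) (ha' : a' ∈ I) (p : ℕ) 
    (h : I^(p+1) * M ≤ Ideal.span {a} * (I^p * M) ⊔ Ideal.span {b} * (I^(p+1) * Q)) :
    ∃ N, ∃ G ∈ I^N, ∀ m ∈ M, (a'^(N+1) - a * G) * m ∈ Ideal.span {b} * (I^(N+1) * Q) := by
  obtain ⟨r, g, hg⟩ := Submodule.fg_iff_exists_fin_generating_family.1 hM
  rcases r with _ | r
  · have : M = ⊥ := by rw [← hg]; simp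
    refine ⟨0, 0, zero_mem _, fun m hm => ?_⟩
    rw [this] at hm
    rw [(Ideal.mem_bot).1 hm]; simp
  have hgM : ∀ i, g i ∈ M := fun i => by rw [← hg]; exact Submodule.subset_span ⟨i, rfl⟩
  have hex : ∀ i, ∃ (c : Fin (r+1) → A) (e : A), (∀ j, c j ∈ Ideal.span {a} * I^p) ∧ e ∈ I^(p+1) * Q ∧ a'^(p+1) * g i = ∑ j, c j * g j + b * e := by
    intro i
    have h1 := h (Ideal.mul_mem_mul (Ideal.pow_mem_pow ha' (p+1)) (hgM i))
    obtain ⟨y, hy, z, hz, hyz⟩ := Submodule.mem_sup.mp h1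
    obtain ⟨e, he, rfl⟩ := Ideal.mem_span_singleton_mul.mp hz
    rw [← mul_assoc] at hy
    have hy' : y ∈ (Ideal.span {a} * I^p) • Submodule.span A (Set.range g) := by
      rw [hg]; exact hy
    rw [Submodule.mem_ideal_smul_span_iff_exists_sum] at hy'
    obtain ⟨c, hc, hc'⟩ := hy'
    refine ⟨c, e, hc, he, ?_⟩
    rw [← hyz, ← hc', Finsupp.sum_fintype _ _ (by simp)]
    simp
  choose C e hC he hCe using hex
  obtain ⟨G, hG, hdet⟩ := det_sub_eq I a (a'^(p+1)) p r ha (Ideal.pow_mem_pow ha' _) (Matrix.of C) hC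
  set T := Matrix.scalar (Fin (r+1)) (a'^(p+1)) - Matrix.of C with hT
  have hTm : T.mulVec g = b • e := by
    ext i
    rw [hT, Matrix.sub_mulVec]
    simp only [Pi.sub_apply, Pi.smul_apply, smul_eq_mul, Matrix.scalar_apply, Matrix.mulVec_diagonal]
    rw [hCe]
    simp [Matrix.mulVec, dotProduct]
  have hTe : ∀ i j, T i j ∈ I^(p+1) := by
    intro i j
    rw [hT, Matrix.sub_apply, Matrix.scalar_apply, Matrix.diagonal_apply]
    refine sub_mem ?_ ?_
    · split_ifs
      · exact Ideal.pow_mem_pow ha' _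
      · exact zero_mem _
    · have := hC i j
      rw [pow_succ']
      exact Ideal.mul_mono_left ((Ideal.span_singleton_le_iff_mem _).2 ha) this
  have hcr : ∀ i, T.det * g i = b * T.cramer e i := by
    intro i
    have : T.adjugate.mulVec (T.mulVec g) = T.det • g := by
      rw [Matrix.mulVec_mulVec, Matrix.adjugate_mul, Matrix.smul_mulVec, Matrix.one_mulVec]
    rw [hTm, ← Matrix.cramer_eq_adjugate_mulVec, map_smul] at this
    exact (congrFun this i).symm
  have eN : (p+1)*(r+1)-1+1 = (p+1)*(r+1) := Nat.sub_add_cancel (by nlinarith)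
  refine ⟨(p+1)*(r+1)-1, G, hG, ?_⟩
  rw [eN, pow_mul a', ← hdet]
  intro m hm
  rw [← hg] at hm
  refine Submodule.span_induction (p := fun m _ => T.det * m ∈ Ideal.span {b} * (I^((p+1)*(r+1)) * Q)) ?_ (by simp) ?_ ?_ hm
  · rintro _ ⟨i, rfl⟩
    rw [hcr]
    refine Ideal.mul_mem_mul (Ideal.mem_span_singleton_self _) ?_
    rw [pow_mul]
    exact cramer_mem _ _ _ T hTe e he i
  · intro x y _ _ hx hy
    rw [mul_add (T.det)]; exact Ideal.add_mem _ hx hy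
  · intro c x _ hx
    rw [smul_eq_mul, mul_left_comm T.det]; exact Ideal.mul_mem_left _ _ hx

variable {A : Type u} [CommRing A] [IsDomain A] [IsNoetherianRing A] [IsLocalRing A] {I J : Ideal A}

theorem JR [IsIntegrallyClosed A] (hdim : ringKrullDim A = 2) (hI : ∃ n, IsLocalRing.maximalIdeal A ^ n ≤ I) (hJ : ∃ n, IsLocalRing.maximalIdeal A ^ n ≤ J)
    (hIcl : ∀ n, IdealIsIntegrallyClosed (I^n)) (hJcl : IdealIsIntegrallyClosed J) (a a' b : A) (ha : a ∈ I) (ha' : a' ∈ I)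
    (hb : b ∈ J) (hb0 : b ≠ 0) (hI2 : I^2 ≤ Ideal.span {a, a'} * I) (h : R1P I J a b) (x : A) (hx : IsIntegralOverIdeal (I * J) x) :
    x ∈ Ideal.span {a} * J ⊔ Ideal.span {b} * I := by
  have hI0 := ne_bot_of_primary hdim hI
  have hJ0 := ne_bot_of_primary hdim hJ
  obtain ⟨n, hn⟩ := h
  obtain ⟨N, G, hG, hN⟩ := nak I (J^(n+1)) (J^n) (IsNoetherian.noetherian _) a a' b ha ha' n hn
  obtain ⟨L, hL0, hL⟩ := exists_L_of_integral (I*J) (by simpa using ⟨hI0, hJ0⟩) x hx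
  -- step 3
  obtain ⟨k', hk', hk⟩ := DT (L * J^n) (I^(N+2)) (by simpa using ⟨hL0, by rw [← Ideal.zero_eq_bot]; exact pow_ne_zero n hJ0⟩) (IsNoetherian.noetherian _)
    (hIcl _) ((a'^(N+1) - a * G) * x) b hb0 (by
      intro l hl
      have h1 : x * l ∈ I * J * L * J^n := by
        refine Submodule.mul_induction_on hl (fun l1 h1 j hj => ?_) (fun y z hy hz => ?_)
        · rw [← mul_assoc]; exact Ideal.mul_mem_mul (hL l1 h1) hj
        · rw [mul_add]; exact Ideal.add_mem _ hy hz
      have e1 : I * J * L * J^n = (I * L) * J^(n+1) := by ring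
      rw [e1] at h1
      have h2 : (a'^(N+1) - a * G) * (x * l) ∈ Ideal.span {b} * (I^(N+2) * (L * J^n)) := by
        refine Submodule.mul_induction_on h1 (fun l1 h1 j hj => ?_) (fun y z hy hz => ?_)
        · have := Ideal.mul_mem_mul h1 (hN j hj)
          rw [mul_left_comm (a'^(N+1) - a * G)]
          have e2 : Ideal.span {b} * (I^(N+2) * (L * J^n)) = I * L * (Ideal.span {b} * (I^(N+1) * J^n)) := by ring
          rw [e2]; exact this
        · rw [mul_add]; exact Ideal.add_mem _ hy hz
      obtain ⟨z, hz, hz'⟩ := Ideal.mem_span_singleton_mul.mp h2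
      exact ⟨z, hz, by rw [hz']; ring⟩)
  have hred := pow_red' I a a' ha' hI2 (N+1)
  obtain ⟨y, hy, z, hz, hyz⟩ := Submodule.mem_sup.mp (hred hk')
  obtain ⟨s, hs, rfl⟩ := Ideal.mem_span_singleton_mul.mp hy
  obtain ⟨i, hi, rfl⟩ := Ideal.mem_span_singleton_mul.mp hz
  have heq : a'^(N+1) * (x - b * i) = a * (G * x + b * s) := by
    rw [← hyz] at hk
    linear_combination hk
  obtain ⟨q, hq⟩ := hI
  obtain ⟨w, hw1, hw2⟩ := RP hdim (a'^(N+1)) a (q*(N+2)) (by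
    rw [pow_mul]
    refine (Ideal.pow_right_mono hq _).trans (hred.trans ?_)
    rw [Ideal.span_insert, sup_comm]
    exact sup_le_sup Ideal.mul_le_left Ideal.mul_le_left) _ _ heq
  have haw : ∀ l ∈ L, a * w * l ∈ I * J * L := by
    intro l hl
    rw [← hw1, sub_mul]
    refine sub_mem (hL l hl) ?_
    have := Ideal.mul_mem_mul (Ideal.mul_mem_mul hi hb) hl
    convert this using 1; ring
  have haw' : ∀ l ∈ L, a'^(N+1) * w * l ∈ I^(N+1) * J * L := by
    intro l hl
    rw [← hw2, add_mul]
    refine add_mem ?_ ?_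
    · have := Ideal.mul_mem_mul hG (hL l hl)
      have e : I^(N+1) * J * L = I^N * (I * J * L) := by ring
      rw [e]; convert this using 1; ring
    · have := Ideal.mul_mem_mul (Ideal.mul_mem_mul hs hb) hl
      convert this using 1; ring
  obtain ⟨w', hw', hww⟩ := DT (I^(N+2) * L) J (by simpa using ⟨by rw [← Ideal.zero_eq_bot]; exact pow_ne_zero _ hI0, hL0⟩) (IsNoetherian.noetherian _)
    hJcl w 1 one_ne_zero (by
      intro l hl
      refine ⟨w * l, ?_, by ring⟩
      refine Submodule.mul_induction_on hl (fun l1 h1 j hj => ?_) (fun y z hy hz => ?_)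
      · obtain ⟨y, hy, z, hz, rfl⟩ := Submodule.mem_sup.mp (hred h1)
        obtain ⟨s', hs', rfl⟩ := Ideal.mem_span_singleton_mul.mp hy
        obtain ⟨i', hi', rfl⟩ := Ideal.mem_span_singleton_mul.mp hz
        have t1 := Ideal.mul_mem_mul hs' (haw j hj)
        have t2 := Ideal.mul_mem_mul hi' (haw' j hj)
        have e1 : I^(N+1) * (I * J * L) = J * (I^(N+2) * L) := by ring
        have e2 : I * (I^(N+1) * J * L) = J * (I^(N+2) * L) := by ring
        rw [e1] at t1; rw [e2] at t2
        convert Ideal.add_mem _ t1 t2 using 1; ring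
      · rw [mul_add]; exact Ideal.add_mem _ hy hz)
  have hwJ : w ∈ J := by rw [hww, one_mul]; exact hw'
  have : x = a * w + b * i := by linear_combination hw1
  rw [this]
  exact Submodule.add_mem_sup (Ideal.mul_mem_mul (Ideal.mem_span_singleton_self _) hwJ) (Ideal.mul_mem_mul (Ideal.mem_span_singleton_self _) hi)

lemma R1P_iter (a b : A) (n : ℕ) (h : I^(n+1) * J^(n+1) ≤ Ideal.span {a} * (I^n * J^(n+1)) ⊔ Ideal.span {b} * (I^(n+1) * J^n)) (i j : ℕ) :
    I^(n+1+i) * J^(n+1+j) ≤ Ideal.span {a} * (I^(n+i) * J^(n+1+j)) ⊔ Ideal.span {b} * (I^(n+1+i) * J^(n+j)) := by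
  have := Ideal.mul_mono_left (I := I^(n+1) * J^(n+1)) (K := I^i * J^j) h
  rw [Ideal.sup_mul] at this
  convert this using 1
  · ring
  · congr 1 <;> ring

lemma R1P_iter2 (a b : A) (ha : a ∈ I) (hb : b ∈ J) (n : ℕ) (h : I^(n+1) * J^(n+1) ≤ Ideal.span {a} * (I^n * J^(n+1)) ⊔ Ideal.span {b} * (I^(n+1) * J^n)) (m l : ℕ) :
    I^(n+m) * J^(n+l) ≤ Ideal.span {a^m} * (I^n * J^(n+l)) ⊔ Ideal.span {b^l} * (I^(n+m) * J^n) := by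
  have ha' : Ideal.span {a} ≤ I := (Ideal.span_singleton_le_iff_mem _).2 ha
  have hb' : Ideal.span {b} ≤ J := (Ideal.span_singleton_le_iff_mem _).2 hb
  simp only [← Ideal.span_singleton_pow]
  induction m generalizing l with
  | zero => simp
  | succ m ihm =>
    induction l with
    | zero => simp
    | succ l ihl =>
      have h1 := R1P_iter a b n h m l
      have e1 : n+1+m = n+(m+1) := by ring
      have e2 : n+1+l = n+(l+1) := by ring
      rw [e1, e2] at h1
      refine h1.trans (sup_le ((Ideal.mul_mono_right (ihm (l+1))).trans ?_) ((Ideal.mul_mono_right ihl).trans ?_))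
      · rw [Ideal.mul_sup]
        refine sup_le_sup (le_of_eq (by ring)) ?_
        calc Ideal.span {a} * (Ideal.span {b}^(l+1) * (I^(n+m) * J^n)) ≤ I * (Ideal.span {b}^(l+1) * (I^(n+m) * J^n)) := Ideal.mul_mono_left ha'
          _ = _ := by ring
      · rw [Ideal.mul_sup]
        refine sup_le_sup ?_ (le_of_eq (by ring))
        calc Ideal.span {b} * (Ideal.span {a}^(m+1) * (I^n * J^(n+l))) ≤ J * (Ideal.span {a}^(m+1) * (I^n * J^(n+l))) := Ideal.mul_mono_left hb'
          _ = _ := by ring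

lemma R1P_pow (a b : A) (ha : a ∈ I) (hb : b ∈ J) (h : R1P I J a b) (m l : ℕ) : R1P (I^(m+1)) (J^(l+1)) (a^(m+1)) (b^(l+1)) := by
  obtain ⟨n, hn⟩ := h
  refine ⟨n, ?_⟩
  have h1 := Ideal.mul_mono_left (K := I^(m*n) * J^(l*n)) (R1P_iter2 a b ha hb n hn (m+1) (l+1))
  rw [Ideal.sup_mul] at h1
  convert h1 using 1
  · ring
  · congr 1 <;> ring

lemma sq_pow [IsIntegrallyClosed A] (a a' : A) (ha : a ∈ I) (ha' : a' ∈ I) (h : I^2 ≤ Ideal.span {a, a'} * I) (m : ℕ) :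
    (I^(m+1))^2 ≤ Ideal.span {a^(m+1), a'^(m+1)} * I^(m+1) := by
  have hal : Ideal.span {a} ≤ I := (Ideal.span_singleton_le_iff_mem _).2 ha
  have hal' : Ideal.span {a'} ≤ I := (Ideal.span_singleton_le_iff_mem _).2 ha'
  have key : ∀ p q, I^(p+q+1) ≤ Ideal.span {a}^p * I^(q+1) ⊔ Ideal.span {a'}^(q+1) * I^p := by
    intro p
    induction p with
    | zero => intro q; simp
    | succ p ihp =>
      intro q
      induction q with
      | zero =>
        have := pow_red' I a' a ha (by rwa [Set.pair_comm]) (p+1)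
        rw [sup_comm, ← Ideal.span_singleton_pow] at this
        simpa using this
      | succ q ihq =>
        have h1 := pow_red I a a' h (p+q+1)
        have e1 : p+1+(q+1)+1 = p+q+1+2 := by ring
        have e2 : p+1+q+1 = p+q+1+1 := by ring
        rw [e1]
        rw [e2] at ihq
        have ihp' := ihp (q+1)
        have e3 : p+(q+1)+1 = p+q+1+1 := by ring
        rw [e3] at ihp'
        refine h1.trans (sup_le ((Ideal.mul_mono_right ihp').trans ?_) ((Ideal.mul_mono_right ihq).trans ?_))
        · rw [Ideal.mul_sup]
          refine sup_le_sup (le_of_eq (by ring)) ?_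
          calc Ideal.span {a} * (Ideal.span {a'}^(q+1+1) * I^p) ≤ I * (Ideal.span {a'}^(q+1+1) * I^p) := Ideal.mul_mono_left hal
            _ = _ := by ring
        · rw [Ideal.mul_sup]
          refine sup_le_sup ?_ (le_of_eq (by ring))
          calc Ideal.span {a'} * (Ideal.span {a}^(p+1) * I^(q+1)) ≤ I * (Ideal.span {a}^(p+1) * I^(q+1)) := Ideal.mul_mono_left hal'
            _ = _ := by ring
  have := key (m+1) m
  rw [Ideal.span_insert, Ideal.sup_mul, ← Ideal.span_singleton_pow, ← Ideal.span_singleton_pow]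
  have e : (I^(m+1))^2 = I^(m+1+m+1) := by ring
  rw [e]
  exact this

lemma primary_pow {H : Ideal A} (hI : ∃ n, IsLocalRing.maximalIdeal A ^ n ≤ H) (m : ℕ) : ∃ n, IsLocalRing.maximalIdeal A ^ n ≤ H^m := by
  obtain ⟨n, hn⟩ := hI
  exact ⟨n*m, by rw [pow_mul]; exact Ideal.pow_right_mono hn m⟩

theorem closed_all [IsIntegrallyClosed A] (hdim : ringKrullDim A = 2) (hI : ∃ n, IsLocalRing.maximalIdeal A ^ n ≤ I) (hJ : ∃ n, IsLocalRing.maximalIdeal A ^ n ≤ J)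
    (hIcl : ∀ n, IdealIsIntegrallyClosed (I^n)) (hJcl : ∀ n, IdealIsIntegrallyClosed (J^n)) (a a' b : A) (ha : a ∈ I) (ha' : a' ∈ I)
    (hb : b ∈ J) (hb0 : b ≠ 0) (hI2 : I^2 ≤ Ideal.span {a, a'} * I) (h : R1P I J a b) (m n : ℕ) : IdealIsIntegrallyClosed (I^m * J^n) := by
  rcases m with _ | m
  · simpa using hJcl n
  rcases n with _ | n
  · simpa using hIcl (m+1)
  intro x hx
  have := JR hdim (primary_pow hI (m+1)) (primary_pow hJ (n+1)) (fun p => by rw [← pow_mul]; exact hIcl _) (hJcl _) (a^(m+1)) (a'^(m+1)) (b^(n+1))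
    (Ideal.pow_mem_pow ha _) (Ideal.pow_mem_pow ha' _) (Ideal.pow_mem_pow hb _) (pow_ne_zero _ hb0) (sq_pow a a' ha ha' hI2 m) (R1P_pow a b ha hb h m n) x hx
  refine (sup_le ?_ ?_ : Ideal.span {a^(m+1)} * J^(n+1) ⊔ Ideal.span {b^(n+1)} * I^(m+1) ≤ _) this
  · exact Ideal.mul_mono_left ((Ideal.span_singleton_le_iff_mem _).2 (Ideal.pow_mem_pow ha _))
  · rw [mul_comm]; exact Ideal.mul_mono_right ((Ideal.span_singleton_le_iff_mem _).2 (Ideal.pow_mem_pow hb _))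
end

section
universe u v
set_option linter.all false
variable {A : Type u} [CommRing A] [IsDomain A] [IsNoetherianRing A] [IsLocalRing A] {I J : Ideal A}

theorem CM_mixed (k : Type v) [Field k] [Infinite k] [Algebra k A] [IsIntegrallyClosed A] (hdim : ringKrullDim A = 2)
    (hI : ∃ n, IsLocalRing.maximalIdeal A ^ n ≤ I) (hJ : ∃ n, IsLocalRing.maximalIdeal A ^ n ≤ J)
    (hIcl : ∀ n, IdealIsIntegrallyClosed (I^n)) (hJcl : ∀ n, IdealIsIntegrallyClosed (J^n)) (gI : GD I) (gJ : GD J) :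
    IsCMNormalDomain (RR I J) := by
  have hI0 := ne_bot_of_primary hdim hI
  have hJ0 := ne_bot_of_primary hdim hJ
  obtain ⟨a, ha, ⟨g1, g2⟩, ha0⟩ := (((R1 hdim hI0 hJ0).and gI).and (Gen_ne_zero hI0)).exists k
  obtain ⟨b, hb, ⟨r1, g3⟩, hb0⟩ := ((g1.and gJ).and (Gen_ne_zero hJ0)).exists k
  obtain ⟨a', ha', hI2⟩ := g2.exists k
  obtain ⟨b', hb', hJ2⟩ := g3.exists k
  have hcl := closed_all hdim hI hJ hIcl hJcl a a' b ha ha' hb hb0 hI2 r1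
  refine CM_of_data hdim hcl a a' b b' ha ha' hb hb' ha0 hb0 hI hJ hI2 hJ2 ?_
  intro x hx
  refine JR hdim hI hJ hIcl (by simpa using hJcl 1) a a' b ha ha' hb hb0 hI2 r1 x ?_
  refine ⟨1, one_pos, fun i => -x, ?_, by simp⟩
  intro i h1 h2
  obtain rfl : i = 1 := by omega
  simpa using hx
end


section Final
universe u v
set_option linter.all false
open IsLocalRing

lemma IsCMNormalDomain.of_equiv {R S : Type u} [CommRing R] [CommRing S] (e : R ≃+* S)
    (h : IsCMNormalDomain R) : IsCMNormalDomain S := by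
  obtain ⟨⟨hn, hc⟩, hd, hi⟩ := h
  refine ⟨⟨isNoetherianRing_of_ringEquiv R e, fun P hP => ?_⟩, e.symm.toMulEquiv.isDomain,
    IsIntegrallyClosed.of_equiv e⟩
  haveI := hP
  refine (cmAt_comap_iff (e : R →+* S) e.injective 1 (fun s => ⟨0, e.symm s, by simp⟩) P ?_
    (P.comap (e : R →+* S)) rfl).mp (hc _ inferInstance)
  rw [map_one]
  exact (Ideal.ne_top_iff_one P).mp hP.ne_top

section poly
open Polynomial
lemma cmnd_poly {R : Type u} [CommRing R] (h : IsCMNormalDomain R) : IsCMNormalDomain R[X] := by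
  obtain ⟨⟨hn, hc⟩, hd, hi⟩ := h
  refine ⟨⟨inferInstance, fun P hP => ?_⟩, inferInstance, inferInstance⟩
  haveI := hP
  let p : Ideal R := P.comap C
  haveI : p.IsPrime := inferInstanceAs (P.comap C).IsPrime
  refine cmAt_polynomial_of_map P p rfl ?_
  let D := Localization.AtPrime p
  letI : Algebra R[X] D[X] := Polynomial.algebra R D
  haveI : IsLocalization (Submonoid.map (C : R →+* R[X]) p.primeCompl) D[X] :=
    Polynomial.isLocalization p.primeCompl D
  have halg : ∀ f : R[X], algebraMap R[X] D[X] f = f.map (algebraMap R D) := fun f => rfl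
  refine (cmAt_localization_iff (Submonoid.map (C : R →+* R[X]) p.primeCompl)
    ((maximalIdeal D).map C) _ ?_).mp ?_
  · ext f
    rw [Ideal.mem_comap, halg, Ideal.mem_map_C_iff, Ideal.mem_map_C_iff]
    simp only [coeff_map, D]
    exact forall_congr' fun n => IsLocalization.AtPrime.to_map_mem_maximal_iff _ p _
  · refine cmAt_polynomial_of_comap (hc p inferInstance) _ ?_
    intro hL
    ext x
    rw [Ideal.mem_comap, Ideal.mem_map_C_iff]
    constructor
    · intro h
      simpa using h 0
    · intro h n
      rw [coeff_C]
      split_ifs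
      · exact h
      · exact Ideal.zero_mem _

lemma cmnd_of_poly {R : Type u} [CommRing R] [IsNoetherianRing R] [IsDomain R]
    (h : IsCMNormalDomain R[X]) : IsCMNormalDomain R := by
  obtain ⟨⟨hn, hc⟩, hd, hi⟩ := h
  refine ⟨⟨inferInstance, fun p hP => ?_⟩, inferInstance, ?_⟩
  · haveI := hP
    let D := Localization.AtPrime p
    letI : Algebra R[X] D[X] := Polynomial.algebra R D
    haveI : IsLocalization (Submonoid.map (C : R →+* R[X]) p.primeCompl) D[X] :=
      Polynomial.isLocalization p.primeCompl D
    have halg : ∀ f : R[X], algebraMap R[X] D[X] f = f.map (algebraMap R D) := fun f => rfl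
    refine cm_of_cmAt_polynomial (D := D) ?_
    refine (cmAt_localization_iff (Submonoid.map (C : R →+* R[X]) p.primeCompl)
      ((maximalIdeal D).map C) (p.map C) ?_).mpr (hc _ inferInstance)
    ext f
    rw [Ideal.mem_comap, halg, Ideal.mem_map_C_iff, Ideal.mem_map_C_iff]
    simp only [coeff_map, D]
    exact forall_congr' fun n => IsLocalization.AtPrime.to_map_mem_maximal_iff _ p _
  · rw [isIntegrallyClosed_iff (FractionRing R)]
    intro x hx
    let ψ : FractionRing R →+* FractionRing R[X] :=
      IsFractionRing.lift (A := R) (g := (algebraMap R[X] (FractionRing R[X])).comp C)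
        ((IsFractionRing.injective R[X] (FractionRing R[X])).comp C_injective)
    have hψ : ∀ r, ψ (algebraMap R _ r) = algebraMap R[X] (FractionRing R[X]) (C r) := fun r =>
      IsFractionRing.lift_algebraMap _ r
    have hx2 : IsIntegral R[X] (ψ x) := by
      obtain ⟨q, hq, hq0⟩ := hx
      refine ⟨q.map C, hq.map _, ?_⟩
      rw [eval₂_map]
      have : (algebraMap R[X] (FractionRing R[X])).comp C = ψ.comp (algebraMap R _) := by
        ext r; exact (hψ r).symm
      rw [this, ← hom_eval₂, hq0, map_zero]
    obtain ⟨q, hq⟩ := (isIntegrallyClosed_iff (FractionRing R[X])).mp hi hx2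
    obtain ⟨a, b, hb, rfl⟩ := IsFractionRing.div_surjective (A := R) x
    have hb0 : b ≠ 0 := nonZeroDivisors.ne_zero hb
    have hbF : algebraMap R (FractionRing R) b ≠ 0 := by
      simpa using hb0
    have hbF2 : ψ (algebraMap R (FractionRing R) b) ≠ 0 := by simpa using hb0
    rw [map_div₀, eq_div_iff hbF2, hψ, hψ, ← map_mul] at hq
    have hq := IsFractionRing.injective R[X] (FractionRing R[X]) hq
    have h0 := congrArg (fun f => f.coeff 0) hq
    simp only [coeff_mul_C, coeff_C_zero] at h0
    refine ⟨q.coeff 0, ?_⟩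
    rw [eq_div_iff hbF, ← map_mul, h0]
end poly

variable {A : Type u} [CommRing A]

lemma cf_swap (f : MvPolynomial (Fin 2) A) (m n : ℕ) :
    cf (MvPolynomial.rename (Equiv.swap (0 : Fin 2) 1) f) m n = cf f n m := by
  have : ee m n = (ee n m).mapDomain (Equiv.swap (0 : Fin 2) 1) := by
    rw [ee, ee, Finsupp.mapDomain_add, Finsupp.mapDomain_single, Finsupp.mapDomain_single]
    simp [add_comm]
  rw [cf, cf, this, MvPolynomial.coeff_rename_mapDomain _ (Equiv.injective _)]

/-- exchanging the variables -/
noncomputable def swapHom (I J : Ideal A) : RR I J →+* RR J I :=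
  (((MvPolynomial.rename (Equiv.swap (0 : Fin 2) 1)).toRingHom :
    MvPolynomial (Fin 2) A →+* MvPolynomial (Fin 2) A).comp (RR I J).subtype).codRestrict
    (RR J I) (fun f => by
      rw [mem_RR]
      intro m n
      have := mem_RR.mp f.2 n m
      rw [mul_comm]
      show cf (MvPolynomial.rename (Equiv.swap (0 : Fin 2) 1) f.1) m n ∈ _
      rwa [cf_swap])

lemma cf_swapHom (I J : Ideal A) (f : RR I J) (m n : ℕ) :
    cf (swapHom I J f).1 m n = cf f.1 n m := cf_swap f.1 m n

/-- exchanging the variables -/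
noncomputable def swapEquiv (I J : Ideal A) : RR I J ≃+* RR J I :=
  RingEquiv.ofBijective (swapHom I J) ⟨by
    intro f g h
    apply Subtype.ext
    apply cf_ext
    intro m n
    rw [← cf_swapHom I J f n m, ← cf_swapHom I J g n m, h], by
    intro g
    refine ⟨swapHom J I g, ?_⟩
    apply Subtype.ext
    apply cf_ext
    intro m n
    rw [cf_swapHom, cf_swapHom]⟩

/-- the comparison map, into the polynomial ring -/
noncomputable def phiHom (I : Ideal A) :
    Polynomial (reesAlgebra I) →+* MvPolynomial (Fin 2) A :=
  Polynomial.eval₂RingHom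
    (((Polynomial.aeval (MvPolynomial.X 0 : MvPolynomial (Fin 2) A)).toRingHom).comp
      (reesAlgebra I).subtype) (MvPolynomial.X 1)

lemma phi_monomial_monomial (I : Ideal A) (m n : ℕ) (a : A) (h : Polynomial.monomial m a ∈ reesAlgebra I) :
    phiHom I (Polynomial.monomial n ⟨Polynomial.monomial m a, h⟩) = mo m n a := by
  rw [phiHom, Polynomial.coe_eval₂RingHom, Polynomial.eval₂_monomial]
  show Polynomial.aeval (MvPolynomial.X 0 : MvPolynomial (Fin 2) A) (Polynomial.monomial m a) * _ = _
  rw [Polynomial.aeval_monomial, mo, MvPolynomial.monomial_eq, Finsupp.prod_fintype _ _ (by simp)]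
  simp [Fin.prod_univ_two, mul_assoc]

lemma cf_aeval (f : Polynomial A) (n m j : ℕ) :
    cf (Polynomial.aeval (MvPolynomial.X 0 : MvPolynomial (Fin 2) A) f * MvPolynomial.X 1 ^ n) m j
      = if n = j then f.coeff m else 0 := by
  induction f using Polynomial.induction_on' with
  | add p q hp hq => rw [map_add, add_mul, cf_add, hp, hq, Polynomial.coeff_add]; split_ifs <;> simp
  | monomial i a =>
    have : Polynomial.aeval (MvPolynomial.X 0 : MvPolynomial (Fin 2) A) (Polynomial.monomial i a)
        * MvPolynomial.X 1 ^ n = mo i n a := by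
      rw [Polynomial.aeval_monomial, mo, MvPolynomial.monomial_eq, Finsupp.prod_fintype _ _ (by simp)]
      simp [Fin.prod_univ_two, mul_assoc]
    rw [this, cf_mo, Polynomial.coeff_monomial]
    split_ifs <;> simp_all

lemma cf_phi (I : Ideal A) (p : Polynomial (reesAlgebra I)) (m n : ℕ) :
    cf (phiHom I p) m n = (p.coeff n).1.coeff m := by
  induction p using Polynomial.induction_on' with
  | add p q hp hq => rw [map_add, cf_add, hp, hq, Polynomial.coeff_add]; simp
  | monomial i a =>
    rw [phiHom, Polynomial.coe_eval₂RingHom, Polynomial.eval₂_monomial, Polynomial.coeff_monomial]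
    refine (cf_aeval a.1 i m n).trans ?_
    split_ifs <;> simp

/-- the comparison map -/
noncomputable def phiR (I : Ideal A) : Polynomial (reesAlgebra I) →+* RR I ⊤ :=
  (phiHom I).codRestrict (RR I ⊤) (fun p => by
    rw [mem_RR]
    intro m n
    rw [cf_phi, Ideal.top_pow, Ideal.mul_top]
    exact (mem_reesAlgebra_iff I _).mp (p.coeff n).2 m)

lemma cf_phiR (I : Ideal A) (p : Polynomial (reesAlgebra I)) (m n : ℕ) :
    cf (phiR I p).1 m n = (p.coeff n).1.coeff m := cf_phi I p m n

lemma phiR_bij (I : Ideal A) : Function.Bijective (phiR I) := by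
  constructor
  · intro p q h
    ext n m
    rw [← cf_phiR, ← cf_phiR, h]
  · intro f
    have hm : ∀ m n, Polynomial.monomial m (cf f.1 m n) ∈ reesAlgebra I := by
      intro m n
      rw [mem_reesAlgebra_iff]
      intro i
      rw [Polynomial.coeff_monomial]
      split_ifs with h
      · subst h
        have := mem_RR.mp f.2 m n
        rwa [Ideal.top_pow, Ideal.mul_top] at this
      · exact Ideal.zero_mem _
    refine ⟨∑ d ∈ f.1.support, Polynomial.monomial (d 1) ⟨_, hm (d 0) (d 1)⟩, ?_⟩
    apply Subtype.ext
    show phiHom I _ = f.1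
    rw [map_sum]
    conv_rhs => rw [eq_sum_mo f.1]
    exact Finset.sum_congr rfl fun d _ => phi_monomial_monomial I _ _ _ _

lemma rees_iff [IsDomain A] [IsNoetherianRing A] (I : Ideal A) :
    IsCMNormalDomain (reesAlgebra I) ↔ IsCMNormalDomain (RR I ⊤) := by
  let e := RingEquiv.ofBijective (phiR I) (phiR_bij I)
  exact ⟨fun h => (cmnd_poly h).of_equiv e, fun h => cmnd_of_poly (h.of_equiv e.symm)⟩

theorem stmt7_aux (k : Type v) [Field k] [IsAlgClosed k] [IsDomain A] [IsNoetherianRing A]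
    [IsLocalRing A] [Algebra k A] [IsIntegrallyClosed A] (hdim : ringKrullDim A = 2)
    (I : Ideal A) (hI : ∃ n, maximalIdeal A ^ n ≤ I)
    (J : Ideal A) (hJ : ∃ n, maximalIdeal A ^ n ≤ J) :
    IsCMNormalDomain (RR I J) ↔
      IsCMNormalDomain (reesAlgebra I) ∧ IsCMNormalDomain (reesAlgebra J) := by
  haveI : Infinite k := inferInstance
  have hT : ∃ n, maximalIdeal A ^ n ≤ (⊤ : Ideal A) := ⟨0, le_top⟩
  have key : ∀ {I J : Ideal A}, (∃ n, maximalIdeal A ^ n ≤ I) → (∃ n, maximalIdeal A ^ n ≤ J) →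
      IsCMNormalDomain (RR I J) → (∀ n, IdealIsIntegrallyClosed (I ^ n)) ∧ GD I := by
    intro I J hI hJ h
    obtain ⟨⟨hn, hc⟩, hd, hi⟩ := h
    refine ⟨fun n => ?_, GD_of_CM k hdim hI hJ (hc _ inferInstance)⟩
    have := closed_of_RR_normal (ne_bot_of_primary hdim hI) (ne_bot_of_primary hdim hJ) n 0
    rwa [pow_zero, Ideal.one_eq_top, Ideal.mul_top] at this
  have back : ∀ {I : Ideal A}, (∃ n, maximalIdeal A ^ n ≤ I) →
      ((∀ n, IdealIsIntegrallyClosed (I ^ n)) ∧ GD I) → IsCMNormalDomain (reesAlgebra I) := by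
    intro I hI h
    exact (rees_iff I).mpr (CM_mixed k hdim hI hT h.1
      (fun n => by rw [Ideal.top_pow]; exact top_closed) h.2 GD_top)
  constructor
  · intro h
    exact ⟨back hI (key hI hJ h), back hJ (key hJ hI (h.of_equiv (swapEquiv I J)))⟩
  · rintro ⟨h1, h2⟩
    have k1 := key hI hT ((rees_iff I).mp h1)
    have k2 := key hJ hT ((rees_iff J).mp h2)
    exact CM_mixed k hdim hI hJ k1.1 k2.1 k1.2 k2.2
end Final

/-- For `𝔪`-primary ideals `I`, `J` of a two-dimensional excellent
normal local domain over an algebraically closed field, the multi-Rees algebra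
`A[It₁, Jt₂]` is a Cohen–Macaulay normal domain iff both `A[It]` and `A[Jt]` are. -/
theorem stmt7 (k : Type*) [Field k] [IsAlgClosed k]
    (A : Type*) [CommRing A] [IsDomain A] [IsNoetherianRing A] [IsLocalRing A]
    [Algebra k A] [IsIntegrallyClosed A]
    (hdim : ringKrullDim A = 2)
    (I : Ideal A) (hIprim : ∃ n : ℕ, IsLocalRing.maximalIdeal A ^ n ≤ I)
    (J : Ideal A) (hJprim : ∃ n : ℕ, IsLocalRing.maximalIdeal A ^ n ≤ J) :
    IsCMNormalDomain (multiReesAlgebra ![I, J]) ↔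
      IsCMNormalDomain (reesAlgebra I) ∧ IsCMNormalDomain (reesAlgebra J) := by
  exact stmt7_aux k hdim I hIprim J hJprim
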